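/- Let n ≥ 2 and let F(Y,X₁,…,Xₙ) ∈ ℤ[Y,X₁,…,Xₙ] be absolutely irreducible (irreducible in ℚ̄[Y,X₁,…,Xₙ]), monic in Y with deg_Y F ≥ 2, and with ‖F‖ ≥ 3. Suppose that every element of L_F := ℚ(X₁,…,Xₙ)[Y]/(F) that is algebraic over the subfield ℚ(X₂,…,Xₙ) already lies in ℚ(X₂,…,Xₙ). For a prime p and x ∈ 𝔽_pⁿ set v_p(x) := #{y ∈ 𝔽_p : F(y,x) = 0} and S(u,p) := Σ_{x ∈ 𝔽_pⁿ} (v_p(x) − 1) · e_p(u·x). Then there exists a finite set E of primes with |E| ≤ C(n,deg F) · log‖F‖ / log log‖F‖, for a constant C(n,deg F) depending only on n and deg F, such that for every prime p ∉ E: Σ_{u ∈ 𝔽_pⁿ, u₁ = 0} |S(u,p)|² ≤ C′(n,deg F) · p^{2n−1}. -/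

import Mathlib

open Polynomial

noncomputable section

/-- The rational function field `ℚ(X₁,…,Xₙ)`. -/
abbrev RF (n : ℕ) := FractionRing (MvPolynomial (Fin n) ℚ)

/-- Base change a polynomial `F ∈ ℤ[Y,X₁,…,Xₙ]` (written as a polynomial in `Y`
with coefficients in `ℤ[X₁,…,Xₙ]`) to `ℚ[Y,X₁,…,Xₙ]`. -/
def toQ {n : ℕ} (F : Polynomial (MvPolynomial (Fin n) ℤ)) :
    Polynomial (MvPolynomial (Fin n) ℚ) :=
  F.map (MvPolynomial.map (Int.castRingHom ℚ))

/-- View a polynomial in `ℚ[X][Y]` as a polynomial in `ℚ(X)[Y]`. -/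
def toFracQ {n : ℕ} (F : Polynomial (MvPolynomial (Fin n) ℚ)) : Polynomial (RF n) :=
  F.map (algebraMap (MvPolynomial (Fin n) ℚ) (RF n))

/-- View a polynomial in `ℤ[X][Y]` as a polynomial in `ℚ(X)[Y]`. -/
def toFrac {n : ℕ} (F : Polynomial (MvPolynomial (Fin n) ℤ)) : Polynomial (RF n) :=
  toFracQ (toQ F)

/-- The degree of `F(Y,X)` in the variable `Xᵢ`. -/
def degX {n : ℕ} {R : Type*} [CommSemiring R]
    (F : Polynomial (MvPolynomial (Fin n) R)) (i : Fin n) : ℕ :=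
  F.support.sup fun k => (F.coeff k).degreeOf i

/-- The total degree of `F(Y,X₁,…,Xₙ)` as a polynomial in `n+1` variables. -/
def totalDeg {n : ℕ} {R : Type*} [CommSemiring R]
    (F : Polynomial (MvPolynomial (Fin n) R)) : ℕ :=
  F.support.sup fun k => k + (F.coeff k).totalDegree

/-- `‖g‖`: the maximum absolute value of a coefficient of `g ∈ ℤ[X₁,…,Xₙ]`. -/
def mvNorm {n : ℕ} (g : MvPolynomial (Fin n) ℤ) : ℕ :=
  g.support.sup fun m => (g.coeff m).natAbs

/-- `‖F‖`: the maximum absolute value of a coefficient of `F ∈ ℤ[Y,X₁,…,Xₙ]`. -/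
def polyNorm {n : ℕ} (F : Polynomial (MvPolynomial (Fin n) ℤ)) : ℕ :=
  F.support.sup fun k => mvNorm (F.coeff k)

/-- The counting function
`N(F,B) = #{x ∈ ℤⁿ ∩ [−B,B]ⁿ : ∃ y ∈ ℤ, F(y,x) = 0}`. -/
def NFB {n : ℕ} (F : Polynomial (MvPolynomial (Fin n) ℤ)) (B : ℝ) : ℕ :=
  Set.ncard {x : Fin n → ℤ | (∀ i, |(x i : ℝ)| ≤ B) ∧
    ∃ y : ℤ, Polynomial.eval y (F.map (MvPolynomial.eval x)) = 0}

/-- `F ∈ ℤ[Y,X₁,…,Xₙ]` is absolutely irreducible: irreducible over `ℚ̄`. -/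
def AbsIrred {n : ℕ} (F : Polynomial (MvPolynomial (Fin n) ℤ)) : Prop :=
  Irreducible (F.map (MvPolynomial.map (Int.castRingHom (AlgebraicClosure ℚ))))

/-- `G` has positive degree in `Y` and in each variable `Xᵢ`. -/
def AllPosDeg {n : ℕ} (G : Polynomial (MvPolynomial (Fin n) ℤ)) : Prop :=
  0 < G.natDegree ∧ ∀ i : Fin n, 0 < degX G i

/-- A field extension `M` of `ℚ(X₁,…,Xₙ)` is an `n`-genuine extension: every
`G ∈ ℤ[Y,X₁,…,Xₙ]` irreducible over `ℚ(X)` with `M ≅ ℚ(X)[Y]/(G)` has positive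
degree in each of `Y, X₁, …, Xₙ`. -/
def IsGenuineExt (n : ℕ) (M : Type*) [Field M] [Algebra (RF n) M] : Prop :=
  ∀ G : Polynomial (MvPolynomial (Fin n) ℤ), Irreducible (toFrac G) →
    Nonempty (AdjoinRoot (toFrac G) ≃ₐ[RF n] M) → AllPosDeg G

/-- A field extension `M` of `ℚ(X₁,…,Xₙ)` is strongly `n`-genuine: every
intermediate field strictly containing `ℚ(X)` is `n`-genuine. -/
def IsStronglyGenuineExt (n : ℕ) (M : Type*) [Field M] [Algebra (RF n) M] : Prop :=
  ∀ M' : IntermediateField (RF n) M, M' ≠ ⊥ → IsGenuineExt n M'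

/-- The extension `ℚ(X)[Y]/(Fq)` presented by `Fq ∈ ℚ[X][Y]` is `n`-genuine. -/
def GenuineExtOfQ {n : ℕ} (Fq : Polynomial (MvPolynomial (Fin n) ℚ)) : Prop :=
  ∀ G : Polynomial (MvPolynomial (Fin n) ℤ), Irreducible (toFrac G) →
    Nonempty (AdjoinRoot (toFrac G) ≃ₐ[RF n] AdjoinRoot (toFracQ Fq)) → AllPosDeg G

/-- The extension `ℚ(X)[Y]/(Fq)` presented by `Fq ∈ ℚ[X][Y]` is strongly
`n`-genuine: for any field `M` isomorphic over `ℚ(X)` to `ℚ(X)[Y]/(Fq)`, every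
intermediate field strictly containing `ℚ(X)` is `n`-genuine. -/
def StronglyGenuineExtOfQ {n : ℕ} (Fq : Polynomial (MvPolynomial (Fin n) ℚ)) : Prop :=
  ∀ (M : Type) [Field M] [Algebra (RF n) M],
    Nonempty (AdjoinRoot (toFracQ Fq) ≃ₐ[RF n] M) → IsStronglyGenuineExt n M

/-- An absolutely irreducible `F ∈ ℤ[Y,X₁,…,Xₙ]` is an `n`-genuine polynomial. -/
def IsGenuinePoly {n : ℕ} (F : Polynomial (MvPolynomial (Fin n) ℤ)) : Prop :=
  AbsIrred F ∧ GenuineExtOfQ (toQ F)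

/-- An absolutely irreducible `F ∈ ℤ[Y,X₁,…,Xₙ]` is a strongly `n`-genuine polynomial. -/
def IsStronglyGenuinePoly {n : ℕ} (F : Polynomial (MvPolynomial (Fin n) ℤ)) : Prop :=
  AbsIrred F ∧ StronglyGenuineExtOfQ (toQ F)

/-- The ring map `ℚ[X₁,…,Xₙ] → ℚ[X₁,…,Xₙ]` induced by the linear substitution
`Xᵢ ↦ Σⱼ σᵢⱼ Xⱼ`. -/
def lsubMv {n : ℕ} (σ : Matrix (Fin n) (Fin n) ℚ) :
    MvPolynomial (Fin n) ℚ →+* MvPolynomial (Fin n) ℚ :=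
  (MvPolynomial.aeval (R := ℚ)
    fun i => ∑ j, MvPolynomial.C (σ i j) * MvPolynomial.X j).toRingHom

/-- `F_σ(Y,X) := F(Y,σ(X))` for a linear change of variables `σ`. -/
def applyGL {n : ℕ} (σ : Matrix (Fin n) (Fin n) ℚ)
    (Fq : Polynomial (MvPolynomial (Fin n) ℚ)) : Polynomial (MvPolynomial (Fin n) ℚ) :=
  Fq.map (lsubMv σ)

/-- `F` is `(1,n)`-allowable: absolutely irreducible, monic in `Y`, and
`ℚ(X)[Y]/(F_σ)` is an `n`-genuine extension for every `σ ∈ GLₙ(ℚ)`. -/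
def IsAllowable {n : ℕ} (F : Polynomial (MvPolynomial (Fin n) ℤ)) : Prop :=
  AbsIrred F ∧ F.Monic ∧
    ∀ σ : Matrix (Fin n) (Fin n) ℚ, IsUnit σ.det → GenuineExtOfQ (applyGL σ (toQ F))

/-- `F` is strongly `(1,n)`-allowable: absolutely irreducible, monic in `Y`, and
`ℚ(X)[Y]/(F_σ)` is a strongly `n`-genuine extension for every `σ ∈ GLₙ(ℚ)`. -/
def IsStronglyAllowable {n : ℕ} (F : Polynomial (MvPolynomial (Fin n) ℤ)) : Prop :=
  AbsIrred F ∧ F.Monic ∧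
    ∀ σ : Matrix (Fin n) (Fin n) ℚ, IsUnit σ.det → StronglyGenuineExtOfQ (applyGL σ (toQ F))

/-- `F` has the form (1.2) with parameter `m`:
`F = Y^{md} + f₁(X) Y^{m(d-1)} + ⋯ + f_{d-1}(X) Y^m + f_d(X)` with `f_d ≠ 0`. -/
def HasForm (n m : ℕ) (F : Polynomial (MvPolynomial (Fin n) ℤ)) : Prop :=
  ∃ (d : ℕ) (f : ℕ → MvPolynomial (Fin n) ℤ), 1 ≤ d ∧ f d ≠ 0 ∧
    F = Polynomial.X ^ (m * d) +
      ∑ j ∈ Finset.Icc 1 d, Polynomial.C (f j) * Polynomial.X ^ (m * (d - j))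

/-- `P` has a linear factor in `Y`: `P = (Y − Q(X))·H̃(Y,X)`. -/
def HasLinearFactorY {n : ℕ} {R : Type*} [CommRing R]
    (P : Polynomial (MvPolynomial (Fin n) R)) : Prop :=
  ∃ (Q : MvPolynomial (Fin n) R) (H : Polynomial (MvPolynomial (Fin n) R)),
    P = (Polynomial.X - Polynomial.C Q) * H

/-- The canonical map `ℚ[X₁,…,Xₙ] → ℚ(X)[Y]/(F)`. -/
def structMap {n : ℕ} (F : Polynomial (MvPolynomial (Fin n) ℤ)) :
    MvPolynomial (Fin n) ℚ →+* AdjoinRoot (toFrac F) :=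
  (algebraMap (RF n) (AdjoinRoot (toFrac F))).comp
    (algebraMap (MvPolynomial (Fin n) ℚ) (RF n))

/-- `z ∈ ℚ(X)[Y]/(F)` lies in the subfield `ℚ((Xᵢ)_{i≠j})`: it can be written
as a quotient of two polynomials not involving `Xⱼ`. -/
def CoordMem {n : ℕ} (j : Fin n) (F : Polynomial (MvPolynomial (Fin n) ℤ))
    (z : AdjoinRoot (toFrac F)) : Prop :=
  ∃ a b : MvPolynomial (Fin n) ℚ,
    MvPolynomial.degreeOf j a = 0 ∧ MvPolynomial.degreeOf j b = 0 ∧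
    structMap F b ≠ 0 ∧ z * structMap F b = structMap F a

/-- `z ∈ ℚ(X)[Y]/(F)` is algebraic over the subfield `ℚ((Xᵢ)_{i≠j})`. -/
def AlgOverCoord {n : ℕ} (j : Fin n) (F : Polynomial (MvPolynomial (Fin n) ℤ))
    (z : AdjoinRoot (toFrac F)) : Prop :=
  ∃ P : Polynomial (AdjoinRoot (toFrac F)), P ≠ 0 ∧ (∀ k, CoordMem j F (P.coeff k)) ∧
    Polynomial.eval z P = 0

/-- Substitute `Xᵢ = xᵢ` for `i ∈ I` into `F`, over `ℚ̄`. -/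
def substSome {n : ℕ} (I : Finset (Fin n)) (x : Fin n → ℚ)
    (F : Polynomial (MvPolynomial (Fin n) ℤ)) :
    Polynomial (MvPolynomial (Fin n) (AlgebraicClosure ℚ)) :=
  (toQ F).map
    ((MvPolynomial.aeval (R := ℚ) fun i =>
      if i ∈ I then MvPolynomial.C (algebraMap ℚ (AlgebraicClosure ℚ) (x i))
      else MvPolynomial.X i).toRingHom)

/-- Substitute `Xᵢ = xᵢ` for all `i ≠ i₀` into `F`, over `ℚ̄`. -/
def substKeepFirst {n : ℕ} (i0 : Fin n) (x : {i : Fin n // i ≠ i0} → ℤ)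
    (F : Polynomial (MvPolynomial (Fin n) ℤ)) :
    Polynomial (MvPolynomial (Fin n) (AlgebraicClosure ℚ)) :=
  F.map
    ((MvPolynomial.aeval (R := ℤ) fun i =>
      if h : i = i0 then (MvPolynomial.X i : MvPolynomial (Fin n) (AlgebraicClosure ℚ))
      else MvPolynomial.C ((x ⟨i, h⟩ : ℤ) : AlgebraicClosure ℚ)).toRingHom)

/-- `‖L‖`: maximum absolute value of an entry of an integer matrix. -/
def matNorm {n : ℕ} (L : Matrix (Fin n) (Fin n) ℤ) : ℕ :=
  Finset.univ.sup fun p : Fin n × Fin n => (L p.1 p.2).natAbs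

/-- The standard additive character `e_p(a) = exp(2πi a/p)` on `ZMod p`. -/
def eZp (p : ℕ) (a : ZMod p) : ℂ :=
  Complex.exp (2 * Real.pi * Complex.I * (a.val : ℂ) / (p : ℂ))

/-!
By Parseval the sum over `u₁ = 0` equals `p ^ (n - 1)` times the second moment, over
`x' = (x₂, …, xₙ)`, of the number of points of the curve `F(Y, X₁, x') = 0` over `𝔽_p` minus `p`.
So it suffices that this difference is `O(√p)` for all but `O(p ^ (n - 2))` of the fibres, the
trivial bound `O(p)` being enough for those.

Following Ruppert, if `f` is absolutely irreducible, a form `(g dX + h dY) / f` with the degrees of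
`g` and `h` bounded by those of `f` is closed only if it is a multiple of `df / f`. This is a system
of linear equations in the coefficients of `g` and `h` having only the trivial solution once
normalised, hence it is certified by a nonvanishing minor of its matrix. For `F`, seen as a
polynomial in `Y` and `X₁` over `ℤ[X₂, …, Xₙ]`, the triviality of the system follows from the
hypothesis on algebraic elements, through the residues of a closed form. One minor is thus a nonzero
polynomial in `X₂, …, Xₙ`; the exceptional primes are those dividing one fixed nonzero coefficient,
which is at most a power of `‖F‖`. For the other primes the minor is nonzero modulo `p`, so by
Schwartz–Zippel it vanishes at `O(p ^ (n - 2))` points `x'` only, and where it does not vanish the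
fibre satisfies the Weil bound, which is proved by Stepanov's method.
-/

section PartialX

variable {R : Type*} [CommRing R]

/-- The partial derivative `∂/∂X` on `R[X][Y]`, differentiating the coefficients of powers of `Y`.
The partial derivative `∂/∂Y` is `Polynomial.derivative`. -/
def partialX : Derivation R R[X][X] R[X][X] :=
  (PolynomialModule.equivPolynomialSelf (R := R[X])).toLinearMap.compDer
    (derivative' (R := R)).mapCoeffs

lemma coeff_partialX (a : R[X][X]) (j : ℕ) : (partialX a).coeff j = derivative (a.coeff j) := rfl

lemma partialX_mul (a b : R[X][X]) : partialX (a * b) = partialX a * b + a * partialX b := by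
  rw [Derivation.leibniz, smul_eq_mul, smul_eq_mul]
  ring

lemma partialX_derivative (a : R[X][X]) :
    partialX (derivative a) = derivative (partialX a) := by
  ext j : 1
  simp [coeff_partialX, coeff_derivative, derivative_mul]

lemma partialX_map {S : Type*} [CommRing S] (φ : R →+* S) (a : R[X][X]) :
    partialX (a.map (mapRingHom φ)) = (partialX a).map (mapRingHom φ) := by
  ext j : 1
  simp [coeff_partialX, derivative_map]

lemma natDegree_partialX_le (a : R[X][X]) : (partialX a).natDegree ≤ a.natDegree := by
  rw [natDegree_le_iff_coeff_eq_zero]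
  intro j hj
  rw [coeff_partialX, coeff_eq_zero_of_natDegree_lt hj, derivative_zero]

lemma natDegree_partialX_lt {a : R[X][X]} (ha : a.Monic) (h : 0 < a.natDegree) :
    (partialX a).natDegree < a.natDegree := by
  refine (natDegree_partialX_le a).lt_of_ne fun he => ?_
  have hlead : (partialX a).leadingCoeff = 0 := by
    rw [leadingCoeff, he, coeff_partialX, ha.coeff_natDegree, derivative_one]
  rw [leadingCoeff_eq_zero.1 hlead, natDegree_zero] at he
  omega

lemma coeff_coeff_swap (a : R[X][X]) (i j : ℕ) :
    ((Bivariate.swap a).coeff i).coeff j = (a.coeff j).coeff i := by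
  induction a using Polynomial.induction_on' with
  | add p q hp hq => simp only [map_add, coeff_add, hp, hq]
  | monomial m r =>
    induction r using Polynomial.induction_on' with
    | add p q hp hq => simp only [map_add, coeff_add, hp, hq]
    | monomial l s =>
      rw [Bivariate.swap_monomial_monomial]
      simp only [coeff_monomial]
      split_ifs <;> simp_all [coeff_monomial]

/-- The degree in `X` of a polynomial in `R[X][Y]`, i.e. the degree in its inner variable. -/
def natDegreeX (a : R[X][X]) : ℕ := (Bivariate.swap a).natDegree

lemma natDegreeX_le_iff {a : R[X][X]} {D : ℕ} :
    natDegreeX a ≤ D ↔ ∀ j, (a.coeff j).natDegree ≤ D := by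
  simp only [natDegreeX, natDegree_le_iff_coeff_eq_zero, Polynomial.ext_iff, coeff_coeff_swap,
    coeff_zero]
  exact ⟨fun h j i hi => h i hi j, fun h i hi j => h j i hi⟩

lemma natDegreeX_mul [IsDomain R] {a b : R[X][X]} (ha : a ≠ 0) (hb : b ≠ 0) :
    natDegreeX (a * b) = natDegreeX a + natDegreeX b := by
  rw [natDegreeX, map_mul, natDegree_mul (by simpa using ha) (by simpa using hb)]
  rfl

lemma natDegreeX_mul_le (a b : R[X][X]) : natDegreeX (a * b) ≤ natDegreeX a + natDegreeX b := by
  rw [natDegreeX, map_mul]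
  exact natDegree_mul_le

lemma natDegreeX_sub_le (a b : R[X][X]) :
    natDegreeX (a - b) ≤ max (natDegreeX a) (natDegreeX b) := by
  rw [natDegreeX, map_sub]
  exact natDegree_sub_le _ _

lemma natDegreeX_smul_le (c : R) (a : R[X][X]) : natDegreeX (c • a) ≤ natDegreeX a := by
  rw [natDegreeX, map_smul]
  exact natDegree_smul_le _ _

lemma natDegreeX_partialX_le (a : R[X][X]) : natDegreeX (partialX a) ≤ natDegreeX a :=
  natDegreeX_le_iff.2 fun j =>
    (natDegree_derivative_le _).trans ((Nat.sub_le _ _).trans (natDegreeX_le_iff.1 le_rfl j))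

lemma natDegreeX_derivative_le (a : R[X][X]) : natDegreeX (derivative a) ≤ natDegreeX a := by
  refine natDegreeX_le_iff.2 fun j => ?_
  rw [coeff_derivative, ← Nat.cast_succ, ← C_eq_natCast]
  exact (natDegree_mul_C_le _ _).trans (natDegreeX_le_iff.1 le_rfl _)

end PartialX

section Ruppert

variable {R : Type*} [CommRing R]

/-- The numerator `f (∂g/∂Y - ∂h/∂X) - g ∂f/∂Y + h ∂f/∂X` of the exterior derivative (up to sign)
of the differential form `(g dX + h dY) / f`, as a linear map in the pair `(g, h)`. -/
def closednessDefect (f : R[X][X]) : R[X][X] × R[X][X] →ₗ[R] R[X][X] where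
  toFun w := f * (derivative w.1 - partialX w.2) - w.1 * derivative f + w.2 * partialX f
  map_add' v w := by
    simp only [Prod.fst_add, Prod.snd_add, map_add]
    ring
  map_smul' c w := by
    simp only [Prod.smul_fst, Prod.smul_snd, derivative_smul, partialX.map_smul, RingHom.id_apply,
      ← smul_sub, smul_add, mul_smul_comm, smul_mul_assoc]

lemma closednessDefect_apply (f g h : R[X][X]) : closednessDefect f (g, h) =
    f * (derivative g - partialX h) - g * derivative f + h * partialX f := rfl

lemma closednessDefect_map {S : Type*} [CommRing S] (φ : R →+* S) (f g h : R[X][X]) :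
    closednessDefect (f.map (mapRingHom φ)) (g.map (mapRingHom φ), h.map (mapRingHom φ)) =
      (closednessDefect f (g, h)).map (mapRingHom φ) := by
  simp [closednessDefect_apply, partialX_map, derivative_map]

-- The logarithmic differential of a factor of `f` is a closed form with denominator `f`.
lemma closednessDefect_dlog_factor (a b : R[X][X]) :
    closednessDefect (a * b) (b * partialX a, b * derivative a) = 0 := by
  simp only [closednessDefect_apply, derivative_mul, partialX_mul, partialX_derivative]
  ring

-- For a square factor `a²` of `f`, so is the differential of `-1/a`.
lemma closednessDefect_of_sq_factor (a b : R[X][X]) :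
    closednessDefect (a * (a * b)) (b * partialX a, b * derivative a) = 0 := by
  simp only [closednessDefect_apply, derivative_mul, partialX_mul, partialX_derivative]
  ring

/-- Ruppert's criterion for `f ∈ R[X][Y]`: the only closed differential form `(g dX + h dY) / f`
with `deg_Y g, deg_Y h < d` and `deg_X g, deg_X h ≤ D` is zero, once `h` is normalised to have no
monomial `Y ^ (d - 1)`. The normalisation excludes the multiples of `df / f`. -/
def IsRuppertRigid (d D : ℕ) (f : R[X][X]) : Prop :=
  ∀ g h : R[X][X], g.natDegree < d → h.natDegree < d → natDegreeX g ≤ D → natDegreeX h ≤ D →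
    closednessDefect f (g, h) = 0 → (h.coeff (d - 1)).coeff 0 = 0 → g = 0 ∧ h = 0

end Ruppert

lemma coeff_derivative_natDegree_sub_one {R : Type*} [CommRing R] {a : R[X]} (ha : a.Monic)
    (h : 0 < a.natDegree) : (derivative a).coeff (a.natDegree - 1) = a.natDegree := by
  rw [coeff_derivative, ← Nat.cast_succ, Nat.succ_eq_add_one, Nat.sub_add_cancel h,
    ha.coeff_natDegree, one_mul]

lemma exists_monic_irreducible_mul_eq {R : Type*} [CommRing R] [IsDomain R] [WfDvdMonoid R[X]]
    {f : R[X]} (hf : f.Monic) (hf1 : f ≠ 1) :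
    ∃ a b : R[X], a.Monic ∧ b.Monic ∧ Irreducible a ∧ f = a * b := by
  obtain ⟨a, ha, b, rfl⟩ := WfDvdMonoid.exists_irreducible_factor
    (fun h => hf1 (hf.eq_one_of_isUnit h)) hf.ne_zero
  have hlead : a.leadingCoeff * b.leadingCoeff = 1 := by rw [← leadingCoeff_mul, hf]
  have hlead' : b.leadingCoeff * a.leadingCoeff = 1 := by rw [mul_comm, hlead]
  refine ⟨C b.leadingCoeff * a, C a.leadingCoeff * b, ?_, ?_, ?_, ?_⟩
  · rw [Monic, leadingCoeff_mul, leadingCoeff_C, hlead']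
  · rw [Monic, leadingCoeff_mul, leadingCoeff_C, hlead]
  · exact (irreducible_isUnit_mul (isUnit_C.2 (.of_mul_eq_one _ hlead'))).2 ha
  · rw [mul_mul_mul_comm, ← C_mul, hlead', C_1, one_mul]

section RuppertIrreducible

variable {κ : Type*} [Field κ] {d D : ℕ}

lemma derivative_ne_zero_of_monic {a : κ[X][X]} (ha : a.Monic) (h : 0 < a.natDegree)
    (hchar : (a.natDegree : κ) ≠ 0) : derivative a ≠ 0 := by
  intro h0
  have hcoeff := coeff_derivative_natDegree_sub_one ha h
  rw [h0, coeff_zero, ← C_eq_natCast] at hcoeff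
  exact hchar (C_eq_zero.1 hcoeff.symm)

lemma IsRuppertRigid.not_sq_dvd {a b : κ[X][X]} (hf : IsRuppertRigid d D (a * (a * b)))
    (ha : a.Monic) (hb : b.Monic) (ha0 : 0 < a.natDegree)
    (hd : a.natDegree + (a.natDegree + b.natDegree) = d)
    (hD : natDegreeX a + (natDegreeX a + natDegreeX b) ≤ D) (hchar : (a.natDegree : κ) ≠ 0) :
    False := by
  have hda := natDegree_derivative_lt ha0.ne'
  have hdX := natDegree_partialX_le a
  have hdeg : (b * derivative a).natDegree < d - 1 := natDegree_mul_le.trans_lt (by omega)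
  have hzero := hf (b * partialX a) (b * derivative a) (natDegree_mul_le.trans_lt (by omega))
    (by omega)
    ((natDegreeX_mul_le _ _).trans (by have := natDegreeX_partialX_le a; omega))
    ((natDegreeX_mul_le _ _).trans (by have := natDegreeX_derivative_le a; omega))
    (closednessDefect_of_sq_factor a b)
    (by rw [coeff_eq_zero_of_natDegree_lt hdeg, coeff_zero])
  exact mul_ne_zero hb.ne_zero (derivative_ne_zero_of_monic ha ha0 hchar) hzero.2

-- Combine `da / a` and `df / f`, where `f = a b`, with weights killing the normalising coefficient.
lemma IsRuppertRigid.smul_mul_derivative_eq {a b : κ[X][X]} (hf : IsRuppertRigid d D (a * b))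
    (ha : a.Monic) (hb : b.Monic) (ha0 : 0 < a.natDegree) (hd : a.natDegree + b.natDegree = d)
    (hD : natDegreeX a + natDegreeX b ≤ D) :
    (d : κ) • (b * derivative a) = (a.natDegree : κ) • derivative (a * b) := by
  have hab : (a * b).Monic := ha.mul hb
  have habd : (a * b).natDegree = d := by rw [ha.natDegree_mul hb, hd]
  have habD : natDegreeX (a * b) ≤ D := (natDegreeX_mul_le _ _).trans hD
  have hda := natDegree_derivative_lt ha0.ne'
  have hdab := natDegree_derivative_lt (p := a * b) (by omega)
  have hdXa := natDegree_partialX_lt ha ha0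
  have hdXab := natDegree_partialX_lt hab (by omega)
  have hclosed := congrArg₂ (fun v w => (d : κ) • v - (a.natDegree : κ) • w)
    (closednessDefect_dlog_factor a b) (closednessDefect_dlog_factor (a * b) 1)
  simp only [one_mul, mul_one, smul_zero, sub_zero, ← map_smul, ← map_sub, Prod.smul_mk,
    Prod.mk_sub_mk] at hclosed
  have hnorm : ((d : κ) • (b * derivative a) - (a.natDegree : κ) • derivative (a * b)).coeff (d - 1)
      = 0 := by
    have hlead : (b * derivative a).coeff (d - 1) = a.natDegree := by
      rw [show d - 1 = b.natDegree + (a.natDegree - 1) by omega,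
        coeff_mul_add_eq_of_natDegree_le le_rfl (by omega), hb.coeff_natDegree,
        coeff_derivative_natDegree_sub_one ha ha0, one_mul]
    have hlead' : (derivative (a * b)).coeff (d - 1) = d := by
      rw [← habd, coeff_derivative_natDegree_sub_one hab (by omega)]
    rw [coeff_sub, coeff_smul, coeff_smul, hlead, hlead', Nat.cast_smul_eq_nsmul,
      Nat.cast_smul_eq_nsmul, nsmul_eq_mul, nsmul_eq_mul, mul_comm, sub_self]
  have hdeg : ∀ u v : κ[X][X], u.natDegree < d → v.natDegree < d →
      ((d : κ) • u - (a.natDegree : κ) • v).natDegree < d := fun u v hu hv =>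
    (natDegree_sub_le _ _).trans_lt (max_lt ((natDegree_smul_le _ _).trans_lt hu)
      ((natDegree_smul_le _ _).trans_lt hv))
  have hdegX : ∀ u v : κ[X][X], natDegreeX u ≤ D → natDegreeX v ≤ D →
      natDegreeX ((d : κ) • u - (a.natDegree : κ) • v) ≤ D := fun u v hu hv =>
    (natDegreeX_sub_le _ _).trans (max_le ((natDegreeX_smul_le _ _).trans hu)
      ((natDegreeX_smul_le _ _).trans hv))
  refine sub_eq_zero.1 (hf _ _ (hdeg _ _ (natDegree_mul_le.trans_lt (by omega)) (by omega))
    (hdeg _ _ (natDegree_mul_le.trans_lt (by omega)) (by omega)) (hdegX _ _ ?_ ?_)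
    (hdegX _ _ ?_ ?_) hclosed (by rw [hnorm, coeff_zero])).2
  · exact (natDegreeX_mul_le _ _).trans (by have := natDegreeX_partialX_le a; omega)
  · exact (natDegreeX_partialX_le _).trans habD
  · exact (natDegreeX_mul_le _ _).trans (by have := natDegreeX_derivative_le a; omega)
  · exact (natDegreeX_derivative_le _).trans habD

theorem IsRuppertRigid.irreducible {f : κ[X][X]} (hf : IsRuppertRigid f.natDegree D f)
    (hmonic : f.Monic) (hpos : 0 < f.natDegree) (hD : natDegreeX f ≤ D)
    (hchar : ∀ j : ℕ, 1 ≤ j → j ≤ f.natDegree → (j : κ) ≠ 0) : Irreducible f := by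
  obtain ⟨a, b, ha, hb, hairr, rfl⟩ :=
    exists_monic_irreducible_mul_eq hmonic (by rintro rfl; simp at hpos)
  by_cases hb1 : b = 1
  · rwa [hb1, mul_one]
  exfalso
  have ha0 : 0 < a.natDegree := Nat.pos_of_ne_zero fun h =>
    hairr.not_isUnit (ha.natDegree_eq_zero.1 h ▸ isUnit_one)
  have hb0 : 0 < b.natDegree := Nat.pos_of_ne_zero fun h => hb1 (hb.natDegree_eq_zero.1 h)
  have hd : (a * b).natDegree = a.natDegree + b.natDegree := ha.natDegree_mul hb
  have hdX := natDegreeX_mul ha.ne_zero hb.ne_zero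
  have hachar : (a.natDegree : κ) ≠ 0 := hchar _ ha0 (by omega)
  have hnab : ¬ a ∣ b := by
    rintro ⟨c, rfl⟩
    have hc : c.Monic := ha.of_mul_monic_left hb
    refine hf.not_sq_dvd ha hc ha0 (by rw [hd, ha.natDegree_mul hc]) ?_ hachar
    rwa [← natDegreeX_mul ha.ne_zero hc.ne_zero, ← hdX]
  have hdvd : a ∣ (b.natDegree : κ) • (b * derivative a) := by
    refine ⟨(a.natDegree : κ) • derivative b, ?_⟩
    have hcomb := hf.smul_mul_derivative_eq ha hb ha0 hd.symm (by omega)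
    rw [hd, derivative_mul, smul_add, Nat.cast_add, add_smul, mul_comm (derivative a)] at hcomb
    rw [mul_smul_comm]
    exact add_left_cancel hcomb
  have hbchar : (b.natDegree : κ) ≠ 0 := hchar _ hb0 (by omega)
  have hdvd' : a ∣ b * derivative a := by
    simpa only [inv_smul_smul₀ hbchar] using dvd_smul_of_dvd (b.natDegree : κ)⁻¹ hdvd
  rcases hairr.prime.dvd_or_dvd hdvd' with h | h
  · exact hnab h
  · exact (natDegree_derivative_lt ha0.ne').not_ge
      (natDegree_le_of_dvd h (derivative_ne_zero_of_monic ha ha0 hachar))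

end RuppertIrreducible

section Minors

variable {ι ρ : Type*} [Fintype ι] [DecidableEq ι]

lemma exists_det_submatrix_ne_zero_of_field {κ : Type*} [Field κ] (N : Matrix ρ ι κ)
    (h : LinearIndependent κ N.col) : ∃ r : ι → ρ, (N.submatrix r id).det ≠ 0 := by
  have hspan : Submodule.span κ (Set.range N.row) = ⊤ := by
    by_contra hne
    obtain ⟨φ, hφ, hle⟩ := Submodule.exists_le_ker_of_lt_top _ (lt_top_iff_ne_top.2 hne)
    obtain ⟨v, rfl⟩ := (dotProductEquiv κ ι).surjective φ
    refine hφ ?_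
    have hcol : ∑ c, v c • N.col c = 0 := by
      ext a
      have hrow : v ⬝ᵥ N.row a = 0 := hle (Submodule.subset_span ⟨a, rfl⟩)
      simpa [dotProduct] using hrow
    rw [funext (Fintype.linearIndependent_iff.1 h v hcol), ← Pi.zero_def, map_zero]
  have hfinrank : Module.finrank κ (Submodule.span κ (Set.range N.row)) = Fintype.card ι := by
    rw [hspan, finrank_top, Module.finrank_fintype_fun_eq_card]
  obtain ⟨b, hb, -, hli⟩ := Submodule.exists_fun_fin_finrank_span_eq κ (Set.range N.row)
  choose r hr using hb
  let e := (Fintype.equivFin ι).trans (finCongr hfinrank.symm)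
  refine ⟨r ∘ e, ?_⟩
  rw [← isUnit_iff_ne_zero, ← Matrix.isUnit_iff_isUnit_det,
    ← Matrix.linearIndependent_rows_iff_isUnit]
  have hrow : (N.submatrix (r ∘ e) id).row = b ∘ e := funext fun i => hr (e i)
  rw [hrow]
  exact hli.comp e e.injective

lemma exists_det_submatrix_ne_zero {R : Type*} [CommRing R] [IsDomain R] (N : Matrix ρ ι R)
    (h : LinearIndependent R N.col) : ∃ r : ι → ρ, (N.submatrix r id).det ≠ 0 := by
  let K := FractionRing R
  have hinj : Function.Injective (Pi.algebraMap ρ R K) := fun v w hvw =>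
    funext fun a => IsFractionRing.injective R K (congrFun hvw a)
  have hK : LinearIndependent K (N.map (algebraMap R K)).col :=
    (LinearIndependent.iff_fractionRing R K).1
      (h.map' (Pi.algebraMap ρ R K) (LinearMap.ker_eq_bot.2 hinj))
  obtain ⟨r, hr⟩ := exists_det_submatrix_ne_zero_of_field _ hK
  refine ⟨r, fun h0 => hr ?_⟩
  rw [Matrix.submatrix_map, ← RingHom.mapMatrix_apply, ← RingHom.map_det, h0, map_zero]

end Minors

section RuppertMatrix

variable {R : Type*} [CommRing R] {d D : ℕ}

/-- The polynomial `∑ v (i, j) Y ^ i X ^ j`, of degree less than `d` in `Y` and at most `D` in `X`,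
with prescribed coefficients. -/
def ofCoeffs : (Fin d × Fin (D + 1) → R) →ₗ[R] R[X][X] :=
  Fintype.linearCombination R fun t => monomial (t.1 : ℕ) (monomial (t.2 : ℕ) 1)

lemma ofCoeffs_apply (v : Fin d × Fin (D + 1) → R) :
    ofCoeffs v = ∑ t, monomial (t.1 : ℕ) (monomial (t.2 : ℕ) (v t)) := by
  simp [ofCoeffs, Fintype.linearCombination_apply, smul_monomial]

lemma coeff_coeff_ofCoeffs (v : Fin d × Fin (D + 1) → R) (t : Fin d × Fin (D + 1)) :
    ((ofCoeffs v).coeff t.1).coeff t.2 = v t := by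
  rw [ofCoeffs_apply, finsetSum_coeff, finsetSum_coeff, Fintype.sum_eq_single t]
  · simp
  · intro s hs
    rw [coeff_monomial]
    split_ifs with h
    · rw [coeff_monomial, if_neg fun h' => hs (Prod.ext (Fin.ext h) (Fin.ext h'))]
    · simp

lemma natDegree_ofCoeffs_lt (hd : 0 < d) (v : Fin d × Fin (D + 1) → R) :
    (ofCoeffs v).natDegree < d := by
  rw [ofCoeffs_apply]
  refine (natDegree_sum_le_of_forall_le (n := d - 1) _ _ fun t _ => ?_).trans_lt (by omega)
  exact (natDegree_monomial_le _).trans (by have := t.1.2; omega)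

lemma natDegreeX_ofCoeffs_le (v : Fin d × Fin (D + 1) → R) : natDegreeX (ofCoeffs v) ≤ D := by
  rw [natDegreeX, ofCoeffs_apply, map_sum]
  refine natDegree_sum_le_of_forall_le _ _ fun t _ => ?_
  rw [Bivariate.swap_monomial_monomial]
  exact (natDegree_monomial_le _).trans (Nat.lt_succ_iff.1 t.2.2)

lemma ofCoeffs_coeff_coeff {g : R[X][X]} (hY : g.natDegree < d) (hX : natDegreeX g ≤ D) :
    ofCoeffs (fun t : Fin d × Fin (D + 1) => (g.coeff t.1).coeff t.2) = g := by
  set v := fun t : Fin d × Fin (D + 1) => (g.coeff t.1).coeff t.2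
  ext i j
  by_cases hi : i < d
  · by_cases hj : j < D + 1
    · exact coeff_coeff_ofCoeffs v (⟨i, hi⟩, ⟨j, hj⟩)
    · have hvX := natDegreeX_le_iff.1 (natDegreeX_ofCoeffs_le v) i
      have hgX := natDegreeX_le_iff.1 hX i
      rw [coeff_eq_zero_of_natDegree_lt (by omega), coeff_eq_zero_of_natDegree_lt (by omega)]
  · have hvY := natDegree_ofCoeffs_lt (by omega) v
    rw [coeff_eq_zero_of_natDegree_lt (p := g) (by omega),
      coeff_eq_zero_of_natDegree_lt (p := ofCoeffs v) (by omega)]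

/-- The indices of the coefficients of the pair `(g, h)` in `IsRuppertRigid d D`. -/
abbrev FormIndex (d D : ℕ) := (Fin d × Fin (D + 1)) ⊕ (Fin d × Fin (D + 1))

/-- The monomial pairs `(Y ^ i X ^ j, 0)` and `(0, Y ^ i X ^ j)`. -/
def monomialForm (R : Type*) [CommRing R] : FormIndex d D → R[X][X] × R[X][X] :=
  Sum.elim (fun t => (monomial (t.1 : ℕ) (monomial (t.2 : ℕ) 1), 0))
    fun t => (0, monomial (t.1 : ℕ) (monomial (t.2 : ℕ) 1))

lemma linearCombination_monomialForm (v : FormIndex d D → R) :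
    Fintype.linearCombination R (monomialForm R) v =
      (ofCoeffs (v ∘ Sum.inl), ofCoeffs (v ∘ Sum.inr)) := by
  ext : 1 <;> simp [Fintype.linearCombination_apply, monomialForm, ofCoeffs, Prod.fst_sum,
    Prod.snd_sum]

/-- The linear equations imposed on `(g, h)` in `IsRuppertRigid d D f`: the equation `none` is the
normalisation of `h`, and `some (i, j)` is the vanishing of the coefficient of `Y ^ i X ^ j` in
the closedness defect. -/
def ruppertEquation (d : ℕ) (f : R[X][X]) : Option (ℕ × ℕ) → R[X][X] × R[X][X] →ₗ[R] R
  | none => lcoeff R 0 ∘ₗ (lcoeff R[X] (d - 1)).restrictScalars R ∘ₗ LinearMap.snd R _ _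
  | some (i, j) => lcoeff R j ∘ₗ (lcoeff R[X] i).restrictScalars R ∘ₗ closednessDefect f

lemma ruppertEquation_none (f g h : R[X][X]) :
    ruppertEquation d f none (g, h) = (h.coeff (d - 1)).coeff 0 := rfl

lemma ruppertEquation_some (f g h : R[X][X]) (i j : ℕ) :
    ruppertEquation d f (some (i, j)) (g, h) = ((closednessDefect f (g, h)).coeff i).coeff j := rfl

/-- The matrix of the linear equations in `IsRuppertRigid d D f`. -/
def ruppertMatrix (d D : ℕ) (f : R[X][X]) : Matrix (Option (ℕ × ℕ)) (FormIndex d D) R :=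
  .of fun r c => ruppertEquation d f r (monomialForm R c)

lemma ruppertMatrix_mulVec (f : R[X][X]) (v : FormIndex d D → R) (r : Option (ℕ × ℕ)) :
    (ruppertMatrix d D f).mulVec v r =
      ruppertEquation d f r (ofCoeffs (v ∘ Sum.inl), ofCoeffs (v ∘ Sum.inr)) := by
  rw [← linearCombination_monomialForm, Fintype.linearCombination_apply, map_sum]
  simp [Matrix.mulVec, dotProduct, ruppertMatrix, mul_comm]

lemma ruppertMatrix_map {S : Type*} [CommRing S] (φ : R →+* S) (f : R[X][X]) :
    ruppertMatrix d D (f.map (mapRingHom φ)) = (ruppertMatrix d D f).map φ := by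
  have hform : ∀ c : FormIndex d D, monomialForm S c =
      ((monomialForm R c).1.map (mapRingHom φ), (monomialForm R c).2.map (mapRingHom φ)) := by
    rintro (t | t) <;> simp [monomialForm]
  ext (_ | ⟨i, j⟩) c
  · rw [Matrix.map_apply, ruppertMatrix, ruppertMatrix, Matrix.of_apply, Matrix.of_apply, hform,
      ruppertEquation_none, ← Prod.mk.eta (p := monomialForm R c), ruppertEquation_none, coeff_map,
      coe_mapRingHom, coeff_map]
  · rw [Matrix.map_apply, ruppertMatrix, ruppertMatrix, Matrix.of_apply, Matrix.of_apply, hform,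
      ruppertEquation_some, ← Prod.mk.eta (p := monomialForm R c), ruppertEquation_some,
      closednessDefect_map, coeff_map, coe_mapRingHom, coeff_map]

lemma isRuppertRigid_of_det_ne_zero [IsDomain R] {f : R[X][X]}
    (r : FormIndex d D → Option (ℕ × ℕ)) (h : ((ruppertMatrix d D f).submatrix r id).det ≠ 0) :
    IsRuppertRigid d D f := by
  intro g k hgY hkY hgX hkX hclosed hnorm
  have hg := ofCoeffs_coeff_coeff hgY hgX
  have hk := ofCoeffs_coeff_coeff hkY hkX
  set a := fun t : Fin d × Fin (D + 1) => (g.coeff t.1).coeff t.2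
  set b := fun t : Fin d × Fin (D + 1) => (k.coeff t.1).coeff t.2
  have hzero : Sum.elim a b = 0 := by
    refine Matrix.eq_zero_of_mulVec_eq_zero h (funext fun i => ?_)
    change (ruppertMatrix d D f).mulVec (Sum.elim a b) (r i) = 0
    rw [ruppertMatrix_mulVec, Sum.elim_comp_inl, Sum.elim_comp_inr, hg, hk]
    rcases r i with _ | ⟨i, j⟩
    · exact hnorm
    · rw [ruppertEquation_some, hclosed, coeff_zero, coeff_zero]
  have ha : a = 0 := by rw [← Sum.elim_comp_inl a b, hzero]; rfl
  have hb : b = 0 := by rw [← Sum.elim_comp_inr a b, hzero]; rfl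
  rw [← hg, ← hk, ha, hb, map_zero]
  exact ⟨rfl, rfl⟩

lemma IsRuppertRigid.exists_det_ne_zero [IsDomain R] {f : R[X][X]} (hf : IsRuppertRigid d D f)
    (hd : 0 < d) : ∃ r : FormIndex d D → Option (ℕ × ℕ),
      ((ruppertMatrix d D f).submatrix r id).det ≠ 0 := by
  refine exists_det_submatrix_ne_zero _ (Matrix.mulVec_injective_iff.1 ?_)
  refine (injective_iff_map_eq_zero (ruppertMatrix d D f).mulVecLin).2 fun v hv => ?_
  have hrow := fun r => (ruppertMatrix_mulVec f v r).symm.trans (congrFun hv r)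
  obtain ⟨hg, hh⟩ := hf _ _ (natDegree_ofCoeffs_lt hd _) (natDegree_ofCoeffs_lt hd _)
    (natDegreeX_ofCoeffs_le _) (natDegreeX_ofCoeffs_le _) (by ext i j; exact hrow (some (i, j)))
    (hrow none)
  funext c
  rcases c with t | t
  · simpa [hg] using (coeff_coeff_ofCoeffs (v ∘ Sum.inl) t).symm
  · simpa [hh] using (coeff_coeff_ofCoeffs (v ∘ Sum.inr) t).symm

end RuppertMatrix

section WeightedDegree

variable {R : Type*} [CommRing R] {D S T d : ℕ}

/-- The polynomials of weighted degree at most `T`, where `X` has weight `1` and the outer variable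
`Y` has weight `D`. -/
def weightedDegreeLE (R : Type*) [CommRing R] (D T : ℕ) : Submodule R R[X][X] where
  carrier := {g | ∀ i j, T < i + D * j → (g.coeff j).coeff i = 0}
  add_mem' ha hb i j h := by rw [coeff_add, coeff_add, ha i j h, hb i j h, add_zero]
  zero_mem' i j _ := by simp
  smul_mem' c a ha i j h := by rw [coeff_smul, coeff_smul, ha i j h, smul_zero]

lemma weightedDegreeLE_mono (h : S ≤ T) : weightedDegreeLE R D S ≤ weightedDegreeLE R D T :=
  fun _ hg i j hij => hg i j (by omega)

lemma mul_mem_weightedDegreeLE {a b : R[X][X]} (ha : a ∈ weightedDegreeLE R D S)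
    (hb : b ∈ weightedDegreeLE R D T) : a * b ∈ weightedDegreeLE R D (S + T) := by
  intro i j hij
  rw [coeff_mul, finsetSum_coeff]
  refine Finset.sum_eq_zero fun t ht => ?_
  rw [coeff_mul]
  refine Finset.sum_eq_zero fun s hs => ?_
  rw [Finset.HasAntidiagonal.mem_antidiagonal] at ht hs
  rw [← ht, ← hs, mul_add] at hij
  by_cases h : S < s.1 + D * t.1
  · rw [ha _ _ h, zero_mul]
  · rw [hb _ _ (by omega), mul_zero]

lemma partialX_mem_weightedDegreeLE {a : R[X][X]} (ha : a ∈ weightedDegreeLE R D T) :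
    partialX a ∈ weightedDegreeLE R D T := by
  intro i j hij
  rw [coeff_partialX, coeff_derivative, ha _ _ (by omega), zero_mul]

lemma derivative_mem_weightedDegreeLE {a : R[X][X]} (ha : a ∈ weightedDegreeLE R D T) :
    derivative a ∈ weightedDegreeLE R D T := by
  intro i j hij
  rw [coeff_derivative, ← Nat.cast_succ, mul_comm, coeff_natCast_mul, ha _ _ (by lia), mul_zero]

lemma C_mem_weightedDegreeLE {a : R[X]} (ha : a.natDegree ≤ T) :
    C a ∈ weightedDegreeLE R D T := by
  intro i j hij
  rw [coeff_C]
  split_ifs with h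
  · subst h; exact coeff_eq_zero_of_natDegree_lt (by omega)
  · exact coeff_zero i

lemma C_mul_X_pow_mem_weightedDegreeLE {a : R[X]} {N : ℕ} (ha : a ≠ 0 → a.natDegree + D * N ≤ T) :
    C a * X ^ N ∈ weightedDegreeLE R D T := by
  intro i j hij
  rw [coeff_C_mul_X_pow]
  split_ifs with hj
  · subst hj
    by_cases h0 : a = 0
    · rw [h0, coeff_zero]
    · exact coeff_eq_zero_of_natDegree_lt (by have := ha h0; omega)
  · exact coeff_zero i

lemma X_mem_weightedDegreeLE : (X : R[X][X]) ∈ weightedDegreeLE R D D := by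
  simpa using C_mul_X_pow_mem_weightedDegreeLE (D := D) (a := (1 : R[X])) (N := 1) (T := D)
    (by simp)

lemma one_mem_weightedDegreeLE : (1 : R[X][X]) ∈ weightedDegreeLE R D T := by
  simpa using C_mem_weightedDegreeLE (D := D) (a := (1 : R[X])) (T := T) (by simp)

lemma mem_weightedDegreeLE_of_natDegree_le {g : R[X][X]} (hX : natDegreeX g ≤ T)
    (hY : g.natDegree ≤ d) : g ∈ weightedDegreeLE R D (T + D * d) := by
  intro i j hij
  by_cases hj : j ≤ d
  · have := Nat.mul_le_mul_left D hj
    exact coeff_eq_zero_of_natDegree_lt ((natDegreeX_le_iff.1 hX j).trans_lt (by omega))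
  · rw [coeff_eq_zero_of_natDegree_lt (n := j) (by omega), coeff_zero]

/-- `f` is monic of degree `d ≥ 1` in the outer variable `Y` and of degree at most `D` in `X`. -/
structure IsMonicOfBidegree (f : R[X][X]) (d D : ℕ) : Prop where
  monic : f.Monic
  natDegree_eq : f.natDegree = d
  pos : 0 < d
  natDegreeX_le : natDegreeX f ≤ D

variable {f : R[X][X]}

lemma IsMonicOfBidegree.coeff_self (hf : IsMonicOfBidegree f d D) : f.coeff d = 1 := by
  rw [← hf.natDegree_eq]; exact hf.monic

lemma IsMonicOfBidegree.mem_weightedDegreeLE (hf : IsMonicOfBidegree f d D) :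
    f ∈ weightedDegreeLE R D (D * d) := by
  intro i j hij
  rcases lt_trichotomy j d with hj | rfl | hj
  · have : D * (j + 1) ≤ D * d := Nat.mul_le_mul_left _ hj
    exact coeff_eq_zero_of_natDegree_lt
      ((natDegreeX_le_iff.1 hf.natDegreeX_le j).trans_lt (by lia))
  · rw [hf.coeff_self, coeff_one, if_neg (by omega)]
  · rw [coeff_eq_zero_of_natDegree_lt (n := j) (hf.natDegree_eq ▸ hj), coeff_zero]

lemma IsMonicOfBidegree.modByMonic_mem [Nontrivial R] (hf : IsMonicOfBidegree f d D)
    (g : R[X][X]) (hg : g ∈ weightedDegreeLE R D T) : g %ₘ f ∈ weightedDegreeLE R D T := by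
  by_cases hlt : g.degree < f.degree
  · rwa [(modByMonic_eq_self_iff hf.monic).2 hlt]
  have hg0 : g ≠ 0 := by
    rintro rfl
    exact hlt (by rw [degree_zero]; exact bot_lt_iff_ne_bot.2 (degree_ne_bot.2 hf.monic.ne_zero))
  set q := f * (C g.leadingCoeff * X ^ (g.natDegree - f.natDegree))
  have hlc : g.leadingCoeff.natDegree + D * g.natDegree ≤ T := by
    by_contra! hcon
    exact hg0 (leadingCoeff_eq_zero.1 (leadingCoeff_eq_zero.1 (hg _ _ hcon)))
  have hle : D * f.natDegree ≤ D * g.natDegree :=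
    Nat.mul_le_mul_left _ (natDegree_le_natDegree (not_lt.1 hlt))
  have hq : q ∈ weightedDegreeLE R D T := by
    have hmono : C g.leadingCoeff * X ^ (g.natDegree - f.natDegree) ∈
        weightedDegreeLE R D (T - D * d) :=
      C_mul_X_pow_mem_weightedDegreeLE fun _ => by
        rw [Nat.mul_sub, ← hf.natDegree_eq]; omega
    have := mul_mem_weightedDegreeLE hf.mem_weightedDegreeLE hmono
    rwa [Nat.add_sub_cancel' (by rw [← hf.natDegree_eq]; omega)] at this
  have hmod : (g - q) %ₘ f = g %ₘ f := by
    rw [sub_modByMonic, (modByMonic_eq_zero_iff_dvd hf.monic).2 (dvd_mul_right f _), sub_zero]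
  rw [← hmod]
  exact hf.modByMonic_mem (g - q) (Submodule.sub_mem _ hg hq)
termination_by g.degree
decreasing_by exact div_wf_lemma ⟨not_lt.1 hlt, hg0⟩ hf.monic

/-- The elements of the coordinate ring `R[X, Y] / (f)` represented by a polynomial of weighted
degree at most `T`; for fixed `D` these submodules form a filtration. -/
def curveDegreeLE (f : R[X][X]) (D T : ℕ) : Submodule R (AdjoinRoot f) :=
  (weightedDegreeLE R D T).map ((AdjoinRoot.mkₐ f).restrictScalars R).toLinearMap

lemma mem_curveDegreeLE {a : AdjoinRoot f} :
    a ∈ curveDegreeLE f D T ↔ ∃ g ∈ weightedDegreeLE R D T, AdjoinRoot.mk f g = a := Iff.rfl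

lemma mk_mem_curveDegreeLE {g : R[X][X]} (h : g ∈ weightedDegreeLE R D T) :
    AdjoinRoot.mk f g ∈ curveDegreeLE f D T := ⟨g, h, rfl⟩

lemma curveDegreeLE_mono (h : S ≤ T) : curveDegreeLE f D S ≤ curveDegreeLE f D T :=
  Submodule.map_mono (weightedDegreeLE_mono h)

lemma mul_mem_curveDegreeLE {a b : AdjoinRoot f} (ha : a ∈ curveDegreeLE f D S)
    (hb : b ∈ curveDegreeLE f D T) : a * b ∈ curveDegreeLE f D (S + T) := by
  obtain ⟨g, hg, rfl⟩ := mem_curveDegreeLE.1 ha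
  obtain ⟨h, hh, rfl⟩ := mem_curveDegreeLE.1 hb
  exact mk_mem_curveDegreeLE (mul_mem_weightedDegreeLE hg hh)

lemma one_mem_curveDegreeLE : (1 : AdjoinRoot f) ∈ curveDegreeLE f D T :=
  mk_mem_curveDegreeLE one_mem_weightedDegreeLE

lemma pow_mem_curveDegreeLE {a : AdjoinRoot f} (ha : a ∈ curveDegreeLE f D T) (n : ℕ) :
    a ^ n ∈ curveDegreeLE f D (n * T) := by
  induction n with
  | zero => simpa using one_mem_curveDegreeLE
  | succ n ih => rw [pow_succ, Nat.succ_mul]; exact mul_mem_curveDegreeLE ih ha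

lemma exists_mem_curveDegreeLE (D : ℕ) (a : AdjoinRoot f) : ∃ T, a ∈ curveDegreeLE f D T := by
  obtain ⟨g, rfl⟩ := AdjoinRoot.mk_surjective a
  exact ⟨_, mk_mem_curveDegreeLE (mem_weightedDegreeLE_of_natDegree_le le_rfl le_rfl)⟩

/-- The elements of `R[X, Y] / (f)` represented by a polynomial of degree less than `d` in `Y` and
at most `T` in `X`, as the image of the space of coefficient arrays. -/
def reducedMk (f : R[X][X]) (d T : ℕ) : (Fin d × Fin (T + 1) → R) →ₗ[R] AdjoinRoot f :=
  ((AdjoinRoot.mkₐ f).restrictScalars R).toLinearMap ∘ₗ ofCoeffs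

lemma reducedMk_apply (v : Fin d × Fin (T + 1) → R) :
    reducedMk f d T v = AdjoinRoot.mk f (ofCoeffs v) := rfl

namespace IsMonicOfBidegree

lemma reducedMk_injective [Nontrivial R] (hf : IsMonicOfBidegree f d D) (T : ℕ) :
    Function.Injective (reducedMk f d T) := by
  rw [injective_iff_map_eq_zero]
  intro v hv
  rw [reducedMk_apply, AdjoinRoot.mk_eq_zero] at hv
  have hzero : ofCoeffs v = 0 := by
    by_contra hne
    exact hf.monic.not_dvd_of_natDegree_lt hne
      (hf.natDegree_eq ▸ natDegree_ofCoeffs_lt hf.pos v) hv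
  funext t
  rw [← coeff_coeff_ofCoeffs v t, hzero, coeff_zero, coeff_zero, Pi.zero_apply]

lemma finrank_range_reducedMk [Nontrivial R] (hf : IsMonicOfBidegree f d D) (T : ℕ) :
    Module.finrank R (LinearMap.range (reducedMk f d T)) = d * (T + 1) := by
  rw [LinearMap.finrank_range_of_inj (hf.reducedMk_injective T),
    Module.finrank_fintype_fun_eq_card, Fintype.card_prod, Fintype.card_fin, Fintype.card_fin]

lemma curveDegreeLE_le_range_reducedMk [Nontrivial R] (hf : IsMonicOfBidegree f d D) (T : ℕ) :
    curveDegreeLE f D T ≤ LinearMap.range (reducedMk f d T) := by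
  rintro _ ⟨g, hg, rfl⟩
  have hgf := hf.modByMonic_mem g hg
  have hY : (g %ₘ f).natDegree < d := by
    rw [← hf.natDegree_eq]
    exact natDegree_modByMonic_lt g hf.monic fun h => by
      simpa [h] using hf.natDegree_eq.trans_gt hf.pos
  have hX : natDegreeX (g %ₘ f) ≤ T :=
    natDegreeX_le_iff.2 fun j => natDegree_le_iff_coeff_eq_zero.2 fun i hi => hgf i j (by omega)
  refine ⟨_, (reducedMk_apply _).trans ((congrArg _ (ofCoeffs_coeff_coeff hY hX)).trans ?_)⟩
  exact AdjoinRoot.mk_eq_mk.2 (dvd_modByMonic_sub g f)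

lemma range_reducedMk_le_curveDegreeLE (hf : IsMonicOfBidegree f d D) (T : ℕ) :
    LinearMap.range (reducedMk f d T) ≤ curveDegreeLE f D (T + D * d) := by
  rintro _ ⟨v, rfl⟩
  exact mk_mem_curveDegreeLE (mem_weightedDegreeLE_of_natDegree_le (natDegreeX_ofCoeffs_le v)
    (natDegree_ofCoeffs_lt hf.pos v).le)

end IsMonicOfBidegree

end WeightedDegree

section OrderOfVanishing

variable {R A B : Type*} [CommRing R] [CommRing A] [CommRing B] [Algebra R A] [Algebra R B]
  {Δ : Derivation R A A} {φ : A →ₐ[R] B} {M N n : ℕ} {a b t : A}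

/-- The ideal of the functions `a` vanishing to order `M` at the point `φ` in the direction of the
vector field `Δ`: the first `M` iterated derivatives of `a` vanish at `φ`. -/
def vanishingIdeal (Δ : Derivation R A A) (φ : A →ₐ[R] B) (M : ℕ) : Ideal A where
  carrier := {a | ∀ ν < M, φ (Δ^[ν] a) = 0}
  add_mem' ha hb ν hν := by rw [iterate_map_add, map_add, ha ν hν, hb ν hν, add_zero]
  zero_mem' ν _ := by rw [iterate_map_zero, map_zero]
  smul_mem' c a ha := by
    rw [smul_eq_mul]
    induction M generalizing a c with
    | zero => exact fun ν hν => absurd hν ν.not_lt_zero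
    | succ M ih =>
      rintro (_ | ν) hν
      · rw [Function.iterate_zero_apply, map_mul, show φ a = 0 from ha 0 hν, mul_zero]
      rw [Function.iterate_succ_apply, Derivation.leibniz, smul_eq_mul, smul_eq_mul,
        iterate_map_add, map_add, ih c (Δ a) (fun μ hμ => ha (μ + 1) (by omega)) ν (by omega),
        mul_comm a, ih (Δ c) a (fun μ hμ => ha μ (by omega)) ν (by omega), add_zero]

lemma mem_vanishingIdeal : a ∈ vanishingIdeal Δ φ M ↔ ∀ ν < M, φ (Δ^[ν] a) = 0 := Iff.rfl

lemma mem_vanishingIdeal_succ :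
    a ∈ vanishingIdeal Δ φ (M + 1) ↔ φ a = 0 ∧ Δ a ∈ vanishingIdeal Δ φ M :=
  ⟨fun h => ⟨h 0 M.succ_pos, fun ν hν => h (ν + 1) (by omega)⟩, fun ⟨h0, h1⟩ ν hν => by
    cases ν with
    | zero => exact h0
    | succ ν => exact h1 ν (by omega)⟩

lemma vanishingIdeal_anti (h : M ≤ N) : vanishingIdeal Δ φ N ≤ vanishingIdeal Δ φ M :=
  fun _ ha ν hν => ha ν (by omega)

lemma mul_mem_vanishingIdeal (ha : a ∈ vanishingIdeal Δ φ M) (hb : b ∈ vanishingIdeal Δ φ N) :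
    a * b ∈ vanishingIdeal Δ φ (M + N) := by
  obtain ⟨s, hs⟩ : ∃ s, M + N = s := ⟨_, rfl⟩
  rw [hs]
  induction s generalizing M N a b with
  | zero => exact fun ν hν => absurd hν ν.not_lt_zero
  | succ s ih =>
    rcases M with _ | M
    · exact Ideal.mul_mem_left _ _ (vanishingIdeal_anti (by omega) hb)
    rcases N with _ | N
    · exact Ideal.mul_mem_right _ _ (vanishingIdeal_anti (by omega) ha)
    have ha' := mem_vanishingIdeal_succ.1 ha
    have hb' := mem_vanishingIdeal_succ.1 hb
    refine mem_vanishingIdeal_succ.2 ⟨by rw [map_mul, ha'.1, zero_mul], ?_⟩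
    rw [Derivation.leibniz, smul_eq_mul, smul_eq_mul]
    exact add_mem (ih ha hb'.2 (by omega)) (ih hb ha'.2 (by omega))

lemma pow_mem_vanishingIdeal (ht : φ t = 0) (n : ℕ) : t ^ n ∈ vanishingIdeal Δ φ n := by
  induction n with
  | zero => exact fun ν hν => absurd hν ν.not_lt_zero
  | succ n ih =>
    exact pow_succ t n ▸ mul_mem_vanishingIdeal ih
      (mem_vanishingIdeal_succ.2 ⟨ht, fun ν hν => absurd hν ν.not_lt_zero⟩)

lemma map_iterate_pow_mul (ht : φ t = 0) (n : ℕ) (b : A) :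
    φ (Δ^[n] (t ^ n * b)) = n.factorial * φ (Δ t) ^ n * φ b := by
  induction n generalizing b with
  | zero => simp
  | succ n ih =>
    have hvan : φ (Δ^[n] (t ^ (n + 1) * Δ b)) = 0 :=
      Ideal.mul_mem_right _ _ (pow_mem_vanishingIdeal ht (n + 1)) n n.lt_succ_self
    have hleib : Δ (t ^ (n + 1) * b) =
        t ^ (n + 1) * Δ b + t ^ n * (((n + 1 : ℕ) : A) * Δ t * b) := by
      rw [Derivation.leibniz, Derivation.leibniz_pow]
      simp only [smul_eq_mul, nsmul_eq_mul, Nat.add_sub_cancel]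
      ring
    rw [Function.iterate_succ_apply, hleib, iterate_map_add, map_add, hvan, zero_add, ih, map_mul,
      map_mul, map_natCast, Nat.factorial_succ]
    push_cast
    ring

end OrderOfVanishing

section CurveDerivation

variable {R : Type*} [CommRing R] (f : R[X][X])

/-- The derivation `∂f/∂Y · ∂/∂X - ∂f/∂X · ∂/∂Y` of `R[X, Y]`, which is tangent to `f = 0`. -/
def hamiltonianDerivation : Derivation R R[X][X] R[X][X] :=
  derivative f • partialX - partialX f • (Polynomial.derivative' (R := R[X])).restrictScalars R

lemma hamiltonianDerivation_apply (g : R[X][X]) :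
    hamiltonianDerivation f g = derivative f * partialX g - partialX f * derivative g := by
  simp [hamiltonianDerivation, Polynomial.derivative'_apply]

lemma mkₐ_hamiltonianDerivation_eq_zero (g : R[X][X])
    (hg : (AdjoinRoot.mkₐ f).restrictScalars R g = 0) :
    (AdjoinRoot.mkₐ f).restrictScalars R (hamiltonianDerivation f g) = 0 := by
  obtain ⟨h, rfl⟩ := AdjoinRoot.mk_eq_zero.1 hg
  refine AdjoinRoot.mk_eq_zero.2 ⟨derivative f * partialX h - partialX f * derivative h, ?_⟩
  rw [hamiltonianDerivation_apply, partialX_mul, derivative_mul]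
  ring

/-- The derivation of the coordinate ring `R[X, Y] / (f)` induced by `hamiltonianDerivation f`. -/
def curveDerivation : Derivation R (AdjoinRoot f) (AdjoinRoot f) :=
  Derivation.liftOfSurjective (f := (AdjoinRoot.mkₐ f).restrictScalars R)
    (AdjoinRoot.mk_surjective) (d := hamiltonianDerivation f)
    (mkₐ_hamiltonianDerivation_eq_zero f)

lemma curveDerivation_mk (g : R[X][X]) : curveDerivation f (AdjoinRoot.mk f g) =
    AdjoinRoot.mk f (derivative f * partialX g - partialX f * derivative g) := by
  rw [← hamiltonianDerivation_apply]
  exact Derivation.liftOfSurjective_apply (f := (AdjoinRoot.mkₐ f).restrictScalars R)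
    AdjoinRoot.mk_surjective (mkₐ_hamiltonianDerivation_eq_zero f) g

/-- The coordinate function `x` on the curve `f = 0`. The other one is `AdjoinRoot.root f`. -/
def coordX : AdjoinRoot f := AdjoinRoot.of f X

lemma coordX_eq_mk : coordX f = AdjoinRoot.mk f (C X) := rfl

lemma curveDerivation_coordX : curveDerivation f (coordX f) = AdjoinRoot.mk f (derivative f) := by
  have hX : partialX (C X : R[X][X]) = 1 := by
    ext j : 1
    rw [coeff_partialX, coeff_C, coeff_one]
    split_ifs <;> simp_all
  rw [coordX_eq_mk, curveDerivation_mk, hX, derivative_C, mul_one, mul_zero, sub_zero]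

/-- The `R`-rational points of the affine plane curve `f = 0`. -/
def CurvePoint := {P : R × R // f.evalEval P.1 P.2 = 0}

variable {f}

/-- Evaluation of functions on a curve at a point. -/
def CurvePoint.eval (P : CurvePoint f) : AdjoinRoot f →ₐ[R] R :=
  { AdjoinRoot.evalEval P.2 with
    commutes' := fun r => by
      have : algebraMap R (AdjoinRoot f) r = AdjoinRoot.mk f (C (C r)) := rfl
      change AdjoinRoot.evalEval P.2 _ = _
      rw [this, AdjoinRoot.evalEval_mk, evalEval_C, eval_C]
      rfl }

lemma CurvePoint.eval_mk (P : CurvePoint f) (g : R[X][X]) :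
    P.eval (AdjoinRoot.mk f g) = g.evalEval P.1.1 P.1.2 := AdjoinRoot.evalEval_mk P.2 g

lemma CurvePoint.eval_coordX (P : CurvePoint f) : P.eval (coordX f) = P.1.1 := by
  rw [coordX_eq_mk, eval_mk, evalEval_C, eval_X]

lemma CurvePoint.eval_root (P : CurvePoint f) : P.eval (AdjoinRoot.root f) = P.1.2 := by
  rw [← AdjoinRoot.mk_X, eval_mk, evalEval_X]

lemma CurvePoint.exists_eval_eq_zero_of_ne {P Q : CurvePoint f} (h : P ≠ Q) :
    ∃ g : AdjoinRoot f, Q.eval g = 0 ∧ P.eval g ≠ 0 := by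
  by_cases hx : P.1.1 = Q.1.1
  · have hy : P.1.2 ≠ Q.1.2 := fun hy => h (Subtype.ext (Prod.ext hx hy))
    exact ⟨AdjoinRoot.root f - algebraMap R _ Q.1.2, by simp [eval_root],
      by simpa [eval_root, sub_eq_zero] using hy⟩
  · exact ⟨coordX f - algebraMap R _ Q.1.1, by simp [eval_coordX],
      by simpa [eval_coordX, sub_eq_zero] using hx⟩

end CurveDerivation

section ZeroCount

variable {k : Type*} [Field k] {f : k[X][X]}

/-- The first `M` derivatives along the curve, at all points of `S`. -/
def jetMap (S : Finset (CurvePoint f)) (M : ℕ) : AdjoinRoot f →ₗ[k] (S × Fin M → k) :=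
  LinearMap.pi fun t => t.1.1.eval.toLinearMap ∘ₗ (curveDerivation f).toLinearMap ^ (t.2 : ℕ)

lemma jetMap_apply (S : Finset (CurvePoint f)) (M : ℕ) (a : AdjoinRoot f) (t : S × Fin M) :
    jetMap S M a t = t.1.1.eval ((curveDerivation f)^[t.2] a) := by
  simp [jetMap, Module.End.pow_apply]

variable {S : Finset (CurvePoint f)} {M : ℕ}

lemma exists_mem_vanishingIdeal_of_smooth
    (hM : M ≤ 1 ∨ ∀ P ∈ S, P.eval (AdjoinRoot.mk f (derivative f)) ≠ 0)
    (hfac : ∀ ν < M, (ν.factorial : k) ≠ 0) {P : CurvePoint f} (hP : P ∈ S) {ν : ℕ} (hν : ν < M) :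
    ∃ b : AdjoinRoot f,
      (∀ Q ∈ S, Q ≠ P → b ∈ vanishingIdeal (curveDerivation f) Q.eval M) ∧
      b ∈ vanishingIdeal (curveDerivation f) P.eval ν ∧
      P.eval ((curveDerivation f)^[ν] b) ≠ 0 := by
  classical
  have hsep : ∀ Q, ∃ g : AdjoinRoot f, Q ≠ P → Q.eval g = 0 ∧ P.eval g ≠ 0 := fun Q =>
    (eq_or_ne Q P).elim (fun h => ⟨0, fun h' => absurd h h'⟩) fun h =>
      (CurvePoint.exists_eval_eq_zero_of_ne h.symm).imp fun _ hg _ => hg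
  choose g hg using hsep
  set t : AdjoinRoot f := coordX f - algebraMap k _ P.1.1
  have ht : P.eval t = 0 := by simp [t, CurvePoint.eval_coordX]
  have htderiv : curveDerivation f t = AdjoinRoot.mk f (derivative f) := by
    rw [map_sub, Derivation.map_algebraMap, sub_zero, curveDerivation_coordX]
  refine ⟨t ^ ν * ∏ Q ∈ S.erase P, g Q ^ M, fun Q hQ hQP => ?_,
    Ideal.mul_mem_right _ _ (pow_mem_vanishingIdeal ht _), ?_⟩
  · rw [← Finset.mul_prod_erase _ _ (Finset.mem_erase.2 ⟨hQP, hQ⟩), mul_left_comm]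
    exact Ideal.mul_mem_right _ _ (pow_mem_vanishingIdeal (hg Q hQP).1 _)
  · rw [map_iterate_pow_mul ht, htderiv, map_prod]
    refine mul_ne_zero (mul_ne_zero (hfac ν hν) ?_) (Finset.prod_ne_zero_iff.2 fun Q hQ => ?_)
    · rcases hM with h | h
      · rw [Nat.lt_one_iff.1 (hν.trans_le h), pow_zero]
        exact one_ne_zero
      · exact pow_ne_zero _ (h P hP)
    · rw [map_pow]
      exact pow_ne_zero _ (hg Q (Finset.mem_erase.1 hQ).1).2

lemma jetMap_surjective (hM : M ≤ 1 ∨ ∀ P ∈ S, P.eval (AdjoinRoot.mk f (derivative f)) ≠ 0)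
    (hfac : ∀ ν < M, (ν.factorial : k) ≠ 0) : Function.Surjective (jetMap S M) := by
  classical
  rw [← LinearMap.range_eq_top]
  by_contra hne
  obtain ⟨φ, hφ, hle⟩ := Submodule.exists_le_ker_of_lt_top _ (lt_top_iff_ne_top.2 hne)
  obtain ⟨c, rfl⟩ := (dotProductEquiv k (S × Fin M)).surjective φ
  -- The test functions make the system of equations on `c` triangular.
  have hc : ∀ n, ∀ (P : S) (ν : Fin M), M ≤ ν + n → c (P, ν) = 0 := by
    intro n
    induction n with
    | zero => intro P ν h; omega
    | succ n ih =>
      intro P ν h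
      obtain ⟨b, hother, hlow, hP⟩ := exists_mem_vanishingIdeal_of_smooth hM hfac P.2 ν.2
      have hsum : ∑ t, c t * jetMap S M b t = 0 := hle ⟨b, rfl⟩
      rw [Finset.sum_eq_single (P, ν) ?_ (by simp), jetMap_apply] at hsum
      · exact (mul_eq_zero.1 hsum).resolve_right hP
      rintro ⟨Q, μ⟩ - hQμ
      rw [jetMap_apply]
      by_cases hQ : Q = P
      · subst hQ
        rcases lt_trichotomy (μ : ℕ) ν with hlt | heq | hgt
        · rw [hlow μ hlt, mul_zero]
        · exact absurd (by rw [Fin.ext heq]) hQμ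
        · rw [ih Q μ (by omega), zero_mul]
      · rw [hother Q.1 Q.2 (fun h => hQ (Subtype.ext h)) μ μ.2, mul_zero]
  refine hφ ?_
  rw [show c = 0 from funext fun t => hc M t.1 t.2 (by omega), map_zero]

lemma exists_map_curveDegreeLE_eq_top {ι : Type*} [Finite ι] (J : AdjoinRoot f →ₗ[k] (ι → k))
    (hJ : Function.Surjective J) (D : ℕ) : ∃ T, (curveDegreeLE f D T).map J = ⊤ := by
  classical
  have := Fintype.ofFinite ι
  choose a ha using fun t : ι => hJ (Pi.single t 1)
  choose τ hτ using fun t => exists_mem_curveDegreeLE D (a t)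
  refine ⟨Finset.univ.sup τ, eq_top_iff.2 fun v _ => ?_⟩
  rw [pi_eq_sum_univ' v]
  refine Submodule.sum_mem _ fun t _ => Submodule.smul_mem _ _ ⟨a t, ?_, ?_⟩
  · exact curveDegreeLE_mono (Finset.le_sup (Finset.mem_univ t)) (hτ t)
  · rw [ha]

/-- Multiplication by `q` maps the reduced functions of degree `≤ T₁` injectively into the kernel of
the jet map, while for large `T₁` the rank of the jet map on functions of degree
`≤ T₁ + T + D * d` is `M * #S`. -/
theorem IsMonicOfBidegree.mul_card_le_of_mem_vanishingIdeal {d D T : ℕ}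
    (hf : IsMonicOfBidegree f d D) (hirr : Irreducible f)
    (hM : M ≤ 1 ∨ ∀ P ∈ S, P.eval (AdjoinRoot.mk f (derivative f)) ≠ 0)
    (hfac : ∀ ν < M, (ν.factorial : k) ≠ 0) {q : AdjoinRoot f} (hq : q ∈ curveDegreeLE f D T)
    (hq0 : q ≠ 0) (hvan : ∀ P ∈ S, q ∈ vanishingIdeal (curveDerivation f) P.eval M) :
    M * S.card ≤ d * (T + D * d) := by
  have : IsDomain (AdjoinRoot f) := AdjoinRoot.isDomain_of_prime hirr.prime
  obtain ⟨T₁, hT₁⟩ := exists_map_curveDegreeLE_eq_top _ (jetMap_surjective hM hfac) D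
  set T₂ := T₁ + T + D * d with hT₂
  let W (T : ℕ) : Submodule k (AdjoinRoot f) := LinearMap.range (reducedMk f d T)
  let J : W T₂ →ₗ[k] (S × Fin M → k) := (jetMap S M).domRestrict (W T₂)
  have hJ : LinearMap.range J = ⊤ := by
    rw [LinearMap.range_domRestrict, eq_top_iff, ← hT₁]
    exact Submodule.map_mono ((curveDegreeLE_mono (by omega)).trans
      (hf.curveDegreeLE_le_range_reducedMk T₂))
  let μ : W T₁ →ₗ[k] W T₂ :=
    LinearMap.codRestrict _ ((LinearMap.mulLeft k q).domRestrict (W T₁)) fun a =>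
      hf.curveDegreeLE_le_range_reducedMk T₂ <| curveDegreeLE_mono (by omega)
        (mul_mem_curveDegreeLE hq (hf.range_reducedMk_le_curveDegreeLE T₁ a.2))
  have hμ : Function.Injective μ := fun a b hab =>
    Subtype.ext (mul_left_cancel₀ hq0 (congrArg Subtype.val hab))
  have hker : LinearMap.range μ ≤ LinearMap.ker J := by
    rintro _ ⟨a, rfl⟩
    refine LinearMap.mem_ker.2 (funext fun t => ?_)
    exact (jetMap_apply S M _ t).trans
      (Ideal.mul_mem_right a.1 _ (hvan t.1.1 t.1.2) t.2 t.2.2)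
  have hrank := LinearMap.finrank_range_add_finrank_ker J
  have hle := Submodule.finrank_mono hker
  rw [LinearMap.finrank_range_of_inj hμ, hf.finrank_range_reducedMk] at hle
  rw [hJ, finrank_top, hf.finrank_range_reducedMk, Module.finrank_fintype_fun_eq_card,
    Fintype.card_prod, Fintype.card_coe, Fintype.card_fin, mul_comm] at hrank
  have : d * (T₂ + 1) = d * (T₁ + 1) + d * (T + D * d) := by rw [hT₂]; ring
  omega

end ZeroCount

lemma dvd_algebraMap_norm {A B : Type*} [CommRing A] [CommRing B] [Algebra A B] [Module.Free A B]
    [Module.Finite A B] (b : B) : b ∣ algebraMap A B (Algebra.norm A b) := by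
  have hcayley := Algebra.aeval_self_charpoly_lmul (R := A) b
  rw [← divX_mul_X_add (LinearMap.charpoly _), map_add, map_mul, aeval_X, aeval_C] at hcayley
  have hdvd : b ∣ algebraMap A B ((Algebra.lmul A B b).charpoly.coeff 0) :=
    ⟨-aeval b (Algebra.lmul A B b).charpoly.divX, by linear_combination hcayley⟩
  rw [Algebra.norm_apply, LinearMap.det_eq_sign_charpoly_coeff, map_mul]
  exact hdvd.mul_left _

lemma prime_of_prime_map {A B : Type*} [CommRing A] [CommRing B] {φ : A →+* B}
    (hφ : Function.Injective φ) {f : A[X]} (hf : f.Monic) (hprime : Prime (f.map φ)) :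
    Prime f := by
  refine ⟨fun h => hprime.ne_zero (by rw [h, Polynomial.map_zero]),
    fun h => hprime.not_isUnit (h.map (mapRingHom φ)), fun a b hab => ?_⟩
  have hdvd := Polynomial.map_dvd φ hab
  rw [Polynomial.map_mul] at hdvd
  exact (hprime.dvd_or_dvd hdvd).imp (map_dvd_map φ hφ hf).1 (map_dvd_map φ hφ hf).1

lemma modByMonic_map_eq_sum {A B : Type*} [CommRing A] [CommRing B] {φ : A →+* B} {f : A[X]}
    (hf : f.Monic) (g : B[X]) :
    g %ₘ f.map φ = ∑ m ∈ g.support, C (g.coeff m) * (X ^ m %ₘ f).map φ := by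
  conv_lhs => rw [g.as_sum_support_C_mul_X_pow]
  change modByMonicHom _ _ = _
  rw [map_sum]
  refine Finset.sum_congr rfl fun m _ => ?_
  rw [← smul_eq_C_mul, map_smul, smul_eq_C_mul, map_modByMonic _ hf, Polynomial.map_pow, map_X]
  rfl

lemma eq_zero_of_sum_mul_X_pow_eq_zero {R : Type*} [Semiring R] {p N : ℕ} {a : ℕ → R[X]}
    (ha : ∀ s, (a s).natDegree < p) (hsum : ∑ s ∈ Finset.range N, a s * X ^ (p * s) = 0)
    {s : ℕ} (hs : s < N) : a s = 0 := by
  ext i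
  rw [coeff_zero]
  by_cases hi : i < p
  swap
  · exact coeff_eq_zero_of_natDegree_lt ((ha s).trans_le (not_lt.1 hi))
  have hcoeff := congrArg (fun P => P.coeff (i + p * s)) hsum
  simp only [finsetSum_coeff, coeff_zero] at hcoeff
  rwa [Finset.sum_eq_single_of_mem s (Finset.mem_range.2 hs), coeff_mul_X_pow] at hcoeff
  intro b _ hb
  rw [coeff_mul_X_pow']
  split_ifs with hle
  · refine coeff_eq_zero_of_natDegree_lt ((ha b).trans_le ?_)
    have hbs : b < s := by
      by_contra! hsb
      have := Nat.mul_le_mul_left p (hsb.lt_of_ne' hb)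
      lia
    have := Nat.mul_le_mul_left p hbs
    lia
  · rfl

section PolyCurveDegree

variable {R : Type*} [CommRing R] {f : R[X][X]} {d D E S T p : ℕ}

/-- The polynomials over the coordinate ring `R[X, Y] / (f)` all of whose coefficients have weighted
degree at most `T`. -/
def polyCurveDegreeLE (f : R[X][X]) (D T : ℕ) : Submodule R (AdjoinRoot f)[X] where
  carrier := {P | ∀ s, P.coeff s ∈ curveDegreeLE f D T}
  add_mem' hP hQ s := by rw [coeff_add]; exact add_mem (hP s) (hQ s)
  zero_mem' s := by rw [coeff_zero]; exact zero_mem _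
  smul_mem' c P hP s := by rw [coeff_smul]; exact Submodule.smul_mem _ c (hP s)

lemma mul_mem_polyCurveDegreeLE {P Q : (AdjoinRoot f)[X]} (hP : P ∈ polyCurveDegreeLE f D S)
    (hQ : Q ∈ polyCurveDegreeLE f D T) : P * Q ∈ polyCurveDegreeLE f D (S + T) := by
  intro s
  rw [coeff_mul]
  exact sum_mem fun t _ => mul_mem_curveDegreeLE (hP _) (hQ _)

lemma map_algebraMap_mem_polyCurveDegreeLE (g : R[X]) :
    g.map (algebraMap R (AdjoinRoot f)) ∈ polyCurveDegreeLE f D 0 := by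
  intro s
  rw [coeff_map, Algebra.algebraMap_eq_smul_one]
  exact Submodule.smul_mem _ _ one_mem_curveDegreeLE

lemma prod_mem_polyCurveDegreeLE {ι : Type*} (s : Finset ι) {P : ι → (AdjoinRoot f)[X]}
    (hP : ∀ i ∈ s, P i ∈ polyCurveDegreeLE f D T) :
    ∏ i ∈ s, P i ∈ polyCurveDegreeLE f D (s.card * T) := by
  classical
  induction s using Finset.induction_on with
  | empty => simpa using map_algebraMap_mem_polyCurveDegreeLE (f := f) (D := D) 1
  | insert a s ha ih =>
    rw [Finset.prod_insert ha, Finset.card_insert_of_notMem ha, add_mul, one_mul, add_comm]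
    exact mul_mem_polyCurveDegreeLE (hP a (s.mem_insert_self a))
      (ih fun i hi => hP i (Finset.mem_insert_of_mem hi))

lemma det_mem_polyCurveDegreeLE {ι : Type*} [Fintype ι] [DecidableEq ι]
    {M : Matrix ι ι (AdjoinRoot f)[X]} (hM : ∀ i j, M i j ∈ polyCurveDegreeLE f D T) :
    M.det ∈ polyCurveDegreeLE f D (Fintype.card ι * T) := by
  rw [Matrix.det_apply]
  refine sum_mem fun σ _ => ?_
  rw [Units.smul_def]
  exact zsmul_mem (prod_mem_polyCurveDegreeLE Finset.univ fun i _ => hM _ _) _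

/-- The equation of a curve over `R`, regarded as the equation of a curve over `A`. -/
abbrev baseChange (A : Type*) [CommRing A] [Algebra R A] (f : R[X][X]) : A[X][X] :=
  f.map (mapRingHom (algebraMap R A))

namespace IsMonicOfBidegree

lemma eq_zero_of_eval_coordX_pow_eq_zero [Nontrivial R] (hf : IsMonicOfBidegree f d D)
    (hEp : E < p) {P : (AdjoinRoot f)[X]} (hP : P ∈ polyCurveDegreeLE f D E)
    (hroot : P.eval (coordX f ^ p) = 0) : P = 0 := by
  choose v hv using fun s => hf.curveDegreeLE_le_range_reducedMk E (hP s)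
  simp only [reducedMk_apply] at hv
  set N := P.natDegree + 1
  set G : R[X][X] := ∑ s ∈ Finset.range N, ofCoeffs (v s) * C (X ^ (p * s)) with hG
  have hfG : f ∣ G := by
    rw [← AdjoinRoot.mk_eq_zero, ← hroot, eval_eq_sum_range, hG, map_sum]
    refine Finset.sum_congr rfl fun s _ => ?_
    rw [map_mul, hv, coordX_eq_mk, ← map_pow, ← map_pow, ← C_pow, ← C_pow, pow_mul]
  have hGdeg : G.natDegree ≤ d - 1 := natDegree_sum_le_of_forall_le _ _ fun s _ =>
    (natDegree_mul_C_le _ _).trans (Nat.le_sub_one_of_lt (natDegree_ofCoeffs_lt hf.pos (v s)))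
  have hG0 : G = 0 := by
    by_contra hne
    refine hf.monic.not_dvd_of_natDegree_lt hne ?_ hfG
    have := hf.pos
    rw [hf.natDegree_eq]
    omega
  ext s
  rw [coeff_zero]
  by_cases hs : s < N
  swap
  · exact coeff_eq_zero_of_natDegree_lt (by omega)
  have hzero : ofCoeffs (v s) = 0 := by
    ext j : 1
    rw [coeff_zero]
    refine eq_zero_of_sum_mul_X_pow_eq_zero (p := p) (a := fun s => (ofCoeffs (v s)).coeff j)
      (fun s => (natDegreeX_le_iff.1 (natDegreeX_ofCoeffs_le (v s)) j).trans_lt hEp) ?_ hs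
    simpa only [hG, finsetSum_coeff, coeff_mul_C, coeff_zero] using
      congrArg (fun Q => Q.coeff j) hG0
  rw [← hv s, hzero, map_zero]

lemma modByMonic_mem_polyCurveDegreeLE (hf : IsMonicOfBidegree f d D)
    {g : (AdjoinRoot f)[X][X]} (hg : ∀ m, g.coeff m ∈ polyCurveDegreeLE f D T) (i : ℕ) :
    (g %ₘ baseChange (AdjoinRoot f) f).coeff i ∈ polyCurveDegreeLE f D T := by
  rw [modByMonic_map_eq_sum hf.monic, finsetSum_coeff]
  refine sum_mem fun m _ => ?_
  rw [coeff_C_mul, coeff_map, coe_mapRingHom, ← add_zero T]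
  exact mul_mem_polyCurveDegreeLE (hg m) (map_algebraMap_mem_polyCurveDegreeLE _)

lemma norm_mem_polyCurveDegreeLE [Nontrivial (AdjoinRoot f)] (hf : IsMonicOfBidegree f d D)
    {g : (AdjoinRoot f)[X][X]} (hg : ∀ m, g.coeff m ∈ polyCurveDegreeLE f D T) :
    Algebra.norm (AdjoinRoot f)[X] (AdjoinRoot.mk (baseChange (AdjoinRoot f) f) g) ∈
      polyCurveDegreeLE f D (d * T) := by
  have hmonic : (baseChange (AdjoinRoot f) f).Monic := hf.monic.map _
  have hcard : Fintype.card (Fin (baseChange (AdjoinRoot f) f).natDegree) = d := by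
    rw [Fintype.card_fin, hf.monic.natDegree_map, hf.natDegree_eq]
  rw [Algebra.norm_eq_matrix_det (AdjoinRoot.powerBasisAux' hmonic), ← hcard]
  refine det_mem_polyCurveDegreeLE fun i j => ?_
  have hbasis : AdjoinRoot.powerBasisAux' hmonic j =
      AdjoinRoot.mk (baseChange (AdjoinRoot f) f) (X ^ (j : ℕ)) := by
    rw [map_pow, AdjoinRoot.mk_X]
    exact (AdjoinRoot.powerBasis' hmonic).basis_eq_pow j
  rw [Algebra.leftMulMatrix_eq_repr_mul, AdjoinRoot.powerBasisAux'_repr_apply_to_fun, hbasis,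
    ← map_mul, AdjoinRoot.modByMonicHom_mk]
  refine hf.modByMonic_mem_polyCurveDegreeLE (fun m => ?_) i
  rw [coeff_mul_X_pow']
  split_ifs
  · exact hg _
  · exact zero_mem _

theorem eq_zero_of_evalEval_pow_eq_zero [IsDomain (AdjoinRoot f)] (hf : IsMonicOfBidegree f d D)
    (hprime : Prime (baseChange (AdjoinRoot f) f))
    (hroot : (baseChange (AdjoinRoot f) f).evalEval (coordX f ^ p) (AdjoinRoot.root f ^ p) = 0)
    {g : (AdjoinRoot f)[X][X]} (hgd : g.natDegree < d)
    (hg : ∀ m, g.coeff m ∈ polyCurveDegreeLE f D T) (hTp : d * T < p)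
    (hgroot : g.evalEval (coordX f ^ p) (AdjoinRoot.root f ^ p) = 0) : g = 0 := by
  have hmonic : (baseChange (AdjoinRoot f) f).Monic := hf.monic.map _
  have := (algebraMap R (AdjoinRoot f)).domain_nontrivial
  have : IsDomain (AdjoinRoot (baseChange (AdjoinRoot f) f)) :=
    AdjoinRoot.isDomain_of_prime hprime
  have := hmonic.free_adjoinRoot
  have := hmonic.finite_adjoinRoot
  have hnorm : Algebra.norm (AdjoinRoot f)[X] (AdjoinRoot.mk (baseChange _ f) g) = 0 := by
    refine hf.eq_zero_of_eval_coordX_pow_eq_zero hTp (hf.norm_mem_polyCurveDegreeLE hg) ?_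
    have hdvd := map_dvd (AdjoinRoot.evalEval hroot)
      (dvd_algebraMap_norm (A := (AdjoinRoot f)[X]) (AdjoinRoot.mk (baseChange _ f) g))
    rw [AdjoinRoot.evalEval_mk, hgroot, zero_dvd_iff, AdjoinRoot.algebraMap_eq] at hdvd
    rwa [← evalEval_C (coordX f ^ p) (AdjoinRoot.root f ^ p), ← AdjoinRoot.evalEval_mk hroot]
  by_contra hne
  refine hmonic.not_dvd_of_natDegree_lt hne ?_ 
    (AdjoinRoot.mk_eq_zero.1 (Algebra.norm_eq_zero_iff.1 hnorm))
  rwa [hf.monic.natDegree_map, hf.natDegree_eq]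

end IsMonicOfBidegree

end PolyCurveDegree

section Derivation

variable {R A : Type*} [CommSemiring R] [CommSemiring A] [Algebra R A] (Δ : Derivation R A A)

lemma iterate_derivation_smul (ν : ℕ) (r : R) (a : A) : Δ^[ν] (r • a) = r • Δ^[ν] a :=
  Function.Commute.iterate_left (g := (r • ·)) (fun a => Δ.map_smul r a) ν a

lemma iterate_derivation_sum {ι : Type*} (ν : ℕ) (s : Finset ι) (a : ι → A) :
    Δ^[ν] (∑ i ∈ s, a i) = ∑ i ∈ s, Δ^[ν] (a i) := by
  simpa only [Module.End.coe_pow] using! map_sum ((Δ : A →ₗ[R] A) ^ ν) a s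

lemma iterate_derivation_mul_of_eq_zero {w : A} (hw : Δ w = 0) (ν : ℕ) (a : A) :
    Δ^[ν] (a * w) = Δ^[ν] a * w :=
  Function.Commute.iterate_left (g := (· * w))
    (fun a => by rw [Derivation.leibniz, hw, smul_zero, zero_add, smul_eq_mul, mul_comm]) ν a

lemma derivation_pow_mul_eq_zero {p : ℕ} (hp : (p : A) = 0) (a : A) (n : ℕ) :
    Δ (a ^ (p * n)) = 0 := by
  rw [pow_mul', Derivation.leibniz_pow, nsmul_eq_mul, hp, zero_mul]

end Derivation

lemma modByMonic_of_natDegree_le {R : Type*} [CommRing R] {G P : R[X]} (hG : G.Monic)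
    (hP : P.natDegree ≤ G.natDegree) : P %ₘ G = P - C (P.coeff G.natDegree) * G := by
  nontriviality R
  refine (div_modByMonic_unique (C (P.coeff G.natDegree)) _ hG ⟨by ring, ?_⟩).2
  rw [degree_eq_natDegree hG.ne_zero, degree_lt_iff_coeff_zero]
  intro m hm
  rw [coeff_sub, coeff_C_mul]
  rcases hm.eq_or_lt with rfl | hlt
  · rw [hG.coeff_natDegree, mul_one, sub_self]
  · rw [coeff_eq_zero_of_natDegree_lt hlt, coeff_eq_zero_of_natDegree_lt (hP.trans_lt hlt),
      mul_zero, sub_zero]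

section CurveDegree

variable {R : Type*} [CommRing R] {f : R[X][X]} {d D T : ℕ}

lemma coordX_mem_curveDegreeLE : coordX f ∈ curveDegreeLE f D 1 :=
  mk_mem_curveDegreeLE (C_mem_weightedDegreeLE natDegree_X_le)

lemma root_mem_curveDegreeLE : AdjoinRoot.root f ∈ curveDegreeLE f D D :=
  mk_mem_curveDegreeLE X_mem_weightedDegreeLE

lemma IsMonicOfBidegree.curveDerivation_mem_curveDegreeLE (hf : IsMonicOfBidegree f d D)
    {a : AdjoinRoot f} (ha : a ∈ curveDegreeLE f D T) :
    curveDerivation f a ∈ curveDegreeLE f D (T + D * d) := by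
  obtain ⟨g, hg, rfl⟩ := mem_curveDegreeLE.1 ha
  rw [curveDerivation_mk, add_comm]
  exact mk_mem_curveDegreeLE (sub_mem
    (mul_mem_weightedDegreeLE (derivative_mem_weightedDegreeLE hf.mem_weightedDegreeLE)
      (partialX_mem_weightedDegreeLE hg))
    (mul_mem_weightedDegreeLE (partialX_mem_weightedDegreeLE hf.mem_weightedDegreeLE)
      (derivative_mem_weightedDegreeLE hg)))

lemma IsMonicOfBidegree.iterate_curveDerivation_mem_curveDegreeLE (hf : IsMonicOfBidegree f d D)
    {a : AdjoinRoot f} (ha : a ∈ curveDegreeLE f D T) (ν : ℕ) :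
    (curveDerivation f)^[ν] a ∈ curveDegreeLE f D (T + ν * (D * d)) := by
  induction ν with
  | zero => simpa using ha
  | succ n ih =>
    rw [Function.iterate_succ_apply', Nat.succ_mul, ← add_assoc]
    exact hf.curveDerivation_mem_curveDegreeLE ih

lemma X_pow_modByMonic_mem_polyCurveDegreeLE {G : (AdjoinRoot f)[X]} (hG : G.Monic)
    (hGT : G ∈ polyCurveDegreeLE f D T) (hpos : 0 < G.natDegree) (m : ℕ) :
    X ^ m %ₘ G ∈ polyCurveDegreeLE f D (m * T) := by
  nontriviality (AdjoinRoot f)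
  induction m with
  | zero =>
    rw [pow_zero, zero_mul, (modByMonic_eq_self_iff hG).2
      (degree_one.trans_lt (natDegree_pos_iff_degree_pos.1 hpos))]
    simpa using map_algebraMap_mem_polyCurveDegreeLE (f := f) (D := D) 1
  | succ m ih =>
    have hX : X * (X ^ m %ₘ G) ∈ polyCurveDegreeLE f D (m * T) := by
      rintro (_ | s)
      · rw [coeff_X_mul_zero]; exact zero_mem _
      · rw [coeff_X_mul]; exact ih s
    have hmod : X ^ (m + 1) %ₘ G = X * (X ^ m %ₘ G) %ₘ G := by
      refine modByMonic_eq_of_dvd_sub hG ?_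
      rw [pow_succ', ← mul_sub]
      exact (dvd_sub_comm.1 (dvd_modByMonic_sub _ G)).mul_left X
    have hdeg : (X * (X ^ m %ₘ G)).natDegree ≤ G.natDegree := by
      have := natDegree_modByMonic_lt (X ^ m) hG (by rintro rfl; simp at hpos)
      have := natDegree_mul_le (p := X) (q := X ^ m %ₘ G)
      rw [natDegree_X] at this
      omega
    rw [hmod, modByMonic_of_natDegree_le hG hdeg]
    refine sub_mem (fun s => curveDegreeLE_mono (by lia) (hX s)) fun s => ?_
    rw [coeff_C_mul, Nat.succ_mul]
    exact mul_mem_curveDegreeLE (hX _) (hGT s)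

end CurveDegree

section Stepanov

variable {k : Type*} [Field k] {f : k[X][X]} {d D B I M p : ℕ}

variable (p) in
/-- The function `∑ t, c t * x ^ (p * t.2) * y ^ (p * t.1)` on a curve. -/
def frobeniusCombination (c : Fin d × Fin (B + 1) → AdjoinRoot f) : AdjoinRoot f :=
  (ofCoeffs c).evalEval (coordX f ^ p) (AdjoinRoot.root f ^ p)

lemma frobeniusCombination_eq_sum (c : Fin d × Fin (B + 1) → AdjoinRoot f) :
    frobeniusCombination p c =
      ∑ t, c t * coordX f ^ (p * t.2) * AdjoinRoot.root f ^ (p * t.1) := by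
  simp only [frobeniusCombination, ofCoeffs_apply, evalEval_finsetSum]
  refine Finset.sum_congr rfl fun t _ => ?_
  rw [evalEval, eval_monomial, ← C_pow, eval_mul, eval_C, eval_monomial, pow_mul, pow_mul]

/-- The `ν`-th derivative of `frobeniusCombination p c` with `x` substituted for `x ^ p` and a new
variable, reduced modulo `G`, for `y ^ p`; at a point satisfying `x ^ p = x` and `G(y ^ p) = 0`
neither operation changes its value. -/
def frobeniusRemainder (G : (AdjoinRoot f)[X]) (ν : ℕ) :
    (Fin d × Fin (B + 1) → AdjoinRoot f) →ₗ[k] (AdjoinRoot f)[X] where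
  toFun c := ∑ t, ((curveDerivation f)^[ν] (c t) * coordX f ^ (t.2 : ℕ)) • (X ^ (t.1 : ℕ) %ₘ G)
  map_add' c c' := by
    simp only [Pi.add_apply, iterate_map_add, add_mul, add_smul, Finset.sum_add_distrib]
  map_smul' r c := by
    simp only [Pi.smul_apply, iterate_derivation_smul, smul_mul_assoc, smul_assoc,
      ← Finset.smul_sum, RingHom.id_apply]

lemma frobeniusRemainder_apply (G : (AdjoinRoot f)[X]) (ν : ℕ)
    (c : Fin d × Fin (B + 1) → AdjoinRoot f) : frobeniusRemainder G ν c =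
      ∑ t, ((curveDerivation f)^[ν] (c t) * coordX f ^ (t.2 : ℕ)) • (X ^ (t.1 : ℕ) %ₘ G) :=
  rfl

lemma coeff_frobeniusRemainder_of_le {G : (AdjoinRoot f)[X]} (hG : G.Monic) {ν s : ℕ}
    (hs : G.natDegree ≤ s) (c : Fin d × Fin (B + 1) → AdjoinRoot f) :
    (frobeniusRemainder G ν c).coeff s = 0 := by
  nontriviality (AdjoinRoot f)
  rw [frobeniusRemainder_apply, finsetSum_coeff]
  refine Finset.sum_eq_zero fun t _ => ?_
  rw [coeff_smul, coeff_eq_zero_of_degree_lt ((degree_modByMonic_lt _ hG).trans_le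
    (degree_le_of_natDegree_le hs)), smul_zero]

lemma coeff_ofCoeffs_mem_polyCurveDegreeLE {T : ℕ} {c : Fin d × Fin (B + 1) → AdjoinRoot f}
    (hc : ∀ t, c t ∈ curveDegreeLE f D T) (m : ℕ) :
    (ofCoeffs c).coeff m ∈ polyCurveDegreeLE f D T := by
  rw [ofCoeffs_apply, finsetSum_coeff]
  refine sum_mem fun t _ l => ?_
  rw [coeff_monomial]
  split_ifs
  · rw [coeff_monomial]
    split_ifs
    exacts [hc t, zero_mem _]
  · exact zero_mem _

lemma IsMonicOfBidegree.frobeniusRemainder_mem_polyCurveDegreeLE (hf : IsMonicOfBidegree f d D)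
    {G : (AdjoinRoot f)[X]} (hG : G.Monic) (hGD : G ∈ polyCurveDegreeLE f D (D * d))
    (hpos : 0 < G.natDegree) {ν T : ℕ} (hν : ν < M) {c : Fin d × Fin (B + 1) → AdjoinRoot f}
    (hc : ∀ t, c t ∈ curveDegreeLE f D T) :
    frobeniusRemainder G ν c ∈ polyCurveDegreeLE f D (T + M * (D * d) + B + d * (D * d)) := by
  rw [frobeniusRemainder_apply]
  refine sum_mem fun t _ s => ?_
  rw [coeff_smul, smul_eq_mul]
  refine curveDegreeLE_mono ?_ (mul_mem_curveDegreeLE (mul_mem_curveDegreeLE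
    (hf.iterate_curveDerivation_mem_curveDegreeLE (hc t) ν)
    (pow_mem_curveDegreeLE coordX_mem_curveDegreeLE t.2))
    (X_pow_modByMonic_mem_polyCurveDegreeLE hG hGD hpos t.1 s))
  have hνM : ν * (D * d) ≤ M * (D * d) := Nat.mul_le_mul_right _ hν.le
  have htd : (t.1 : ℕ) * (D * d) ≤ d * (D * d) := Nat.mul_le_mul_right _ t.1.2.le
  have := t.2.2
  omega

lemma iterate_curveDerivation_frobeniusCombination [CharP k p]
    (c : Fin d × Fin (B + 1) → AdjoinRoot f) (ν : ℕ) :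
    (curveDerivation f)^[ν] (frobeniusCombination p c) =
      frobeniusCombination p fun t => (curveDerivation f)^[ν] (c t) := by
  have hp : (p : AdjoinRoot f) = 0 := by
    rw [← map_natCast (algebraMap k (AdjoinRoot f)), CharP.cast_eq_zero, map_zero]
  simp only [frobeniusCombination_eq_sum, iterate_derivation_sum,
    iterate_derivation_mul_of_eq_zero _ (derivation_pow_mul_eq_zero _ hp _ _)]

lemma CurvePoint.eval_iterate_frobeniusCombination [CharP k p] {P : CurvePoint f}
    (hP : P.1.1 ^ p = P.1.1) {G : (AdjoinRoot f)[X]}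
    (hGP : G.eval₂ (P.eval : AdjoinRoot f →+* k) (P.1.2 ^ p) = 0)
    (c : Fin d × Fin (B + 1) → AdjoinRoot f) (ν : ℕ) :
    P.eval ((curveDerivation f)^[ν] (frobeniusCombination p c)) =
      (frobeniusRemainder G ν c).eval₂ (P.eval : AdjoinRoot f →+* k) (P.1.2 ^ p) := by
  rw [iterate_curveDerivation_frobeniusCombination, frobeniusCombination_eq_sum,
    frobeniusRemainder_apply, eval₂_finsetSum, map_sum]
  refine Finset.sum_congr rfl fun t _ => ?_
  rw [eval₂_smul, eval₂_modByMonic_eq_self_of_root hGP, eval₂_X_pow]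
  simp only [map_mul, map_pow, eval_coordX, eval_root, pow_mul, hP, AlgHom.coe_toRingHom]

lemma frobeniusCombination_mem_curveDegreeLE {T : ℕ} {c : Fin d × Fin (B + 1) → AdjoinRoot f}
    (hc : ∀ t, c t ∈ curveDegreeLE f D T) :
    frobeniusCombination p c ∈ curveDegreeLE f D (T + p * B + p * (D * d)) := by
  rw [frobeniusCombination_eq_sum]
  refine sum_mem fun t _ => curveDegreeLE_mono ?_ (mul_mem_curveDegreeLE (mul_mem_curveDegreeLE
    (hc t) (pow_mem_curveDegreeLE coordX_mem_curveDegreeLE _))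
    (pow_mem_curveDegreeLE root_mem_curveDegreeLE _))
  have hB := Nat.mul_le_mul_left p (Nat.lt_succ_iff.1 t.2.2)
  have hd := Nat.mul_le_mul_left (p * D) t.1.2.le
  lia

namespace IsMonicOfBidegree

variable (hf : IsMonicOfBidegree f d D)
include hf

lemma exists_ne_zero_frobeniusRemainder_eq_zero {G : (AdjoinRoot f)[X]} (hG : G.Monic)
    (hGD : G ∈ polyCurveDegreeLE f D (D * d)) (hpos : 0 < G.natDegree)
    (hcount : M * G.natDegree * (d * (I + D * d + M * (D * d) + B + d * (D * d) + 1)) <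
      d * (B + 1) * (d * (I + 1))) :
    ∃ c : Fin d × Fin (B + 1) → AdjoinRoot f, c ≠ 0 ∧ (∀ t, c t ∈ curveDegreeLE f D (I + D * d)) ∧
      ∀ ν < M, frobeniusRemainder G ν c = 0 := by
  set T := I + D * d + M * (D * d) + B + d * (D * d)
  let V := LinearMap.range (reducedMk f d I)
  let W := LinearMap.range (reducedMk f d T)
  have hV (v : Fin d × Fin (B + 1) → V) (t) :
      (v t : AdjoinRoot f) ∈ curveDegreeLE f D (I + D * d) :=
    hf.range_reducedMk_le_curveDegreeLE I (v t).2
  let L : (Fin d × Fin (B + 1) → V) →ₗ[k] (Fin M × Fin G.natDegree → W) :=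
    LinearMap.pi fun s => LinearMap.codRestrict W
      ((lcoeff (AdjoinRoot f) s.2).restrictScalars k ∘ₗ frobeniusRemainder G s.1 ∘ₗ
        V.subtype.compLeft _)
      fun v => hf.curveDegreeLE_le_range_reducedMk T
        (hf.frobeniusRemainder_mem_polyCurveDegreeLE hG hGD hpos s.1.2 (hV v) s.2)
  have hker : LinearMap.ker L ≠ ⊥ := by
    apply LinearMap.ker_ne_bot_of_finrank_lt
    simp only [Module.finrank_pi_fintype, V, W, hf.finrank_range_reducedMk, Finset.sum_const,
      Finset.card_univ, Fintype.card_prod, Fintype.card_fin, smul_eq_mul]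
    exact hcount
  obtain ⟨v, hv, hv0⟩ := (Submodule.ne_bot_iff _).1 hker
  refine ⟨fun t => v t, fun h => hv0 ?_, hV v, fun ν hν => ?_⟩
  · funext t
    exact Subtype.ext (congrFun h t)
  · ext s
    by_cases hs : s < G.natDegree
    · exact congrArg Subtype.val (congrFun (LinearMap.mem_ker.1 hv) (⟨ν, hν⟩, ⟨s, hs⟩))
    · rw [coeff_frobeniusRemainder_of_le hG (not_lt.1 hs), coeff_zero]

lemma frobeniusCombination_ne_zero [IsDomain (AdjoinRoot f)]
    (hprime : Prime (baseChange (AdjoinRoot f) f))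
    (hroot : (baseChange (AdjoinRoot f) f).evalEval (coordX f ^ p) (AdjoinRoot.root f ^ p) = 0)
    {T : ℕ} (hTp : d * T < p) {c : Fin d × Fin (B + 1) → AdjoinRoot f}
    (hc : ∀ t, c t ∈ curveDegreeLE f D T) (hc0 : c ≠ 0) : frobeniusCombination p c ≠ 0 := by
  contrapose! hc0
  have hzero := hf.eq_zero_of_evalEval_pow_eq_zero hprime hroot (natDegree_ofCoeffs_lt hf.pos c)
    (coeff_ofCoeffs_mem_polyCurveDegreeLE hc) hTp hc0
  funext t
  rw [← coeff_coeff_ofCoeffs c t, hzero, coeff_zero, coeff_zero, Pi.zero_apply]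

theorem mul_card_le_of_frobenius [CharP k p] (hp : p.Prime) (hirr : Irreducible f)
    (hprime : Prime (baseChange (AdjoinRoot f) f))
    (hroot : (baseChange (AdjoinRoot f) f).evalEval (coordX f ^ p) (AdjoinRoot.root f ^ p) = 0)
    {G : (AdjoinRoot f)[X]} (hG : G.Monic) (hGD : G ∈ polyCurveDegreeLE f D (D * d))
    (hpos : 0 < G.natDegree) {S : Finset (CurvePoint f)} (hSx : ∀ P ∈ S, P.1.1 ^ p = P.1.1)
    (hS : ∀ P ∈ S, P.eval (AdjoinRoot.mk f (derivative f)) ≠ 0)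
    (hSG : ∀ P ∈ S, G.eval₂ (P.eval : AdjoinRoot f →+* k) (P.1.2 ^ p) = 0)
    (hM : M ≤ p) (hI : d * (I + D * d) < p)
    (hcount : M * G.natDegree * (d * (I + D * d + M * (D * d) + B + d * (D * d) + 1)) <
      d * (B + 1) * (d * (I + 1))) :
    M * S.card ≤ d * (I + D * d + p * B + p * (D * d) + D * d) := by
  have hdom : IsDomain (AdjoinRoot f) := AdjoinRoot.isDomain_of_prime hirr.prime
  obtain ⟨c, hc0, hcT, hrem⟩ := hf.exists_ne_zero_frobeniusRemainder_eq_zero hG hGD hpos hcount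
  refine hf.mul_card_le_of_mem_vanishingIdeal hirr (Or.inr hS) (fun ν hν h0 => ?_)
    (frobeniusCombination_mem_curveDegreeLE hcT)
    (hf.frobeniusCombination_ne_zero hprime hroot hI hcT hc0) fun P hP ν hν => ?_
  · rw [CharP.cast_eq_zero_iff k p, hp.dvd_factorial] at h0
    omega
  · rw [CurvePoint.eval_iterate_frobeniusCombination (hSx P hP) (hSG P hP), hrem ν hν, eval₂_zero]

end IsMonicOfBidegree

end Stepanov

section StepanovBound

/-- A bound on the primes `p` for which Stepanov's method does not apply to a curve of degree `d`
in `Y`, with `Q` the product of its degrees in `X` and `Y`. -/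
def stepanovThreshold (d Q : ℕ) : ℕ := (2 * d * (Q + 2) + Q + d * Q) ^ 2

/-- The coefficient of `√p` in the point count by Stepanov's method on a curve of degree `d`
in `Y`, with `Q` the product of its degrees in `X` and `Y`. -/
def stepanovConstant (d Q : ℕ) : ℕ := 3 * (1 + 2 * d ^ 2 * (Q + 2) + 2 * d * Q)

lemma lt_of_stepanovThreshold_le {d Q p : ℕ} (hd : 1 ≤ d) (hp : stepanovThreshold d Q ≤ p) :
    d < p := by
  have : d < (2 * d * (Q + 2) + Q + d * Q) ^ 2 := by nlinarith [Nat.zero_le (d * Q)]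
  exact this.trans_le hp

lemma stepanov_unknowns_gt_equations {d Q e p I M : ℕ} (hd : 1 ≤ d) (hed : e ≤ d)
    (hMp : M * M ≤ p) (hM : 2 * d * (Q + 2) + Q + d * Q ≤ M) (hI : p ≤ 2 * (d * (I + 1))) :
    M * e * (d * (I + Q + M * Q + (M * e / d + 2 * d * (Q + 2)) + d * Q + 1)) <
      d * (M * e / d + 2 * d * (Q + 2) + 1) * (d * (I + 1)) := by
  set b := 2 * d * (Q + 2) with hb
  set B := M * e / d + b with hB
  have hBlow : M * e + d * b < d * (B + 1) := by
    have : M * e < d * (M * e / d + 1) := Nat.lt_mul_div_succ (M * e) hd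
    have : d * (B + 1) = d * (M * e / d + 1) + d * b := by rw [hB]; ring
    omega
  have hBhigh : B ≤ M + b :=
    Nat.add_le_add_right (Nat.div_le_of_le_mul (mul_comm d M ▸ Nat.mul_le_mul_left _ hed)) _
  have hlower : M * e * (Q + M * Q + B + d * Q) ≤ d * b * (I + 1) := by
    calc M * e * (Q + M * Q + B + d * Q)
        ≤ M * d * (Q + M * Q + (M + b) + d * Q) := by gcongr
      _ = M * d * (M * Q + M + (b + Q + d * Q)) := by ring
      _ ≤ M * d * (M * Q + M + M) := by gcongr
      _ = M * M * (d * (Q + 2)) := by ring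
      _ ≤ p * (d * (Q + 2)) := by gcongr
      _ ≤ 2 * (d * (I + 1)) * (d * (Q + 2)) := by gcongr
      _ = d * b * (I + 1) := by rw [hb]; ring
  calc M * e * (d * (I + Q + M * Q + B + d * Q + 1))
      = d * (M * e * (I + 1) + M * e * (Q + M * Q + B + d * Q)) := by ring
    _ ≤ d * (M * e * (I + 1) + d * b * (I + 1)) := by gcongr
    _ = (M * e + d * b) * (d * (I + 1)) := by ring
    _ < d * (B + 1) * (d * (I + 1)) := by gcongr

lemma stepanov_degree_le {d Q e p I M : ℕ} (hp : 1 ≤ p) (hpM : p ≤ 3 * (M * M))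
    (hI : d * (I + Q) ≤ p) :
    d * (I + Q + p * (M * e / d + 2 * d * (Q + 2)) + p * Q + Q) ≤
      M * (e * p + stepanovConstant d Q * M) := by
  have hdiv : d * (M * e / d) ≤ M * e := Nat.mul_div_le _ _
  calc d * (I + Q + p * (M * e / d + 2 * d * (Q + 2)) + p * Q + Q)
      = d * (I + Q) + p * (d * (M * e / d)) + p * (2 * d ^ 2 * (Q + 2)) + d * (p * Q) +
          d * (1 * Q) := by ring
    _ ≤ p + p * (M * e) + p * (2 * d ^ 2 * (Q + 2)) + d * (p * Q) + d * (p * Q) := by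
        gcongr
    _ = M * (e * p) + p * (1 + 2 * d ^ 2 * (Q + 2) + 2 * d * Q) := by ring
    _ ≤ M * (e * p) + 3 * (M * M) * (1 + 2 * d ^ 2 * (Q + 2) + 2 * d * Q) := by gcongr
    _ = M * (e * p + stepanovConstant d Q * M) := by rw [stepanovConstant]; ring

lemma exists_stepanov_parameters {d Q e p : ℕ} (hd : 1 ≤ d) (hed : e ≤ d)
    (hp : stepanovThreshold d Q ≤ p) :
    ∃ I M B : ℕ, M ≤ p ∧ d * (I + Q) < p ∧
      M * e * (d * (I + Q + M * Q + B + d * Q + 1)) < d * (B + 1) * (d * (I + 1)) ∧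
      ∀ s : ℕ, M * s ≤ d * (I + Q + p * B + p * Q + Q) →
        s ≤ e * p + stepanovConstant d Q * Nat.sqrt p := by
  set M := Nat.sqrt p
  have hM : 2 * d * (Q + 2) + Q + d * Q ≤ M := Nat.le_sqrt'.2 hp
  have hMp : M ≤ p := Nat.sqrt_le_self p
  have hMM : M * M ≤ p := Nat.sqrt_le p
  have hexpand : 2 * d * (Q + 2) = 2 * (d * Q) + 4 * d := by ring
  have hpM : p ≤ 3 * (M * M) := by
    have : p < (M + 1) * (M + 1) := Nat.lt_succ_sqrt p
    have : M ≤ M * M := Nat.le_mul_self M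
    lia
  have hQ : Q ≤ (p - 1) / d := by
    rw [Nat.le_div_iff_mul_le hd, mul_comm]
    omega
  obtain ⟨I, hI⟩ : ∃ I, I + Q = (p - 1) / d := ⟨_, Nat.sub_add_cancel hQ⟩
  have hIle : d * (I + Q) ≤ p - 1 := hI ▸ Nat.mul_div_le _ _
  have hIge : p - 1 < d * (I + Q + 1) := hI ▸ Nat.lt_mul_div_succ (p - 1) hd
  have hI2 : p ≤ 2 * (d * (I + 1)) := by
    have : d * (I + Q + 1) = d * (I + 1) + d * Q := by ring
    omega
  exact ⟨I, M, M * e / d + 2 * d * (Q + 2), hMp, by omega,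
    stepanov_unknowns_gt_equations hd hed hMM hM hI2, fun s hs =>
      Nat.le_of_mul_le_mul_left (hs.trans (stepanov_degree_le (by omega) hpM (by omega)))
        (by omega)⟩

variable {k : Type*} [Field k] {f : k[X][X]} {d D p : ℕ}

theorem IsMonicOfBidegree.card_le_of_frobenius (hf : IsMonicOfBidegree f d D) [CharP k p]
    (hp : p.Prime) (hirr : Irreducible f) (hprime : Prime (baseChange (AdjoinRoot f) f))
    (hroot : (baseChange (AdjoinRoot f) f).evalEval (coordX f ^ p) (AdjoinRoot.root f ^ p) = 0)
    (hpd : stepanovThreshold d (D * d) ≤ p) {G : (AdjoinRoot f)[X]} (hG : G.Monic)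
    (hGD : G ∈ polyCurveDegreeLE f D (D * d)) (hpos : 0 < G.natDegree) (hGd : G.natDegree ≤ d)
    {S : Finset (CurvePoint f)} (hSx : ∀ P ∈ S, P.1.1 ^ p = P.1.1)
    (hS : ∀ P ∈ S, P.eval (AdjoinRoot.mk f (derivative f)) ≠ 0)
    (hSG : ∀ P ∈ S, G.eval₂ (P.eval : AdjoinRoot f →+* k) (P.1.2 ^ p) = 0) :
    S.card ≤ G.natDegree * p + stepanovConstant d (D * d) * Nat.sqrt p := by
  obtain ⟨I, M, B, hM, hI, hcount, hfinal⟩ := exists_stepanov_parameters hf.pos hGd hpd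
  exact hfinal _
    (hf.mul_card_le_of_frobenius hp hirr hprime hroot hG hGD hpos hSx hS hSG hM hI hcount)

lemma IsMonicOfBidegree.card_singular_le (hf : IsMonicOfBidegree f d D) (hirr : Irreducible f)
    (hder : derivative f ≠ 0) {S : Finset (CurvePoint f)}
    (hS : ∀ P ∈ S, P.eval (AdjoinRoot.mk f (derivative f)) = 0) :
    S.card ≤ d * (D * d + D * d) := by
  have hmk : AdjoinRoot.mk f (derivative f) ≠ 0 := by
    rw [Ne, AdjoinRoot.mk_eq_zero]
    exact fun h => (natDegree_derivative_lt (hf.natDegree_eq ▸ hf.pos.ne')).not_ge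
      (natDegree_le_of_dvd h hder)
  simpa only [one_mul] using hf.mul_card_le_of_mem_vanishingIdeal hirr (M := 1) (Or.inl le_rfl)
    (fun ν hν => by simp [Nat.lt_one_iff.1 hν])
    (mk_mem_curveDegreeLE (derivative_mem_weightedDegreeLE hf.mem_weightedDegreeLE)) hmk
    fun P hP => mem_vanishingIdeal.2 fun ν hν => by rw [Nat.lt_one_iff.1 hν]; exact hS P hP

end StepanovBound

section ConjugateFactor

variable {R : Type*} [CommRing R] (f : R[X][X])

/-- The polynomial `f(x, T) / (T - y)` in `T` over the coordinate ring of the curve `f(x, y) = 0`;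
its roots are the conjugates of `y`. -/
def conjugateFactor : (AdjoinRoot f)[X] := f.map (AdjoinRoot.of f) /ₘ (X - C (AdjoinRoot.root f))

lemma mul_conjugateFactor :
    (X - C (AdjoinRoot.root f)) * conjugateFactor f = f.map (AdjoinRoot.of f) :=
  mul_divByMonic_eq_iff_isRoot.2 (AdjoinRoot.isRoot_root f)

variable {f}

lemma CurvePoint.mul_eval₂_conjugateFactor (P : CurvePoint f) (t : R) :
    (t - P.1.2) * (conjugateFactor f).eval₂ (P.eval : AdjoinRoot f →+* R) t =
      f.evalEval P.1.1 t := by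
  have hcomp : (P.eval : AdjoinRoot f →+* R).comp (AdjoinRoot.of f) = evalRingHom P.1.1 := by
    refine Polynomial.ringHom_ext (fun a => ?_) ?_
    · exact (P.eval.commutes a).trans (eval_C).symm
    · exact P.eval_coordX.trans eval_X.symm
  have h := congrArg (eval₂ (P.eval : AdjoinRoot f →+* R) t) (mul_conjugateFactor f)
  rwa [eval₂_mul, eval₂_sub, eval₂_X, eval₂_C, eval₂_map, hcomp, eval₂_evalRingHom,
    AlgHom.coe_toRingHom, P.eval_root] at h

variable {d D : ℕ}

lemma X_sub_C_root_mem_polyCurveDegreeLE :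
    X - C (AdjoinRoot.root f) ∈ polyCurveDegreeLE f D D := fun s => by
  rw [coeff_sub, coeff_X, coeff_C]
  refine Submodule.sub_mem _ ?_ ?_ <;> split_ifs
  · exact one_mem_curveDegreeLE
  · exact Submodule.zero_mem _
  · exact root_mem_curveDegreeLE
  · exact Submodule.zero_mem _

lemma conjugateFactor_monic (hf : f.Monic) : (conjugateFactor f).Monic :=
  (monic_X_sub_C _).of_mul_monic_left (mul_conjugateFactor f ▸ hf.map _)

lemma natDegree_conjugateFactor [Nontrivial (AdjoinRoot f)] (hf : f.Monic) :
    (conjugateFactor f).natDegree = f.natDegree - 1 := by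
  rw [conjugateFactor, natDegree_divByMonic _ (monic_X_sub_C _), natDegree_X_sub_C,
    hf.natDegree_map]

lemma IsMonicOfBidegree.conjugateFactor_mem_polyCurveDegreeLE (hf : IsMonicOfBidegree f d D) :
    conjugateFactor f ∈ polyCurveDegreeLE f D (D * d) := fun s => by
  rw [conjugateFactor, coeff_divByMonic_X_sub_C]
  refine Submodule.sum_mem _ fun i hi => ?_
  have hid : i ≤ d := (Finset.mem_Icc.1 hi).2.trans (natDegree_map_le.trans hf.natDegree_eq.le)
  have hcoeff : (f.map (AdjoinRoot.of f)).coeff i ∈ curveDegreeLE f D D := by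
    rw [coeff_map]
    exact mk_mem_curveDegreeLE
      (C_mem_weightedDegreeLE ((natDegreeX_le_iff.1 hf.natDegreeX_le) i))
  refine curveDegreeLE_mono ?_
    (mul_mem_curveDegreeLE (pow_mem_curveDegreeLE root_mem_curveDegreeLE _) hcoeff)
  calc (i - (s + 1)) * D + D = (i - (s + 1) + 1) * D := by ring
    _ ≤ D * d := by
      rw [mul_comm D]
      gcongr
      have := (Finset.mem_Icc.1 hi).1
      omega

end ConjugateFactor

section WeilBound

universe u

/-- A plane curve over `F` remains irreducible over every extension field of `F`. -/
def IsGeometricallyIrreducible {F : Type u} [Field F] (f : F[X][X]) : Prop :=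
  ∀ (κ : Type u) [Field κ] (φ : F →+* κ), Irreducible (f.map (mapRingHom φ))

lemma baseChange_baseChange {R A B : Type*} [CommRing R] [CommRing A] [CommRing B] [Algebra R A]
    [Algebra A B] [Algebra R B] [IsScalarTower R A B] (f : R[X][X]) :
    baseChange B (baseChange A f) = baseChange B f := by
  rw [baseChange, baseChange, Polynomial.map_map, mapRingHom_comp, ← IsScalarTower.algebraMap_eq]

lemma evalEval_baseChange_coordX_root {R : Type*} [CommRing R] (f : R[X][X]) :
    (baseChange (AdjoinRoot f) f).evalEval (coordX f) (AdjoinRoot.root f) = 0 := by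
  have hcomp : (evalRingHom (coordX f)).comp (mapRingHom (algebraMap R (AdjoinRoot f))) =
      AdjoinRoot.of f := by
    refine Polynomial.ringHom_ext (fun a => ?_) ?_
    · simp; rfl
    · simp [coordX]
  rw [← eval₂_evalRingHom, baseChange, eval₂_map, hcomp, AdjoinRoot.eval₂_root]

lemma IsMonicOfBidegree.baseChange {R A : Type*} [CommRing R] [CommRing A] [Algebra R A]
    [Nontrivial A] {f : R[X][X]} {d D : ℕ} (hf : IsMonicOfBidegree f d D) :
    IsMonicOfBidegree (baseChange A f) d D where
  monic := hf.monic.map _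
  natDegree_eq := (hf.monic.natDegree_map _).trans hf.natDegree_eq
  pos := hf.pos
  natDegreeX_le := natDegreeX_le_iff.2 fun j => by
    rw [coeff_map]
    exact natDegree_map_le.trans (natDegreeX_le_iff.1 hf.natDegreeX_le j)

lemma IsGeometricallyIrreducible.prime_baseChange {F k : Type u} [Field F] [Field k] [Algebra F k]
    {f : F[X][X]} (hf : IsGeometricallyIrreducible f) (hmonic : f.Monic) :
    Prime (baseChange (AdjoinRoot (baseChange k f)) (baseChange k f)) := by
  have : IsDomain (AdjoinRoot (baseChange k f)) :=
    AdjoinRoot.isDomain_of_prime (hf k (algebraMap F k)).prime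
  let K := FractionRing (AdjoinRoot (baseChange k f))
  have hinj := IsFractionRing.injective (AdjoinRoot (baseChange k f)) K
  refine prime_of_prime_map (φ := mapRingHom (algebraMap _ K)) (map_injective _ hinj)
    ((hmonic.map _).map _) ?_
  rw [Polynomial.map_map, mapRingHom_comp, Polynomial.map_map, mapRingHom_comp]
  exact (hf K _).prime

variable {p : ℕ} [Fact p.Prime]

lemma evalEval_baseChange_pow {A : Type*} [CommRing A] [Algebra (ZMod p) A] [CharP A p]
    (f : (ZMod p)[X][X]) (x y : A) :
    (baseChange A f).evalEval (x ^ p) (y ^ p) = (baseChange A f).evalEval x y ^ p := by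
  have h := map_mapRingHom_evalEval (frobenius A p) (baseChange A f) x y
  rw [baseChange, Polynomial.map_map, mapRingHom_comp,
    Subsingleton.elim ((frobenius A p).comp _) (algebraMap (ZMod p) A)] at h
  exact h

lemma exists_algebraMap_zmod_eq_iff {k : Type*} [Field k] [Algebra (ZMod p) k] [CharP k p]
    {x : k} : (∃ a : ZMod p, algebraMap (ZMod p) k a = x) ↔ x ^ p = x := by
  rw [← Subfield.mem_bot_iff_pow_eq_self, ← ZMod.fieldRange_castHom_eq_bot p,
    Subsingleton.elim (ZMod.castHom _ k) (algebraMap (ZMod p) k), RingHom.mem_fieldRange]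

open Classical in
/-- The points of the curve `f = 0` with first coordinate `x`. -/
def CurvePoint.fibre {k : Type*} [Field k] (f : k[X][X]) (x : k) : Finset (CurvePoint f) :=
  (({x} : Finset k) ×ˢ (f.map (evalRingHom x)).roots.toFinset).subtype _

section Fibre

variable {k : Type*} [Field k] {f : k[X][X]}

lemma CurvePoint.mem_fibre (hf : f.Monic) {x : k} {P : CurvePoint f} :
    P ∈ fibre f x ↔ P.1.1 = x := by
  classical
  refine Finset.mem_subtype.trans ?_
  rw [Finset.mem_product, Finset.mem_singleton, Multiset.mem_toFinset,
    mem_roots (hf.map _).ne_zero, IsRoot, eval_map, eval₂_evalRingHom]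
  exact and_iff_left_of_imp fun h => h ▸ P.2

lemma CurvePoint.card_fibre (hf : f.Monic) (x : k) [DecidableEq k] :
    (fibre f x).card = (f.map (evalRingHom x)).roots.toFinset.card := by
  refine Finset.card_bij (fun P _ => P.1.2) (fun P hP => ?_) (fun P hP Q hQ h => ?_)
    fun y hy => ?_
  · rw [Multiset.mem_toFinset, mem_roots (hf.map _).ne_zero, IsRoot, eval_map, eval₂_evalRingHom,
      ← (mem_fibre hf).1 hP]
    exact P.2
  · exact Subtype.ext (Prod.ext (((mem_fibre hf).1 hP).trans ((mem_fibre hf).1 hQ).symm) h)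
  · rw [Multiset.mem_toFinset, mem_roots (hf.map _).ne_zero, IsRoot, eval_map,
      eval₂_evalRingHom] at hy
    exact ⟨⟨(x, y), hy⟩, (mem_fibre hf).2 rfl, rfl⟩

open Classical in
lemma CurvePoint.natDegree_le_card_fibre_add [IsAlgClosed k] (hf : f.Monic) (x : k) :
    f.natDegree ≤ (fibre f x).card +
      f.natDegree * {P ∈ fibre f x | P.eval (AdjoinRoot.mk f (derivative f)) = 0}.card := by
  by_cases hsing : {P ∈ fibre f x | P.eval (AdjoinRoot.mk f (derivative f)) = 0} = ∅
  · have hsep : (f.map (evalRingHom x)).Separable := by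
      refine (isCoprime_iff_aeval_ne_zero_of_isAlgClosed k k _ _).2 fun y => ?_
      rw [derivative_map, coe_aeval_eq_eval, eval_map, eval_map, eval₂_evalRingHom,
        or_iff_not_imp_left, not_not]
      intro hy hy'
      have hP := Finset.filter_eq_empty_iff.1 hsing (x := ⟨(x, y), hy⟩) ((mem_fibre hf).2 rfl)
      exact hP ((eval_mk _ _).trans hy')
    rw [card_fibre hf, Multiset.toFinset_card_of_nodup (nodup_roots hsep),
      ← (IsAlgClosed.splits _).natDegree_eq_card_roots, hf.natDegree_map]
    exact Nat.le_add_right _ _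
  · exact (Nat.le_mul_of_pos_right _
      (Finset.card_pos.2 (Finset.nonempty_iff_ne_empty.2 hsing))).trans (Nat.le_add_left _ _)

end Fibre

lemma IsMonicOfBidegree.card_singular_le_of_stepanovThreshold_le {p : ℕ} {k : Type*} [Field k]
    [CharP k p] {f : k[X][X]} {d D : ℕ} (hf : IsMonicOfBidegree f d D) (hirr : Irreducible f)
    (hp : stepanovThreshold d (D * d) ≤ p) {S : Finset (CurvePoint f)}
    (hS : ∀ P ∈ S, P.eval (AdjoinRoot.mk f (derivative f)) = 0) :
    S.card ≤ d * (D * d + D * d) := by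
  refine hf.card_singular_le hirr
    (derivative_ne_zero_of_monic hf.monic (hf.natDegree_eq ▸ hf.pos) ?_) hS
  rw [hf.natDegree_eq, Ne, CharP.cast_eq_zero_iff k p]
  exact Nat.not_dvd_of_pos_of_lt hf.pos (lt_of_stepanovThreshold_le hf.pos hp)

section Count

variable {k : Type} [Field k] [Algebra (ZMod p) k] {f : (ZMod p)[X][X]} {d D : ℕ}

open Classical in
variable (p) in
/-- The points of the curve `f = 0` over `k` whose first coordinate lies in the prime field. -/
def primeFieldPoints (f : k[X][X]) : Finset (CurvePoint f) :=
  Finset.univ.biUnion fun a : ZMod p => CurvePoint.fibre f (algebraMap (ZMod p) k a)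

lemma mem_primeFieldPoints [CharP k p] {f : k[X][X]} (hf : f.Monic) {P : CurvePoint f} :
    P ∈ primeFieldPoints p f ↔ P.1.1 ^ p = P.1.1 := by
  simp only [primeFieldPoints, Finset.mem_biUnion, Finset.mem_univ, true_and,
    CurvePoint.mem_fibre hf, ← exists_algebraMap_zmod_eq_iff (p := p), @eq_comm k P.1.1]

open Classical in
lemma natDegree_mul_le_card_primeFieldPoints_add [IsAlgClosed k] {f : k[X][X]} (hf : f.Monic) :
    f.natDegree * p ≤ (primeFieldPoints p f).card + f.natDegree *
      {P ∈ primeFieldPoints p f | P.eval (AdjoinRoot.mk f (derivative f)) = 0}.card := by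
  have hdisj : (Set.univ : Set (ZMod p)).PairwiseDisjoint
      fun a => CurvePoint.fibre f (algebraMap (ZMod p) k a) := fun a _ b _ hab =>
    Finset.disjoint_left.2 fun P ha hb => hab <| (algebraMap (ZMod p) k).injective <|
      ((CurvePoint.mem_fibre hf).1 ha).symm.trans ((CurvePoint.mem_fibre hf).1 hb)
  rw [← Finset.coe_univ] at hdisj
  rw [primeFieldPoints, Finset.filter_biUnion, Finset.card_biUnion hdisj,
    Finset.card_biUnion (hdisj.mono fun a => Finset.filter_subset _ _), Finset.mul_sum,
    ← Finset.sum_add_distrib]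
  calc f.natDegree * p = ∑ _a : ZMod p, f.natDegree := by
        rw [Finset.sum_const, Finset.card_univ, ZMod.card, smul_eq_mul, mul_comm]
    _ ≤ _ := Finset.sum_le_sum fun a _ => CurvePoint.natDegree_le_card_fibre_add hf _

open Classical in
lemma card_zmod_points_eq [CharP k p] (hf : f.Monic) :
    ({P : ZMod p × ZMod p | f.evalEval P.1 P.2 = 0} : Finset _).card =
      {P ∈ primeFieldPoints p (baseChange k f) | P.1.2 ^ p = P.1.2}.card := by
  let φ := algebraMap (ZMod p) k
  have hmem {P : CurvePoint (baseChange k f)} :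
      P ∈ {P ∈ primeFieldPoints p (baseChange k f) | P.1.2 ^ p = P.1.2} ↔
        (∃ a, φ a = P.1.1) ∧ ∃ b, φ b = P.1.2 := by
    rw [Finset.mem_filter, mem_primeFieldPoints (hf.map _), exists_algebraMap_zmod_eq_iff,
      exists_algebraMap_zmod_eq_iff]
  have heval (a b : ZMod p) : (baseChange k f).evalEval (φ a) (φ b) = φ (f.evalEval a b) :=
    map_mapRingHom_evalEval _ _ _ _
  refine Finset.card_bij (fun P hP => ⟨(φ P.1, φ P.2), ?_⟩) (fun P hP => ?_)
    (fun P hP Q hQ h => ?_) fun P hP => ?_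
  · rw [heval, (Finset.mem_filter.1 hP).2, map_zero]
  · exact hmem.2 ⟨⟨P.1, rfl⟩, P.2, rfl⟩
  · have h' := Prod.ext_iff.1 (congrArg Subtype.val h)
    exact Prod.ext (φ.injective h'.1) (φ.injective h'.2)
  · obtain ⟨⟨a, ha⟩, b, hb⟩ := hmem.1 hP
    refine ⟨(a, b), Finset.mem_filter.2 ⟨Finset.mem_univ _, φ.injective ?_⟩,
      Subtype.ext (Prod.ext ha hb)⟩
    rw [← heval, ha, hb, map_zero]
    exact P.2

lemma evalEval_baseChange_coordX_root_pow [CharP k p] [Nontrivial (AdjoinRoot (baseChange k f))] :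
    (baseChange (AdjoinRoot (baseChange k f)) (baseChange k f)).evalEval
      (coordX (baseChange k f) ^ p) (AdjoinRoot.root (baseChange k f) ^ p) = 0 := by
  have : CharP (AdjoinRoot (baseChange k f)) p :=
    charP_of_injective_algebraMap (algebraMap k (AdjoinRoot (baseChange k f))).injective p
  have h := evalEval_baseChange_coordX_root (baseChange k f)
  rw [baseChange_baseChange] at h ⊢
  rw [evalEval_baseChange_pow, h, zero_pow (NeZero.ne p)]

section Bounds

variable [CharP k p] (hgeom : IsGeometricallyIrreducible f) (hf : IsMonicOfBidegree f d D)
  (hp : stepanovThreshold d (D * d) ≤ p)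
include hgeom hf hp

lemma card_smooth_rational_le {S : Finset (CurvePoint (baseChange k f))}
    (hS : ∀ P ∈ S, P ∈ primeFieldPoints p (baseChange k f) ∧
      P.eval (AdjoinRoot.mk _ (derivative (baseChange k f))) ≠ 0 ∧ P.1.2 ^ p = P.1.2) :
    S.card ≤ p + stepanovConstant d (D * d) * Nat.sqrt p := by
  have hf' : IsMonicOfBidegree (baseChange k f) d D := hf.baseChange
  have : IsDomain (AdjoinRoot (baseChange k f)) := AdjoinRoot.isDomain_of_prime (hgeom k _).prime
  have h := hf'.card_le_of_frobenius (p := p) Fact.out (hgeom k _)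
    (hgeom.prime_baseChange hf.monic) evalEval_baseChange_coordX_root_pow hp
    (monic_X_sub_C _) (fun s => curveDegreeLE_mono (Nat.le_mul_of_pos_right D hf.pos)
      (X_sub_C_root_mem_polyCurveDegreeLE s)) (by rw [natDegree_X_sub_C]; exact one_pos)
    (by rw [natDegree_X_sub_C]; exact hf.pos)
    (fun P hP => (mem_primeFieldPoints hf'.monic).1 (hS P hP).1) (fun P hP => (hS P hP).2.1)
    (fun P hP => by
      rw [eval₂_sub, eval₂_X, eval₂_C, (hS P hP).2.2, AlgHom.coe_toRingHom, CurvePoint.eval_root,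
        sub_self])
  rwa [natDegree_X_sub_C, one_mul] at h

lemma card_smooth_nonrational_le {S : Finset (CurvePoint (baseChange k f))}
    (hS : ∀ P ∈ S, P ∈ primeFieldPoints p (baseChange k f) ∧
      P.eval (AdjoinRoot.mk _ (derivative (baseChange k f))) ≠ 0 ∧ P.1.2 ^ p ≠ P.1.2) :
    S.card ≤ (d - 1) * p + stepanovConstant d (D * d) * Nat.sqrt p := by
  have hf' : IsMonicOfBidegree (baseChange k f) d D := hf.baseChange
  have : IsDomain (AdjoinRoot (baseChange k f)) := AdjoinRoot.isDomain_of_prime (hgeom k _).prime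
  have hdeg : (conjugateFactor (baseChange k f)).natDegree = d - 1 := by
    rw [natDegree_conjugateFactor hf'.monic, hf'.natDegree_eq]
  have hroot : ∀ P ∈ S, (conjugateFactor (baseChange k f)).eval₂
      (P.eval : AdjoinRoot (baseChange k f) →+* k) (P.1.2 ^ p) = 0 := fun P hP => by
    have hx := (mem_primeFieldPoints hf'.monic).1 (hS P hP).1
    have h := evalEval_baseChange_pow f P.1.1 P.1.2
    rw [hx, P.2, zero_pow (NeZero.ne p), ← CurvePoint.mul_eval₂_conjugateFactor P] at h
    exact (mul_eq_zero.1 h).resolve_left (sub_ne_zero.2 (hS P hP).2.2)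
  have hmonic := conjugateFactor_monic hf'.monic
  rcases Nat.eq_zero_or_pos (d - 1) with hd | hd
  · rw [eq_one_of_monic_natDegree_zero hmonic (hdeg.trans hd)] at hroot
    rw [Finset.eq_empty_of_forall_notMem fun P hP =>
      one_ne_zero ((eval₂_one _ _).symm.trans (hroot P hP)), Finset.card_empty]
    exact Nat.zero_le _
  have h := hf'.card_le_of_frobenius (p := p) Fact.out (hgeom k _)
    (hgeom.prime_baseChange hf.monic) evalEval_baseChange_coordX_root_pow hp hmonic
    hf'.conjugateFactor_mem_polyCurveDegreeLE (hd.trans_eq hdeg.symm)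
    (hdeg.trans_le (Nat.sub_le d 1))
    (fun P hP => (mem_primeFieldPoints hf'.monic).1 (hS P hP).1) (fun P hP => (hS P hP).2.1) hroot
  rwa [hdeg] at h

end Bounds

end Count

lemma abs_card_filter_sub_le {α : Type*} {T : Finset α} {rational singular : α → Prop}
    [DecidablePred rational] [DecidablePred singular] {p d c W s : ℕ} (hd : 1 ≤ d) (hs : 1 ≤ s)
    (htotal : d * p ≤ T.card + d * {t ∈ T | singular t}.card)
    (hrat : {t ∈ T | ¬singular t ∧ rational t}.card ≤ p + c * s)
    (hnonrat : {t ∈ T | ¬singular t ∧ ¬rational t}.card ≤ (d - 1) * p + c * s)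
    (hsing : {t ∈ T | singular t}.card ≤ W) :
    |({t ∈ T | rational t}.card : ℤ) - p| ≤ (c + (d + 1) * W : ℕ) * s := by
  have hsmooth : {t ∈ T | ¬singular t}.card =
      {t ∈ T | ¬singular t ∧ rational t}.card + {t ∈ T | ¬singular t ∧ ¬rational t}.card := by
    rw [← Finset.card_filter_add_card_filter_not (s := {t ∈ T | ¬singular t}) rational,
      Finset.filter_filter, Finset.filter_filter]
  have hT : {t ∈ T | singular t}.card + {t ∈ T | ¬singular t}.card = T.card :=
    Finset.card_filter_add_card_filter_not _
  have hlower : {t ∈ T | ¬singular t ∧ rational t}.card ≤ {t ∈ T | rational t}.card :=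
    Finset.card_le_card (Finset.monotone_filter_right T fun _ _ h => h.2)
  have hupper : {t ∈ T | rational t}.card ≤
      {t ∈ T | ¬singular t ∧ rational t}.card + {t ∈ T | singular t}.card := by
    classical
    refine (Finset.card_le_card fun t ht => ?_).trans (Finset.card_union_le _ _)
    rw [Finset.mem_filter] at ht
    simp only [Finset.mem_union, Finset.mem_filter, ht.1, ht.2, and_true, true_and]
    exact (em _).symm
  have hW : d * W + W ≤ (d + 1) * W * s :=
    add_one_mul d W ▸ Nat.le_mul_of_pos_right _ hs
  have hdW := Nat.mul_le_mul_left d hsing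
  have hp : (d - 1) * p + p = d * p := by rw [← add_one_mul, Nat.sub_add_cancel hd]
  rw [← Nat.cast_mul, add_mul, abs_le]
  constructor <;> omega

/-- The coefficient of `√p` in the bound for the number of points of a plane curve of degrees at
most `D` in `X` and equal to `d` in `Y`. -/
def weilConstant (d D : ℕ) : ℕ :=
  stepanovConstant d (D * d) + (d + 1) * (d * (D * d + D * d))

theorem IsGeometricallyIrreducible.abs_card_sub_le {f : (ZMod p)[X][X]} {d D : ℕ}
    (hgeom : IsGeometricallyIrreducible f) (hf : IsMonicOfBidegree f d D)
    (hp : stepanovThreshold d (D * d) ≤ p) :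
    |((({P : ZMod p × ZMod p | f.evalEval P.1 P.2 = 0} : Finset _).card : ℤ) - p)| ≤
      weilConstant d D * Nat.sqrt p := by
  classical
  have : CharP (AlgebraicClosure (ZMod p)) p :=
    charP_of_injective_algebraMap (algebraMap (ZMod p) (AlgebraicClosure (ZMod p))).injective p
  have hg : IsMonicOfBidegree (baseChange (AlgebraicClosure (ZMod p)) f) d D := hf.baseChange
  have htotal := natDegree_mul_le_card_primeFieldPoints_add (p := p) hg.monic
  rw [hg.natDegree_eq] at htotal
  rw [card_zmod_points_eq (k := AlgebraicClosure (ZMod p)) hf.monic]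
  exact abs_card_filter_sub_le hf.pos (Nat.sqrt_pos.2 (NeZero.pos p)) htotal
    (card_smooth_rational_le hgeom hf hp fun P hP => Finset.mem_filter.1 hP)
    (card_smooth_nonrational_le hgeom hf hp fun P hP => Finset.mem_filter.1 hP)
    (hg.card_singular_le_of_stepanovThreshold_le (hgeom _ _) hp
      fun P hP => (Finset.mem_filter.1 hP).2)

end WeilBound

section RuppertWeil

theorem IsMonicOfBidegree.isGeometricallyIrreducible {κ : Type*} [Field κ] {f : κ[X][X]} {d D : ℕ}
    (hf : IsMonicOfBidegree f d D) (hchar : ∀ j : ℕ, 1 ≤ j → j ≤ d → (j : κ) ≠ 0)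
    (r : FormIndex d D → Option (ℕ × ℕ)) (hr : ((ruppertMatrix d D f).submatrix r id).det ≠ 0) :
    IsGeometricallyIrreducible f := fun K _ φ => by
  let _ : Algebra κ K := φ.toAlgebra
  have hfK : IsMonicOfBidegree (f.map (mapRingHom φ)) d D := hf.baseChange (A := K)
  have hdet : ((ruppertMatrix d D (f.map (mapRingHom φ))).submatrix r id).det ≠ 0 := by
    rw [ruppertMatrix_map, Matrix.submatrix_map, ← RingHom.mapMatrix_apply, ← RingHom.map_det]
    exact (map_ne_zero φ).2 hr
  obtain ⟨hmonic, rfl, hpos, hD⟩ := hfK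
  refine (isRuppertRigid_of_det_ne_zero r hdet).irreducible hmonic hpos hD fun j h1 hj => ?_
  rw [← map_natCast φ]
  exact (map_ne_zero φ).2 (hchar j h1 hj)

theorem IsMonicOfBidegree.abs_card_sub_le_of_det_ne_zero {p : ℕ} [Fact p.Prime]
    {f : (ZMod p)[X][X]} {d D : ℕ} (hf : IsMonicOfBidegree f d D)
    (hp : stepanovThreshold d (D * d) ≤ p) (r : FormIndex d D → Option (ℕ × ℕ))
    (hr : ((ruppertMatrix d D f).submatrix r id).det ≠ 0) :
    |((({P : ZMod p × ZMod p | f.evalEval P.1 P.2 = 0} : Finset _).card : ℤ) - p)| ≤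
      weilConstant d D * Nat.sqrt p := by
  refine (hf.isGeometricallyIrreducible (fun j h1 hj => ?_) r hr).abs_card_sub_le hf hp
  rw [Ne, CharP.cast_eq_zero_iff (ZMod p) p]
  exact Nat.not_dvd_of_pos_of_lt h1 (hj.trans_lt (lt_of_stepanovThreshold_le hf.pos hp))

end RuppertWeil

section GenericRigidity

open scoped Differential

lemma exists_derivation_fractionRing {A K : Type*} [CommRing A] [IsDomain A] [Field K]
    [Algebra A K] [IsFractionRing A K] (δ : Derivation ℤ A A) :
    ∃ δ' : Derivation ℤ K K, ∀ a, δ' (algebraMap A K a) = algebraMap A K (δ a) := by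
  let ℓ : Ω[A⁄ℤ] →ₗ[A] K := Algebra.linearMap A K ∘ₗ δ.liftKaehlerDifferential
  have hunit (s : nonZeroDivisors A) : IsUnit (algebraMap A (Module.End A K) s) :=
    IsLocalizedModule.map_units (Algebra.linearMap A K) s
  let ℓ' := IsLocalizedModule.lift (nonZeroDivisors A) (KaehlerDifferential.map ℤ ℤ A K) ℓ hunit
  refine ⟨(ℓ'.extendScalarsOfIsLocalization (nonZeroDivisors A) K).compDer
    (KaehlerDifferential.D ℤ K), fun a => ?_⟩
  have h := IsLocalizedModule.lift_apply (nonZeroDivisors A) (KaehlerDifferential.map ℤ ℤ A K) ℓ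
    hunit (KaehlerDifferential.D ℤ A a)
  rw [KaehlerDifferential.map_D] at h
  exact h.trans (congrArg (algebraMap A K) (δ.liftKaehlerDifferential_comp_D a))

section Wronskian

variable {R : Type*} [CommRing R]

lemma coeff_X_mul_derivative (a : R[X]) (n : ℕ) : (X * derivative a).coeff n = n * a.coeff n := by
  cases n with
  | zero => simp
  | succ n => rw [coeff_X_mul, coeff_derivative, mul_comm, Nat.cast_succ]

lemma natDegree_X_mul_derivative_le (a : R[X]) : (X * derivative a).natDegree ≤ a.natDegree :=
  natDegree_le_iff_coeff_eq_zero.2 fun n hn => by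
    rw [coeff_X_mul_derivative, coeff_eq_zero_of_natDegree_lt hn, mul_zero]

variable [IsDomain R] [CharZero R] {a b : R[X]}

lemma natDegree_eq_of_wronskian_eq_zero (ha : a ≠ 0) (hb : b ≠ 0) (h : wronskian a b = 0) :
    a.natDegree = b.natDegree := by
  have hX : a * (X * derivative b) = X * derivative a * b := by
    rw [wronskian] at h
    linear_combination X * h
  have hlead := congrArg (coeff · (a.natDegree + b.natDegree)) hX
  simp only [coeff_mul_add_eq_of_natDegree_le le_rfl (natDegree_X_mul_derivative_le b),
    coeff_mul_add_eq_of_natDegree_le (natDegree_X_mul_derivative_le a) le_rfl,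
    coeff_X_mul_derivative, coeff_natDegree] at hlead
  have hcast : (a.natDegree : R) = b.natDegree := by
    refine mul_right_cancel₀
      (mul_ne_zero (leadingCoeff_ne_zero.2 ha) (leadingCoeff_ne_zero.2 hb)) ?_
    linear_combination -hlead
  exact_mod_cast hcast

lemma C_leadingCoeff_mul_eq_of_wronskian_eq_zero (h : wronskian a b = 0) :
    C b.leadingCoeff * a = C a.leadingCoeff * b := by
  by_cases ha : a = 0
  · simp [ha]
  by_cases hb : b = 0
  · simp [hb]
  have hab := natDegree_eq_of_wronskian_eq_zero ha hb h
  by_contra hne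
  have he := natDegree_eq_of_wronskian_eq_zero (sub_ne_zero.2 hne) hb <| by
    rw [wronskian] at h ⊢
    simp only [derivative_sub, derivative_mul, derivative_C]
    linear_combination C b.leadingCoeff * h
  refine leadingCoeff_ne_zero.2 (sub_ne_zero.2 hne) ?_
  rw [leadingCoeff, he, coeff_sub, coeff_C_mul, coeff_C_mul, coeff_natDegree, ← hab,
    coeff_natDegree, mul_comm, sub_self]

end Wronskian

section Constants

variable {B K L : Type*} [CommRing B] [IsDomain B] [Field K] [Differential K]

lemma isAlgebraic_of_deriv_eq_zero_of_isFractionRing [CharZero B] [Algebra B K] [Algebra B[X] K]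
    [IsScalarTower B B[X] K] [IsFractionRing B[X] K]
    (hδ : ∀ a : B[X], (algebraMap B[X] K a)′ = algebraMap B[X] K (derivative a))
    {q : K} (hq : q′ = 0) : IsAlgebraic B q := by
  obtain ⟨a, b, hb, rfl⟩ := IsFractionRing.div_surjective (A := B[X]) q
  have hb0 : b ≠ 0 := nonZeroDivisors.ne_zero hb
  have hinj := IsFractionRing.injective B[X] K
  have hbK : algebraMap B[X] K b ≠ 0 := (map_ne_zero_iff _ hinj).2 hb0
  have hwronskian : wronskian a b = 0 := hinj <| by
    have h := congrArg Differential.deriv (div_mul_cancel₀ (algebraMap B[X] K a) hbK)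
    rw [Derivation.leibniz, hq, smul_zero, add_zero, smul_eq_mul, hδ, hδ] at h
    rw [wronskian, map_sub, map_mul, map_mul, map_zero, ← h]
    field_simp
    ring
  have hlead := congrArg (algebraMap B[X] K) (C_leadingCoeff_mul_eq_of_wronskian_eq_zero hwronskian)
  simp only [map_mul, ← algebraMap_eq, ← IsScalarTower.algebraMap_apply] at hlead
  refine ⟨C b.leadingCoeff * X - C a.leadingCoeff, fun h => ?_, ?_⟩
  · simpa [hb0] using congrArg (coeff · 1) h
  · simp only [map_sub, map_mul, aeval_C, aeval_X]
    rw [mul_div_assoc', hlead, mul_div_cancel_right₀ _ hbK, sub_self]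

variable [CommRing L] [Differential L] [Algebra K L] [DifferentialAlgebra K L]

lemma deriv_coeff_minpoly_eq_zero {c : L} (hint : IsIntegral K c) (hc : c′ = 0) (j : ℕ) :
    ((minpoly K c).coeff j)′ = 0 := by
  have hroot : aeval c (Differential.mapCoeffs (minpoly K c)) = 0 := by
    have h := Differential.deriv_aeval_eq c (minpoly K c)
    rwa [minpoly.aeval, hc, mul_zero, add_zero, map_zero, eq_comm] at h
  have hzero : Differential.mapCoeffs (minpoly K c) = 0 := by
    by_contra hne
    have hle := natDegree_le_natDegree (minpoly.degree_le_of_ne_zero K c hne hroot)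
    refine leadingCoeff_ne_zero.2 hne ?_
    rw [leadingCoeff, Differential.coeff_mapCoeffs]
    rcases hle.eq_or_lt with h | h
    · rw [← h, (minpoly.monic hint).coeff_natDegree, Derivation.map_one_eq_zero]
    · rw [coeff_eq_zero_of_natDegree_lt h, map_zero]
  rw [← Differential.coeff_mapCoeffs, hzero, coeff_zero]

lemma isAlgebraic_of_deriv_eq_zero [IsDomain L] [Algebra B K] [Algebra B L] [IsScalarTower B K L]
    (hK : ∀ q : K, q′ = 0 → IsAlgebraic B q) {c : L} (hint : IsIntegral K c) (hc : c′ = 0) :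
    IsAlgebraic B c := by
  let A := Subalgebra.algebraicClosure B K
  obtain ⟨q, hq, -, hmonic⟩ := lifts_and_natDegree_eq_and_monic
    ((lifts_iff_coeff_lifts _).2 fun j =>
      ⟨⟨_, hK _ (deriv_coeff_minpoly_eq_zero hint hc j)⟩, rfl⟩ :
      minpoly K c ∈ lifts (algebraMap A K)) (minpoly.monic hint)
  have hA : IsAlgebraic A c := ⟨q, hmonic.ne_zero, by
    rw [← aeval_map_algebraMap K, hq, minpoly.aeval]⟩
  exact hA.restrictScalars B

end Constants

end GenericRigidity

section Residue

open scoped Differential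

lemma derivative_mapCoeffs {K : Type*} [CommRing K] [Differential K] (P : K[X]) :
    derivative (Differential.mapCoeffs P) = Differential.mapCoeffs (derivative P) := by
  ext i
  rw [coeff_derivative, Differential.coeff_mapCoeffs, Differential.coeff_mapCoeffs,
    coeff_derivative, Derivation.leibniz, ← Nat.cast_succ, Derivation.map_natCast, smul_zero,
    zero_add, smul_eq_mul, mul_comm]

lemma deriv_eq_zero_of_mul_aeval_derivative_eq {K L : Type*} [Field K] [Differential K]
    [Field L] [Differential L] [Algebra K L] [DifferentialAlgebra K L] {P G H : K[X]} {y c : L}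
    (hclosed : P * (derivative G - Differential.mapCoeffs H) - G * derivative P +
      H * Differential.mapCoeffs P = 0)
    (hP : aeval y P = 0) (hP' : aeval y (derivative P) ≠ 0)
    (hc : c * aeval y (derivative P) = aeval y H) : c′ = 0 := by
  have hy := Differential.deriv_aeval_eq y P
  have hform := congrArg (aeval y) hclosed
  have hdform := congrArg (fun Q => aeval y (derivative Q)) hclosed
  simp only [map_add, map_sub, map_mul, map_zero, hP, zero_mul, zero_sub] at hy hform
  simp only [map_add, map_sub, derivative_mul, derivative_mapCoeffs, map_mul, map_zero, hP,
    zero_mul, add_zero] at hdform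
  have hG : aeval y G = -aeval y H * y′ := by
    refine mul_right_cancel₀ hP' ?_
    linear_combination -hform - aeval y H * hy
  have hdc := congrArg Differential.deriv hc
  rw [Derivation.leibniz, smul_eq_mul, smul_eq_mul, Differential.deriv_aeval_eq,
    Differential.deriv_aeval_eq] at hdc
  rw [hG] at hdform
  refine (mul_eq_zero.1 ?_).resolve_right (pow_ne_zero 2 hP')
  linear_combination aeval y (derivative P) * hdc - (aeval y (Differential.mapCoeffs (derivative P))
    + aeval y (derivative (derivative P)) * y′) * hc - hdform - aeval y (derivative H) * hy

variable {B K : Type*} [CommRing B] [Field K] [Algebra B[X] K]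

lemma aeval_map_algebraMap_smul [Algebra B K] [IsScalarTower B B[X] K] {L : Type*} [CommRing L]
    [Algebra K L] [Algebra B L] [IsScalarTower B K L] (y : L) (r : B) (q : B[X][X]) :
    aeval y ((r • q).map (algebraMap B[X] K)) =
      algebraMap B L r * aeval y (q.map (algebraMap B[X] K)) := by
  rw [Algebra.smul_def, Polynomial.map_mul, map_mul,
    IsScalarTower.algebraMap_apply B B[X] B[X][X], algebraMap_eq, map_C, aeval_C,
    ← IsScalarTower.algebraMap_apply B B[X] K, ← IsScalarTower.algebraMap_apply]

variable [Differential K]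

lemma mapCoeffs_map_algebraMap
    (hδ : ∀ a : B[X], (algebraMap B[X] K a)′ = algebraMap B[X] K (derivative a)) (q : B[X][X]) :
    Differential.mapCoeffs (q.map (algebraMap B[X] K)) =
      (partialX q).map (algebraMap B[X] K) := by
  ext j
  rw [Differential.coeff_mapCoeffs, coeff_map, coeff_map, coeff_partialX, hδ]

lemma map_closednessDefect_eq_zero {f g h : B[X][X]} {P : K[X]}
    (hP : f.map (algebraMap B[X] K) = P)
    (hδ : ∀ a : B[X], (algebraMap B[X] K a)′ = algebraMap B[X] K (derivative a))
    (hclosed : closednessDefect f (g, h) = 0) :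
    P * (derivative (g.map (algebraMap B[X] K)) -
      Differential.mapCoeffs (h.map (algebraMap B[X] K))) - g.map (algebraMap B[X] K) * derivative P
      + h.map (algebraMap B[X] K) * Differential.mapCoeffs P = 0 := by
  have h := congrArg (Polynomial.map (algebraMap B[X] K)) hclosed
  simp only [closednessDefect_apply, Polynomial.map_add, Polynomial.map_sub, Polynomial.map_mul,
    Polynomial.map_zero, ← derivative_map, hP] at h
  rwa [mapCoeffs_map_algebraMap hδ, ← hP, mapCoeffs_map_algebraMap hδ, hP]

variable [IsDomain B] [CharZero B] [IsFractionRing B[X] K] [Algebra B K] [IsScalarTower B B[X] K]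

-- The residue `h / f_Y` of a closed form along the curve is a constant of the function field.
lemma exists_smul_eq_smul_derivative_of_closed {f g h : B[X][X]} {P : K[X]}
    (hP : f.map (algebraMap B[X] K) = P) (hf : f.Monic) (hirr : Irreducible P)
    (hδ : ∀ a : B[X], (algebraMap B[X] K a)′ = algebraMap B[X] K (derivative a))
    (hconst : ∀ c : AdjoinRoot P, IsAlgebraic B c →
      ∃ a b : B, b ≠ 0 ∧ algebraMap B _ b * c = algebraMap B _ a)
    (hh : h.natDegree < f.natDegree) (hclosed : closednessDefect f (g, h) = 0) :
    ∃ a b : B, b ≠ 0 ∧ b • h = a • derivative f := by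
  have hinj := IsFractionRing.injective B[X] K
  have hPmonic : P.Monic := hP ▸ hf.map _
  have := Fact.mk hirr
  have := Fact.mk hPmonic
  have : CharZero K := charZero_of_injective_algebraMap hinj
  have : FiniteDimensional K (AdjoinRoot P) := hPmonic.finite_adjoinRoot
  have hroot : aeval (AdjoinRoot.root P) P = 0 := (AdjoinRoot.aeval_eq P).trans AdjoinRoot.mk_self
  have hsep : aeval (AdjoinRoot.root P) (derivative P) ≠ 0 :=
    hirr.separable.aeval_derivative_ne_zero hroot
  obtain ⟨a, b, hb, hab⟩ := hconst _ <| isAlgebraic_of_deriv_eq_zero (K := K)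
    (fun q => isAlgebraic_of_deriv_eq_zero_of_isFractionRing hδ) (Algebra.IsIntegral.isIntegral _)
    (deriv_eq_zero_of_mul_aeval_derivative_eq (map_closednessDefect_eq_zero hP hδ hclosed) hroot
      hsep (div_mul_cancel₀ _ hsep))
  refine ⟨a, b, hb, sub_eq_zero.1 ?_⟩
  have hdvd : P ∣ (b • h - a • derivative f).map (algebraMap B[X] K) := by
    rw [mul_div_assoc', div_eq_iff hsep] at hab
    rw [← AdjoinRoot.mk_eq_zero, ← AdjoinRoot.aeval_eq, Polynomial.map_sub, map_sub,
      aeval_map_algebraMap_smul, aeval_map_algebraMap_smul, ← derivative_map, hP, hab, sub_self]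
  have hdeg : (b • h - a • derivative f).natDegree < f.natDegree :=
    (natDegree_sub_le _ _).trans_lt <| max_lt ((natDegree_smul_le _ _).trans_lt hh) <|
      (natDegree_smul_le _ _).trans_lt (natDegree_derivative_lt (Nat.ne_zero_of_lt hh))
  refine Polynomial.map_injective _ hinj ?_
  rw [Polynomial.map_zero]
  refine eq_zero_of_dvd_of_natDegree_lt hdvd ?_
  rwa [natDegree_map_eq_of_injective hinj, ← hP, natDegree_map_eq_of_injective hinj]

theorem isRuppertRigid_of_forall_isAlgebraic {f : B[X][X]} {P : K[X]}
    (hP : f.map (algebraMap B[X] K) = P) (hf : f.Monic) (hpos : 0 < f.natDegree)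
    (hirr : Irreducible P)
    (hδ : ∀ a : B[X], (algebraMap B[X] K a)′ = algebraMap B[X] K (derivative a))
    (hconst : ∀ c : AdjoinRoot P, IsAlgebraic B c →
      ∃ a b : B, b ≠ 0 ∧ algebraMap B _ b * c = algebraMap B _ a) (D : ℕ) :
    IsRuppertRigid f.natDegree D f := by
  intro g h hg hh _ _ hclosed hnorm
  obtain ⟨a, b, hb, hab⟩ := exists_smul_eq_smul_derivative_of_closed hP hf hirr hδ hconst hh hclosed
  have ha : a = 0 := by
    have hcoeff := congrArg (fun q => (q.coeff (f.natDegree - 1)).coeff 0) hab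
    simp only [coeff_smul, hnorm, coeff_derivative_natDegree_sub_one hf hpos, smul_zero,
      coeff_natCast_ite, if_true] at hcoeff
    exact (mul_eq_zero.1 hcoeff.symm).resolve_right (Nat.cast_ne_zero.2 hpos.ne')
  rw [ha, zero_smul] at hab
  have hh0 : h = 0 := (smul_eq_zero.1 hab).resolve_left hb
  refine ⟨by_contra fun hg0 => ?_, hh0⟩
  rw [hh0, closednessDefect_apply, map_zero, sub_zero, zero_mul, add_zero] at hclosed
  exact hg.ne (natDegree_eq_of_wronskian_eq_zero hg0 hf.ne_zero
    (by rw [wronskian]; linear_combination -hclosed))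

end Residue

section FirstVariable

open scoped Differential

lemma IsRuppertRigid.of_map {R S : Type*} [CommRing R] [CommRing S] {φ : R →+* S}
    (hφ : Function.Injective φ) {d D : ℕ} {f : R[X][X]}
    (hrigid : IsRuppertRigid d D (f.map (mapRingHom φ))) : IsRuppertRigid d D f := by
  have hinj : Function.Injective (Polynomial.map (mapRingHom φ)) :=
    map_injective _ (map_injective φ hφ)
  have hX {a : R[X][X]} (ha : natDegreeX a ≤ D) : natDegreeX (a.map (mapRingHom φ)) ≤ D :=
    natDegreeX_le_iff.2 fun j => by
      rw [coeff_map]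
      exact natDegree_map_le.trans (natDegreeX_le_iff.1 ha j)
  intro g h hg hh hgX hhX hclosed hnorm
  have hzero := hrigid (g.map (mapRingHom φ)) (h.map (mapRingHom φ)) (natDegree_map_le.trans_lt hg)
    (natDegree_map_le.trans_lt hh) (hX hgX) (hX hhX)
    (by rw [closednessDefect_map, hclosed, Polynomial.map_zero])
    (by rw [coeff_map, coe_mapRingHom, coeff_map, hnorm, map_zero])
  exact hzero.imp (fun h0 => hinj (h0.trans (Polynomial.map_zero _).symm))
    fun h0 => hinj (h0.trans (Polynomial.map_zero _).symm)

variable {m : ℕ}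

/-- The polynomial `F(Y, X₀, …, Xₘ)` viewed as a polynomial in the two variables `Y` and `X₀`, with
coefficients in the ring of polynomials in the other variables. -/
def toBivariate {R : Type*} [CommRing R] (F : (MvPolynomial (Fin (m + 1)) R)[X]) :
    (MvPolynomial (Fin m) R)[X][X] :=
  F.map (MvPolynomial.finSuccEquiv R m : _ →+* _)

lemma toBivariate_map {R S : Type*} [CommRing R] [CommRing S] (φ : R →+* S)
    (F : (MvPolynomial (Fin (m + 1)) R)[X]) :
    toBivariate (F.map (MvPolynomial.map φ)) =
      (toBivariate F).map (mapRingHom (MvPolynomial.map φ)) := by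
  rw [toBivariate, toBivariate, Polynomial.map_map, Polynomial.map_map]
  congr 1
  refine MvPolynomial.ringHom_ext (fun r => ?_) fun i => ?_
  · simp [MvPolynomial.finSuccEquiv_apply]
  · refine Fin.cases ?_ (fun j => ?_) i
    · simp [MvPolynomial.finSuccEquiv_X_zero]
    · simp [MvPolynomial.finSuccEquiv_X_succ]

lemma irreducible_toFrac_of_absIrred {n : ℕ} {F : (MvPolynomial (Fin n) ℤ)[X]} (hF : AbsIrred F)
    (hmonic : F.Monic) : Irreducible (toFrac F) := by
  have hcomp : (MvPolynomial.map (algebraMap ℚ (AlgebraicClosure ℚ))).comp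
      (MvPolynomial.map (Int.castRingHom ℚ)) =
      (MvPolynomial.map (Int.castRingHom (AlgebraicClosure ℚ)) :
        MvPolynomial (Fin n) ℤ →+* _) := by
    apply MvPolynomial.ringHom_ext <;> simp
  have hmonicQ : (toQ F).Monic := hmonic.map _
  refine hmonicQ.irreducible_iff_irreducible_map_fraction_map.1 <|
    Monic.irreducible_of_irreducible_map
      (MvPolynomial.map (algebraMap ℚ (AlgebraicClosure ℚ))) _ hmonicQ ?_
  rwa [toQ, Polynomial.map_map, hcomp]

section Constants

variable {F : (MvPolynomial (Fin (m + 1)) ℤ)[X]}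

lemma coordMem_zero_iff {z : AdjoinRoot (toFrac F)} :
    CoordMem 0 F z ↔ ∃ a b : MvPolynomial (Fin m) ℚ,
      structMap F ((MvPolynomial.finSuccEquiv ℚ m).symm (C b)) ≠ 0 ∧
      z * structMap F ((MvPolynomial.finSuccEquiv ℚ m).symm (C b)) =
        structMap F ((MvPolynomial.finSuccEquiv ℚ m).symm (C a)) := by
  have hdeg (a : MvPolynomial (Fin (m + 1)) ℚ) : a.degreeOf 0 = 0 ↔
      ∃ a₀, a = (MvPolynomial.finSuccEquiv ℚ m).symm (C a₀) := by
    simp only [← MvPolynomial.natDegree_finSuccEquiv, natDegree_eq_zero, AlgEquiv.eq_symm_apply,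
      @eq_comm _ _ (MvPolynomial.finSuccEquiv ℚ m a)]
  constructor
  · rintro ⟨a, b, ha, hb, hb0, hab⟩
    obtain ⟨a, rfl⟩ := (hdeg a).1 ha
    obtain ⟨b, rfl⟩ := (hdeg b).1 hb
    exact ⟨a, b, hb0, hab⟩
  · rintro ⟨a, b, hb0, hab⟩
    exact ⟨_, _, (hdeg _).2 ⟨a, rfl⟩, (hdeg _).2 ⟨b, rfl⟩, hb0, hab⟩

lemma structMap_injective (hirr : Irreducible (toFrac F)) : Function.Injective (structMap F) := by
  have := Fact.mk hirr
  exact (algebraMap (RF (m + 1)) (AdjoinRoot (toFrac F))).injective.comp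
    (IsFractionRing.injective _ _)

lemma algOverCoord_zero (hirr : Irreducible (toFrac F)) {ι : MvPolynomial (Fin m) ℚ →+* _}
    (hι : ∀ b, ι b = structMap F ((MvPolynomial.finSuccEquiv ℚ m).symm (C b)))
    {z : AdjoinRoot (toFrac F)} {q : (MvPolynomial (Fin m) ℚ)[X]} (hq : q ≠ 0)
    (hz : q.eval₂ ι z = 0) : AlgOverCoord 0 F z := by
  have := Fact.mk hirr
  have hinj : Function.Injective ι := fun a b hab => by
    rw [hι, hι] at hab
    exact C_injective ((MvPolynomial.finSuccEquiv ℚ m).symm.injective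
      (structMap_injective hirr hab))
  refine ⟨q.map ι, (Polynomial.map_ne_zero_iff hinj).2 hq, fun k => ?_, by rwa [eval_map]⟩
  refine coordMem_zero_iff.2 ⟨q.coeff k, 1, ?_, ?_⟩
  · simp
  · rw [coeff_map, hι]
    simp

end Constants

theorem isRuppertRigid_map_ringEquiv {A B K : Type*} [CommRing A] [CommRing B] [IsDomain B]
    [CharZero B] [Field K] [Algebra A K] [IsFractionRing A K] (e : A ≃+* B[X]) {G : A[X]}
    (hG : G.Monic) (hirr : Irreducible (G.map (algebraMap A K)))
    {ι : B →+* AdjoinRoot (G.map (algebraMap A K))}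
    (hι : ∀ b, ι b = algebraMap K _ (algebraMap A K (e.symm (C b))))
    (hconst : ∀ (c : AdjoinRoot (G.map (algebraMap A K))) (q : B[X]), q ≠ 0 → q.eval₂ ι c = 0 →
      ∃ a b : B, b ≠ 0 ∧ ι b * c = ι a) (D : ℕ) :
    IsRuppertRigid G.natDegree D (G.map e.toRingHom) := by
  let : Algebra B[X] K := ((algebraMap A K).comp e.symm.toRingHom).toAlgebra
  have : IsFractionRing B[X] K :=
    (IsFractionRing.isFractionRing_iff_of_base_ringEquiv K e).1 inferInstance
  let : Algebra B K := ((algebraMap B[X] K).comp C).toAlgebra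
  have : IsScalarTower B B[X] K := .of_algebraMap_eq fun _ => rfl
  obtain ⟨δ, hδ⟩ :=
    exists_derivation_fractionRing (K := K) ((derivative' (R := B)).restrictScalars ℤ)
  let : Differential K := ⟨δ⟩
  have hpos : 0 < G.natDegree := hG.natDegree_map (algebraMap A K) ▸ hirr.natDegree_pos
  have hP : (G.map e.toRingHom).map (algebraMap B[X] K) = G.map (algebraMap A K) := by
    rw [Polynomial.map_map]
    congr 1
    ext a
    exact congrArg (algebraMap A K) (e.symm_apply_apply a)
  have hdeg : (G.map e.toRingHom).natDegree = G.natDegree := hG.natDegree_map _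
  have h := isRuppertRigid_of_forall_isAlgebraic hP (hG.map _) (hdeg ▸ hpos) hirr hδ
    (fun c hc => ?_) D
  · rwa [hdeg] at h
  · have hι' : algebraMap B _ = ι := RingHom.ext fun b => (hι b).symm
    obtain ⟨q, hq, hqc⟩ := hc
    rw [hι']
    exact hconst c q hq (by rw [← hqc, ← hι']; rfl)

theorem isRuppertRigid_toBivariate {F : (MvPolynomial (Fin (m + 1)) ℤ)[X]} (hmonic : F.Monic)
    (hirr : Irreducible (toFrac F))
    (hclosed : ∀ z : AdjoinRoot (toFrac F), AlgOverCoord 0 F z → CoordMem 0 F z) (D : ℕ) :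
    IsRuppertRigid F.natDegree D (toBivariate F) := by
  refine IsRuppertRigid.of_map (φ := MvPolynomial.map (Int.castRingHom ℚ))
    (MvPolynomial.map_injective _ Int.cast_injective) ?_
  rw [← toBivariate_map, ← hmonic.natDegree_map (MvPolynomial.map (Int.castRingHom ℚ))]
  let e := MvPolynomial.finSuccEquiv ℚ m
  refine isRuppertRigid_map_ringEquiv e.toRingEquiv (hmonic.map _) hirr
    (ι := (structMap F).comp ((e.symm : _ →+* _).comp C)) (fun _ => rfl) (fun c q hq hqc => ?_) D
  obtain ⟨a, b, hb, hab⟩ :=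
    coordMem_zero_iff.1 (hclosed c (algOverCoord_zero hirr (fun _ => rfl) hq hqc))
  exact ⟨a, b, fun h => hb (by simp [h]), (mul_comm _ _).trans hab⟩

end FirstVariable

section Size

variable {σ : Type*}

/-- The sum of the absolute values of the coefficients of an integer polynomial. -/
def l1Norm (a : MvPolynomial σ ℤ) : ℕ := ∑ s ∈ a.support, (a.coeff s).natAbs

lemma l1Norm_eq_sum_of_support_subset {a : MvPolynomial σ ℤ} {S : Finset (σ →₀ ℕ)}
    (h : a.support ⊆ S) : l1Norm a = ∑ s ∈ S, (a.coeff s).natAbs :=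
  Finset.sum_subset h fun s _ hs => by rw [MvPolynomial.notMem_support_iff.1 hs, Int.natAbs_zero]

lemma l1Norm_zero : l1Norm (0 : MvPolynomial σ ℤ) = 0 := by simp [l1Norm]

lemma l1Norm_monomial_le (s : σ →₀ ℕ) (k : ℤ) : l1Norm (MvPolynomial.monomial s k) ≤ k.natAbs := by
  classical
  rw [l1Norm_eq_sum_of_support_subset MvPolynomial.support_monomial_subset, Finset.sum_singleton,
    MvPolynomial.coeff_monomial, if_pos rfl]

lemma l1Norm_neg (a : MvPolynomial σ ℤ) : l1Norm (-a) = l1Norm a := by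
  simp [l1Norm, MvPolynomial.support_neg]

lemma l1Norm_add_le (a b : MvPolynomial σ ℤ) : l1Norm (a + b) ≤ l1Norm a + l1Norm b := by
  classical
  rw [l1Norm_eq_sum_of_support_subset MvPolynomial.support_add,
    l1Norm_eq_sum_of_support_subset (a := a) Finset.subset_union_left,
    l1Norm_eq_sum_of_support_subset (a := b) Finset.subset_union_right, ← Finset.sum_add_distrib]
  refine Finset.sum_le_sum fun s _ => ?_
  rw [MvPolynomial.coeff_add]
  exact Int.natAbs_add_le _ _

lemma l1Norm_sum_le {ι : Type*} (S : Finset ι) (f : ι → MvPolynomial σ ℤ) :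
    l1Norm (∑ i ∈ S, f i) ≤ ∑ i ∈ S, l1Norm (f i) :=
  Finset.le_sum_of_subadditive l1Norm l1Norm_zero.le l1Norm_add_le S f

lemma l1Norm_mul_le (a b : MvPolynomial σ ℤ) : l1Norm (a * b) ≤ l1Norm a * l1Norm b := by
  have hmul : a * b = ∑ s ∈ a.support, ∑ t ∈ b.support,
      MvPolynomial.monomial (s + t) (a.coeff s * b.coeff t) := by
    conv_lhs => rw [a.as_sum, b.as_sum, Finset.sum_mul_sum]
    simp only [MvPolynomial.monomial_mul]
  rw [hmul]
  refine (l1Norm_sum_le _ _).trans ?_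
  rw [l1Norm, l1Norm, Finset.sum_mul_sum]
  refine Finset.sum_le_sum fun s _ => ((l1Norm_sum_le _ _).trans (Finset.sum_le_sum fun t _ => ?_))
  exact (l1Norm_monomial_le _ _).trans (Int.natAbs_mul _ _).le

lemma natAbs_coeff_le_l1Norm (a : MvPolynomial σ ℤ) (s : σ →₀ ℕ) :
    (a.coeff s).natAbs ≤ l1Norm a := by
  by_cases hs : s ∈ a.support
  · exact Finset.single_le_sum (f := fun s => (a.coeff s).natAbs) (fun _ _ => Nat.zero_le _) hs
  · simp [MvPolynomial.notMem_support_iff.1 hs]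

lemma card_support_le_of_totalDegree_le [Fintype σ] {a : MvPolynomial σ ℤ} {T : ℕ}
    (h : a.totalDegree ≤ T) : a.support.card ≤ (T + 1) ^ Fintype.card σ := by
  classical
  calc a.support.card ≤ (Fintype.piFinset fun _ : σ => Finset.range (T + 1)).card := by
        refine Finset.card_le_card_of_injOn (fun s => (s : σ → ℕ)) (fun s hs => ?_)
          DFunLike.coe_injective.injOn
        simp only [Finset.mem_coe, Fintype.mem_piFinset, Finset.mem_range, Nat.lt_succ_iff]
        exact fun i => (MvPolynomial.le_degreeOf_of_mem_support i hs).trans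
          ((MvPolynomial.degreeOf_le_totalDegree a i).trans h)
    _ = (T + 1) ^ Fintype.card σ := by simp

/-- Integer polynomials of `ℓ¹`-norm at most `B` and total degree at most `T`. -/
structure HasSizeLE (B T : ℕ) (a : MvPolynomial σ ℤ) : Prop where
  l1Norm_le : l1Norm a ≤ B
  totalDegree_le : a.totalDegree ≤ T

namespace HasSizeLE

variable {B B' T : ℕ} {a b : MvPolynomial σ ℤ}

lemma zero (B T : ℕ) : HasSizeLE B T (0 : MvPolynomial σ ℤ) := ⟨by simp [l1Norm_zero], by simp⟩

lemma natCast (k T : ℕ) : HasSizeLE k T (k : MvPolynomial σ ℤ) := by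
  rw [← map_natCast MvPolynomial.C]
  exact ⟨l1Norm_monomial_le _ _, (MvPolynomial.totalDegree_C _).trans_le (Nat.zero_le T)⟩

lemma mono (h : HasSizeLE B T a) (hB : B ≤ B') : HasSizeLE B' T a :=
  ⟨h.l1Norm_le.trans hB, h.totalDegree_le⟩

lemma neg (h : HasSizeLE B T a) : HasSizeLE B T (-a) :=
  ⟨(l1Norm_neg a).trans_le h.l1Norm_le, (MvPolynomial.totalDegree_neg a).trans_le h.totalDegree_le⟩

lemma sub (ha : HasSizeLE B T a) (hb : HasSizeLE B' T b) : HasSizeLE (B + B') T (a - b) :=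
  ⟨by
    rw [sub_eq_add_neg]
    exact (l1Norm_add_le _ _).trans (Nat.add_le_add ha.l1Norm_le hb.neg.l1Norm_le),
  (MvPolynomial.totalDegree_sub _ _).trans (max_le ha.totalDegree_le hb.totalDegree_le)⟩

lemma natCast_mul (k : ℕ) (h : HasSizeLE B T a) :
    HasSizeLE (k * B) T ((k : MvPolynomial σ ℤ) * a) :=
  ⟨(l1Norm_mul_le _ _).trans (Nat.mul_le_mul (natCast k 0).l1Norm_le h.l1Norm_le),
  (MvPolynomial.totalDegree_mul _ _).trans <| by
    simpa using Nat.add_le_add (natCast k 0).totalDegree_le h.totalDegree_le⟩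

lemma prod {ι : Type*} {S : Finset ι} {f : ι → MvPolynomial σ ℤ} (h : ∀ i, HasSizeLE B T (f i)) :
    HasSizeLE (B ^ S.card) (S.card * T) (∏ i ∈ S, f i) where
  l1Norm_le := by
    classical
    induction S using Finset.induction_on with
    | empty => simpa using (natCast (σ := σ) 1 0).l1Norm_le
    | insert i S hi ih =>
      rw [Finset.prod_insert hi, Finset.card_insert_of_notMem hi, pow_succ']
      exact (l1Norm_mul_le _ _).trans (Nat.mul_le_mul (h i).l1Norm_le ih)
  totalDegree_le := (MvPolynomial.totalDegree_finsetProd _ _).trans <| by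
    simpa using Finset.sum_le_card_nsmul S _ T fun i _ => (h i).totalDegree_le

lemma det {ι : Type*} [Fintype ι] [DecidableEq ι] {A : Matrix ι ι (MvPolynomial σ ℤ)}
    (h : ∀ i j, HasSizeLE B T (A i j)) :
    HasSizeLE ((Fintype.card ι).factorial * B ^ Fintype.card ι) (Fintype.card ι * T) A.det := by
  have hterm (τ : Equiv.Perm ι) : HasSizeLE (B ^ Fintype.card ι) (Fintype.card ι * T)
      (Equiv.Perm.sign τ • ∏ i, A (τ i) i) := by
    have hprod := prod (S := Finset.univ) fun i => h (τ i) i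
    rcases Int.units_eq_one_or (Equiv.Perm.sign τ) with hτ | hτ
    · rwa [hτ, one_smul]
    · rw [hτ, Units.neg_smul, one_smul]
      exact hprod.neg
  rw [Matrix.det_apply]
  refine ⟨(l1Norm_sum_le _ _).trans ?_, MvPolynomial.totalDegree_finsetSum_le fun τ _ =>
    (hterm τ).totalDegree_le⟩
  simpa [Fintype.card_perm] using
    Finset.sum_le_card_nsmul Finset.univ _ _ fun τ _ => (hterm τ).l1Norm_le

end HasSizeLE

end Size

section MatrixSize

variable {σ : Type*} {B T d D : ℕ} {f : (MvPolynomial σ ℤ)[X][X]}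

lemma hasSizeLE_coeff_monomial_mul (hf : ∀ a b, HasSizeLE B T ((f.coeff a).coeff b))
    (i j k a b : ℕ) : HasSizeLE (k * B) T
      (((monomial i (monomial j (k : MvPolynomial σ ℤ)) * f).coeff a).coeff b) := by
  rw [← C_mul_X_pow_eq_monomial, ← C_mul_X_pow_eq_monomial, mul_assoc, coeff_C_mul, mul_assoc,
    coeff_C_mul, coeff_X_pow_mul', coeff_X_pow_mul']
  split_ifs
  · exact (hf _ _).natCast_mul k
  · rw [coeff_zero, mul_zero]
    exact .zero _ _
  · rw [mul_zero]
    exact .zero _ _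

lemma hasSizeLE_coeff_derivative (hf : ∀ a b, HasSizeLE B T ((f.coeff a).coeff b))
    (hd : f.natDegree ≤ d) (a b : ℕ) : HasSizeLE (d * B) T (((derivative f).coeff a).coeff b) := by
  rw [coeff_derivative, ← Nat.cast_add_one, mul_comm (f.coeff (a + 1)), ← C_eq_natCast, coeff_C_mul]
  rcases le_or_gt (a + 1) d with ha | ha
  · exact ((hf _ _).natCast_mul _).mono (Nat.mul_le_mul_right _ ha)
  · rw [coeff_eq_zero_of_natDegree_lt (hd.trans_lt ha), coeff_zero, mul_zero]
    exact .zero _ _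

lemma hasSizeLE_coeff_partialX (hf : ∀ a b, HasSizeLE B T ((f.coeff a).coeff b))
    (hD : natDegreeX f ≤ D) (a b : ℕ) : HasSizeLE (D * B) T (((partialX f).coeff a).coeff b) := by
  rw [coeff_partialX, coeff_derivative, ← Nat.cast_add_one, mul_comm ((f.coeff a).coeff (b + 1))]
  rcases le_or_gt (b + 1) D with hb | hb
  · exact ((hf _ _).natCast_mul _).mono (Nat.mul_le_mul_right _ hb)
  · rw [coeff_eq_zero_of_natDegree_lt ((natDegreeX_le_iff.1 hD a).trans_lt hb), mul_zero]
    exact .zero _ _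

section Monomial

variable {R : Type*} [CommRing R]

lemma closednessDefect_monomial_zero (f : R[X][X]) (i j : ℕ) :
    closednessDefect f (monomial i (monomial j 1), 0) =
      monomial (i - 1) (monomial j (i : R)) * f - monomial i (monomial j 1) * derivative f := by
  rw [closednessDefect_apply, derivative_monomial, ← C_eq_natCast, monomial_mul_C, one_mul,
    map_zero, zero_mul]
  ring

lemma closednessDefect_zero_monomial (f : R[X][X]) (i j : ℕ) :
    closednessDefect f (0, monomial i (monomial j 1)) =
      monomial i (monomial j 1) * partialX f - monomial i (monomial (j - 1) (j : R)) * f := by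
  have hX : partialX (monomial i (monomial j (1 : R))) = monomial i (monomial (j - 1) (j : R)) := by
    ext a
    rw [coeff_partialX, coeff_monomial, coeff_monomial, apply_ite derivative, derivative_monomial,
      one_mul, map_zero]
  rw [closednessDefect_apply, hX, map_zero]
  ring

end Monomial

theorem hasSizeLE_ruppertMatrix (hf : ∀ a b, HasSizeLE B T ((f.coeff a).coeff b)) (hB : 1 ≤ B)
    (hd : f.natDegree ≤ d) (hD : natDegreeX f ≤ D) (r : Option (ℕ × ℕ)) (c : FormIndex d D) :
    HasSizeLE (2 * (d + D + 1) * B) T (ruppertMatrix d D f r c) := by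
  rw [ruppertMatrix, Matrix.of_apply]
  rcases r with _ | ⟨a, b⟩
  · have hone : HasSizeLE 1 T (ruppertEquation d f none (monomialForm _ c)) := by
      rw [← Prod.mk.eta (p := monomialForm _ c), ruppertEquation_none]
      rcases c with t | t
      · simpa [monomialForm] using HasSizeLE.zero 1 T
      · simp only [monomialForm, Sum.elim_inr, coeff_monomial]
        split_ifs
        · rw [coeff_monomial]
          split_ifs
          · exact_mod_cast HasSizeLE.natCast 1 T
          · exact .zero _ _
        · exact .zero _ _
    exact hone.mono (by nlinarith)
  rcases c with ⟨i, j⟩ | ⟨i, j⟩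
  · rw [monomialForm, Sum.elim_inl, ruppertEquation_some, closednessDefect_monomial_zero, coeff_sub,
      coeff_sub]
    have h := (hasSizeLE_coeff_monomial_mul hf (i - 1) j i a b).sub
      (hasSizeLE_coeff_monomial_mul (hasSizeLE_coeff_derivative hf hd) i j 1 a b)
    rw [Nat.cast_one] at h
    exact h.mono (by nlinarith [Nat.mul_le_mul_right B i.2.le])
  · rw [monomialForm, Sum.elim_inr, ruppertEquation_some, closednessDefect_zero_monomial, coeff_sub,
      coeff_sub]
    have h := (hasSizeLE_coeff_monomial_mul (hasSizeLE_coeff_partialX hf hD) i j 1 a b).sub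
      (hasSizeLE_coeff_monomial_mul hf i (j - 1) j a b)
    rw [Nat.cast_one] at h
    exact h.mono (by nlinarith [Nat.mul_le_mul_right B (Nat.lt_succ_iff.1 j.2)])

end MatrixSize

section BivariateSize

variable {n m : ℕ}

lemma add_totalDegree_coeff_le_totalDeg {F : (MvPolynomial (Fin n) ℤ)[X]} {k : ℕ}
    (hk : F.coeff k ≠ 0) : k + (F.coeff k).totalDegree ≤ totalDeg F :=
  Finset.le_sup (f := fun k => k + (F.coeff k).totalDegree) (mem_support_iff.2 hk)

lemma totalDegree_coeff_le_totalDeg (F : (MvPolynomial (Fin n) ℤ)[X]) (k : ℕ) :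
    (F.coeff k).totalDegree ≤ totalDeg F := by
  by_cases hk : F.coeff k = 0
  · simp [hk]
  · exact (Nat.le_add_left _ _).trans (add_totalDegree_coeff_le_totalDeg hk)

lemma natDegree_le_totalDeg (F : (MvPolynomial (Fin n) ℤ)[X]) : F.natDegree ≤ totalDeg F := by
  by_cases hF : F = 0
  · simp [hF]
  · exact (Nat.le_add_right _ _).trans
      (add_totalDegree_coeff_le_totalDeg (leadingCoeff_ne_zero.2 hF))

lemma natAbs_coeff_coeff_le_polyNorm (F : (MvPolynomial (Fin n) ℤ)[X]) (k : ℕ) (s : Fin n →₀ ℕ) :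
    ((F.coeff k).coeff s).natAbs ≤ polyNorm F := by
  by_cases hs : (F.coeff k).coeff s = 0
  · simp [hs]
  have hk : F.coeff k ≠ 0 := fun h => hs (by simp [h])
  exact (Finset.le_sup (f := fun s => ((F.coeff k).coeff s).natAbs)
    (MvPolynomial.mem_support_iff.2 hs)).trans
    (Finset.le_sup (f := fun k => mvNorm (F.coeff k)) (mem_support_iff.2 hk))

lemma coeff_toBivariate {R : Type*} [CommRing R] (F : (MvPolynomial (Fin (m + 1)) R)[X]) (k : ℕ) :
    (toBivariate F).coeff k = MvPolynomial.finSuccEquiv R m (F.coeff k) :=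
  coeff_map _ _

variable (F : (MvPolynomial (Fin (m + 1)) ℤ)[X])

lemma natDegreeX_toBivariate_le : natDegreeX (toBivariate F) ≤ totalDeg F :=
  natDegreeX_le_iff.2 fun j => by
    rw [coeff_toBivariate, MvPolynomial.natDegree_finSuccEquiv]
    exact (MvPolynomial.degreeOf_le_totalDegree _ _).trans (totalDegree_coeff_le_totalDeg F j)

lemma hasSizeLE_coeff_toBivariate (a b : ℕ) :
    HasSizeLE ((totalDeg F + 1) ^ m * polyNorm F) (totalDeg F)
      (((toBivariate F).coeff a).coeff b) := by
  rw [coeff_toBivariate]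
  have hT : ((MvPolynomial.finSuccEquiv ℤ m (F.coeff a)).coeff b).totalDegree ≤ totalDeg F := by
    by_cases h : (MvPolynomial.finSuccEquiv ℤ m (F.coeff a)).coeff b = 0
    · simp [h]
    · have := MvPolynomial.totalDegree_coeff_finSuccEquiv_add_le (F.coeff a) b h
      have := totalDegree_coeff_le_totalDeg F a
      omega
  refine ⟨(Finset.sum_le_card_nsmul _ _ (polyNorm F) fun s _ => ?_).trans ?_, hT⟩
  · rw [MvPolynomial.finSuccEquiv_coeff_coeff]
    exact natAbs_coeff_coeff_le_polyNorm F a _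
  · simpa using Nat.mul_le_mul_right (polyNorm F) (card_support_le_of_totalDegree_le hT)

end BivariateSize

section PrimeDivisors

variable {a : ℕ}

lemma card_filter_primeFactors_mul_log_le (ha : a ≠ 0) {t : ℝ} (ht : 0 < t) :
    ({p ∈ a.primeFactors | t ≤ (p : ℕ)} : Finset ℕ).card * Real.log t ≤ Real.log a := by
  have hdvd : (∏ p ∈ a.primeFactors with t ≤ (p : ℕ), p) ∣ a :=
    (Finset.prod_dvd_prod_of_subset _ _ _ (Finset.filter_subset _ _)).trans
      (Nat.prod_primeFactors_dvd a)
  have hpow : t ^ ({p ∈ a.primeFactors | t ≤ (p : ℕ)} : Finset ℕ).card ≤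
      ((∏ p ∈ a.primeFactors with t ≤ (p : ℕ), p : ℕ) : ℝ) := by
    rw [Nat.cast_prod, ← Finset.prod_const]
    exact Finset.prod_le_prod (fun _ _ => ht.le) fun p hp => (Finset.mem_filter.1 hp).2
  rw [← Real.log_pow]
  exact Real.log_le_log (by positivity)
    (hpow.trans (Nat.cast_le.2 (Nat.le_of_dvd (Nat.pos_of_ne_zero ha) hdvd)))

lemma card_filter_primeFactors_lt_le {t : ℝ} (ht : 0 ≤ t) :
    (({p ∈ a.primeFactors | ¬ t ≤ (p : ℕ)} : Finset ℕ).card : ℝ) ≤ t := by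
  refine le_trans (Nat.cast_le.2 ?_) (Nat.floor_le ht)
  have hsub : {p ∈ a.primeFactors | ¬ t ≤ (p : ℕ)} ⊆ Finset.Icc 1 ⌊t⌋₊ := fun p hp => by
    rw [Finset.mem_filter, not_le] at hp
    exact Finset.mem_Icc.2 ⟨(Nat.prime_of_mem_primeFactors hp.1).one_le, Nat.le_floor hp.2.le⟩
  simpa using Finset.card_le_card hsub

lemma card_primeFactors_mul_log_le (ha : a ≠ 0) {t : ℝ} (ht : 1 ≤ t) :
    a.primeFactors.card * Real.log t ≤ t * Real.log t + Real.log a := by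
  rw [← Finset.card_filter_add_card_filter_not (s := a.primeFactors) fun p => t ≤ (p : ℕ),
    Nat.cast_add, add_mul, add_comm]
  exact add_le_add
    (mul_le_mul_of_nonneg_right (card_filter_primeFactors_lt_le (by linarith)) (Real.log_nonneg ht))
    (card_filter_primeFactors_mul_log_le ha (by linarith))

lemma sqrt_mul_log_le {L : ℝ} (hL : 0 < L) : √L * Real.log L ≤ 2 * L := by
  have hlog : Real.log L / 2 ≤ √L := by
    rw [← Real.log_sqrt hL.le]
    exact Real.log_le_self (Real.sqrt_nonneg L)
  calc √L * Real.log L ≤ √L * (2 * √L) := by gcongr; linarith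
    _ = 2 * L := by rw [mul_left_comm, Real.mul_self_sqrt hL.le]

lemma card_primeFactors_le_div_log (ha : a ≠ 0) {L c : ℝ} (hL : 1 < L)
    (hac : Real.log a ≤ c * L) :
    (a.primeFactors.card : ℝ) ≤ (2 + 2 * c) * L / Real.log L := by
  have hcard := card_primeFactors_mul_log_le ha (Real.one_le_sqrt.2 hL.le)
  rw [Real.log_sqrt (by linarith)] at hcard
  rw [le_div_iff₀ (Real.log_pos hL)]
  linarith [sqrt_mul_log_le (by linarith : 0 < L)]

lemma one_lt_log_of_three_le {N : ℕ} (hN : 3 ≤ N) : 1 < Real.log N := by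
  rw [Real.lt_log_iff_exp_lt (by positivity)]
  exact Real.exp_one_lt_three.trans_le (by exact_mod_cast hN)

lemma card_primeFactors_le_log_div_log_log {N k e : ℕ} (ha : a ≠ 0) (hN : 3 ≤ N)
    (hle : a ≤ k * N ^ e) :
    (a.primeFactors.card : ℝ) ≤
      (2 + 2 * (Real.log k + e)) * Real.log N / Real.log (Real.log N) := by
  have hL := one_lt_log_of_three_le hN
  have hk : k ≠ 0 := by
    rintro rfl
    simp [ha] at hle
  refine card_primeFactors_le_div_log ha hL ?_
  calc Real.log a ≤ Real.log (k * (N : ℝ) ^ e) :=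
        Real.log_le_log (by positivity) (by exact_mod_cast hle)
    _ = Real.log k + e * Real.log N := by
        rw [Real.log_mul (by positivity) (by positivity), Real.log_pow]
    _ ≤ (Real.log k + e) * Real.log N := by
        nlinarith [Real.log_natCast_nonneg k]

end PrimeDivisors

section Parseval

open scoped ComplexConjugate

section Ring

variable {R ι : Type*} [CommRing R] [Fintype R] [Fintype ι] [DecidableEq ι]
  {ψ : AddChar R ℂ}

lemma sum_addChar_dotProduct [DecidableEq R] (hψ : ψ.IsPrimitive) (z : ι → R) :
    ∑ u : ι → R, ψ (u ⬝ᵥ z) = if z = 0 then (Fintype.card R : ℂ) ^ Fintype.card ι else 0 := by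
  split_ifs with hz
  · simp [hz]
  obtain ⟨i, hi⟩ := Function.ne_iff.1 hz
  obtain ⟨a, ha⟩ := AddChar.ne_one_iff.1 (hψ hi)
  refine eq_zero_of_mul_eq_self_left ha ?_
  rw [Finset.mul_sum, ← Equiv.sum_comp (Equiv.addLeft (Pi.single i a)) fun u => ψ (u ⬝ᵥ z)]
  refine Finset.sum_congr rfl fun u _ => ?_
  rw [Equiv.coe_addLeft, add_dotProduct, single_dotProduct, AddChar.map_add_eq_mul,
    AddChar.mulShift_apply, mul_comm (z i)]

theorem sum_norm_sq_sum_mul_addChar (hψ : ψ.IsPrimitive) (g : (ι → R) → ℂ) :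
    ∑ u : ι → R, ‖∑ x : ι → R, g x * ψ (u ⬝ᵥ x)‖ ^ 2 =
      (Fintype.card R : ℝ) ^ Fintype.card ι * ∑ x, ‖g x‖ ^ 2 := by
  classical
  have hexpand (u : ι → R) : ((‖∑ x : ι → R, g x * ψ (u ⬝ᵥ x)‖ : ℂ)) ^ 2 =
      ∑ x : ι → R, ∑ y : ι → R, g x * conj (g y) * ψ (u ⬝ᵥ (x - y)) := by
    rw [← Complex.mul_conj', map_sum, Finset.sum_mul_sum]
    refine Finset.sum_congr rfl fun x _ => Finset.sum_congr rfl fun y _ => ?_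
    rw [dotProduct_sub, sub_eq_add_neg, AddChar.map_add_eq_mul, AddChar.map_neg_eq_conj, map_mul]
    ring
  have hdiag (x : ι → R) : ∑ u : ι → R, ∑ y : ι → R, g x * conj (g y) * ψ (u ⬝ᵥ (x - y)) =
      (Fintype.card R : ℂ) ^ Fintype.card ι * (‖g x‖ : ℂ) ^ 2 := by
    rw [Finset.sum_comm]
    simp_rw [← Finset.mul_sum, sum_addChar_dotProduct hψ, sub_eq_zero]
    simp_rw [mul_ite, mul_zero]
    rw [Finset.sum_ite_eq, if_pos (Finset.mem_univ x), Complex.mul_conj', mul_comm]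
  rw [← Complex.ofReal_inj]
  push_cast
  simp_rw [hexpand]
  rw [Finset.sum_comm, Finset.mul_sum]
  exact Finset.sum_congr rfl fun x _ => hdiag x

lemma sum_fin_cons {α M : Type*} [Fintype α] [AddCommMonoid M] {m : ℕ} (h : (Fin (m + 1) → α) → M) :
    ∑ x, h x = ∑ x : Fin m → α, ∑ a : α, h (Fin.cons a x) := by
  rw [Finset.sum_comm, ← Fintype.sum_prod_type']
  exact ((Fin.consEquiv fun _ : Fin (m + 1) => α).sum_comp h).symm

theorem sum_norm_sq_sum_mul_addChar_of_zero_eq_zero [DecidableEq R] (hψ : ψ.IsPrimitive) {m : ℕ}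
    (g : (Fin (m + 1) → R) → ℂ) :
    ∑ u : Fin (m + 1) → R with u 0 = 0, ‖∑ x : Fin (m + 1) → R, g x * ψ (u ⬝ᵥ x)‖ ^ 2 =
      (Fintype.card R : ℝ) ^ m * ∑ x : Fin m → R, ‖∑ a : R, g (Fin.cons a x)‖ ^ 2 := by
  have hparseval := sum_norm_sq_sum_mul_addChar hψ fun x : Fin m → R => ∑ a, g (Fin.cons a x)
  rw [Fintype.card_fin] at hparseval
  rw [← hparseval, Finset.sum_filter, sum_fin_cons]
  refine Finset.sum_congr rfl fun u _ => ?_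
  simp_rw [Fin.cons_zero]
  rw [Finset.sum_ite_eq' _ (0 : R), if_pos (Finset.mem_univ _), sum_fin_cons]
  simp [← Finset.sum_mul, dotProduct, Fin.sum_univ_succ]

end Ring

lemma eZp_eq_stdAddChar (N : ℕ) [NeZero N] (a : ZMod N) : eZp N a = ZMod.stdAddChar a := by
  rw [ZMod.stdAddChar_apply, ZMod.toCircle_apply]
  rfl

end Parseval

lemma sum_le_card_mul_add_card_filter_mul {α R : Type*} [Fintype α] [Semiring R] [PartialOrder R]
    [IsOrderedRing R] {P : α → Prop} [DecidablePred P] {e : α → R} {A B : R} (hA : 0 ≤ A)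
    (he : ∀ x, e x ≤ B) (heP : ∀ x, ¬ P x → e x ≤ A) :
    ∑ x, e x ≤ Fintype.card α * A + ({x | P x} : Finset α).card * B := by
  have hle (x : α) : e x ≤ A + if P x then B else 0 := by
    split_ifs with hx
    · exact (he x).trans (le_add_of_nonneg_left hA)
    · simpa using heP x hx
  refine (Finset.sum_le_sum fun x _ => hle x).trans_eq ?_
  rw [Finset.sum_add_distrib, ← Finset.sum_filter, Finset.sum_const, Finset.sum_const,
    nsmul_eq_mul, nsmul_eq_mul, Finset.card_univ]

section ExceptionalPrimes

lemma card_filter_eval_eq_zero_mul_le {p m T : ℕ} [Fact p.Prime]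
    {Φ : MvPolynomial (Fin m) (ZMod p)} (hΦ : Φ ≠ 0) (hT : Φ.totalDegree ≤ T) :
    ({x : Fin m → ZMod p | MvPolynomial.eval x Φ = 0} : Finset _).card * p ≤ T * p ^ m := by
  have h := MvPolynomial.schwartz_zippel_totalDegree hΦ (Finset.univ : Finset (ZMod p))
  have hp : 0 < p := (Fact.out : p.Prime).pos
  rw [Fintype.piFinset_univ, Finset.card_univ, ZMod.card,
    div_le_div_iff₀ (by positivity) (by positivity)] at h
  exact (by exact_mod_cast h : _ ≤ Φ.totalDegree * p ^ m).trans (Nat.mul_le_mul_right _ hT)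

theorem exists_primes_map_ne_zero {σ : Type*} {Φ : MvPolynomial σ ℤ} {N k e T : ℕ} (hΦ : Φ ≠ 0)
    (hN : 3 ≤ N) (hsize : HasSizeLE (k * N ^ e) T Φ) :
    ∃ E : Finset ℕ, (∀ p ∈ E, p.Prime) ∧
      (E.card : ℝ) ≤ (2 + 2 * (Real.log k + e)) * Real.log N / Real.log (Real.log N) ∧
      ∀ p : ℕ, p.Prime → p ∉ E → MvPolynomial.map (Int.castRingHom (ZMod p)) Φ ≠ 0 := by
  obtain ⟨s, hs⟩ := MvPolynomial.ne_zero_iff.1 hΦ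
  refine ⟨(Φ.coeff s).natAbs.primeFactors, fun p => Nat.prime_of_mem_primeFactors,
    card_primeFactors_le_log_div_log_log (Int.natAbs_ne_zero.2 hs) hN
      ((natAbs_coeff_le_l1Norm Φ s).trans hsize.l1Norm_le), fun p hp hpE hzero => hpE ?_⟩
  have hcoeff := congrArg (MvPolynomial.coeff s) hzero
  rw [MvPolynomial.coeff_map, MvPolynomial.coeff_zero, eq_intCast,
    ZMod.intCast_zmod_eq_zero_iff_dvd] at hcoeff
  exact Nat.mem_primeFactors.2 ⟨hp, Int.natCast_dvd.1 hcoeff, Int.natAbs_ne_zero.2 hs⟩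

end ExceptionalPrimes

section Fibres

variable {m n p : ℕ} [Fact p.Prime]

/-- `v_p(x)`, the number of roots `y ∈ 𝔽_p` of `F(Y, x)`. -/
def rootCount (p : ℕ) [NeZero p] (F : (MvPolynomial (Fin n) ℤ)[X]) (x : Fin n → ZMod p) : ℕ :=
  ({y : ZMod p | eval y ((F.map (MvPolynomial.map (Int.castRingHom (ZMod p)))).map
    (MvPolynomial.eval x)) = 0} : Finset _).card

lemma rootCount_le_natDegree {F : (MvPolynomial (Fin n) ℤ)[X]} (hF : F.Monic)
    (x : Fin n → ZMod p) : rootCount p F x ≤ F.natDegree := by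
  have hmonic := (hF.map (MvPolynomial.map (Int.castRingHom (ZMod p)))).map (MvPolynomial.eval x)
  calc rootCount p F x ≤ (((F.map (MvPolynomial.map (Int.castRingHom (ZMod p)))).map
        (MvPolynomial.eval x)).roots.toFinset).card := Finset.card_le_card fun y hy => by
          rw [Multiset.mem_toFinset, mem_roots hmonic.ne_zero]
          exact (Finset.mem_filter.1 hy).2
    _ ≤ _ := (Multiset.toFinset_card_le _).trans (card_roots' _)
    _ ≤ F.natDegree := natDegree_map_le.trans natDegree_map_le

/-- The bivariate polynomial `F(Y, X₀, x)` over `𝔽_p` obtained by specialising all the variables but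
`Y` and `X₀`. -/
def fibre (p : ℕ) (F : (MvPolynomial (Fin (m + 1)) ℤ)[X]) (x : Fin m → ZMod p) : (ZMod p)[X][X] :=
  (toBivariate F).map (mapRingHom (MvPolynomial.eval₂Hom (Int.castRingHom (ZMod p)) x))

/-- The error term `∑ₐ (v_p(a, x) - 1)` in counting the points of the fibre over `x`. -/
def fibreError (p : ℕ) [NeZero p] (F : (MvPolynomial (Fin (m + 1)) ℤ)[X])
    (x : Fin m → ZMod p) : ℤ :=
  ∑ a : ZMod p, ((rootCount p F (Fin.cons a x) : ℤ) - 1)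

variable {F : (MvPolynomial (Fin (m + 1)) ℤ)[X]}

lemma evalEval_fibre (x : Fin m → ZMod p) (a y : ZMod p) :
    (fibre p F x).evalEval a y =
      eval y ((F.map (MvPolynomial.map (Int.castRingHom (ZMod p)))).map
        (MvPolynomial.eval (Fin.cons a x : Fin (m + 1) → ZMod p))) := by
  have hhom : ((evalRingHom a).comp (mapRingHom
      (MvPolynomial.eval₂Hom (Int.castRingHom (ZMod p)) x))).comp
        (MvPolynomial.finSuccEquiv ℤ m : _ →+* _) =
      (MvPolynomial.eval (Fin.cons a x : Fin (m + 1) → ZMod p)).comp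
        (MvPolynomial.map (Int.castRingHom (ZMod p))) := by
    refine MvPolynomial.ringHom_ext (fun r => by simp) fun i => ?_
    refine Fin.cases ?_ (fun j => ?_) i
    · simp [MvPolynomial.finSuccEquiv_X_zero]
    · simp [MvPolynomial.finSuccEquiv_X_succ]
  rw [← map_evalRingHom_eval, fibre, toBivariate, Polynomial.map_map, Polynomial.map_map,
    Polynomial.map_map, hhom]

lemma card_zeros_fibre_sub (x : Fin m → ZMod p) :
    ((({P : ZMod p × ZMod p | (fibre p F x).evalEval P.1 P.2 = 0} : Finset _).card : ℤ) - p) =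
      fibreError p F x := by
  simp_rw [fibreError, evalEval_fibre, rootCount]
  rw [← Finset.univ_product_univ, Finset.card_filter, Finset.sum_product]
  simp_rw [Finset.card_filter]
  simp

lemma isMonicOfBidegree_fibre (hF : F.Monic) (hpos : 0 < F.natDegree) (x : Fin m → ZMod p) :
    IsMonicOfBidegree (fibre p F x) F.natDegree (totalDeg F) where
  monic := (hF.map _).map _
  natDegree_eq := by rw [fibre, toBivariate, (hF.map _).natDegree_map, hF.natDegree_map]
  pos := hpos
  natDegreeX_le := natDegreeX_le_iff.2 fun j => by
    rw [fibre, coeff_map]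
    exact natDegree_map_le.trans (natDegreeX_le_iff.1 (natDegreeX_toBivariate_le F) j)

lemma sq_fibreError_le_of_monic (hF : F.Monic) (hpos : 0 < F.natDegree) (x : Fin m → ZMod p) :
    fibreError p F x ^ 2 ≤ F.natDegree ^ 2 * p ^ 2 := by
  have habs : |fibreError p F x| ≤ p * F.natDegree := by
    refine (Finset.abs_sum_le_sum_abs _ _).trans <|
      (Finset.sum_le_card_nsmul _ _ (F.natDegree : ℤ) fun a _ => ?_).trans_eq
        (by rw [Finset.card_univ, ZMod.card, nsmul_eq_mul])
    have := rootCount_le_natDegree hF (Fin.cons a x : Fin (m + 1) → ZMod p)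
    rw [abs_le]
    omega
  rw [← sq_abs, mul_comm, ← mul_pow]
  exact pow_le_pow_left₀ (abs_nonneg _) habs 2

lemma sq_fibreError_le_of_eval_ne_zero (hF : F.Monic) (hpos : 0 < F.natDegree) {x : Fin m → ZMod p}
    (hp : stepanovThreshold F.natDegree (totalDeg F * F.natDegree) ≤ p)
    {r : FormIndex F.natDegree (totalDeg F) → Option (ℕ × ℕ)}
    (hr : MvPolynomial.eval x (MvPolynomial.map (Int.castRingHom (ZMod p))
      ((ruppertMatrix F.natDegree (totalDeg F) (toBivariate F)).submatrix r id).det) ≠ 0) :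
    fibreError p F x ^ 2 ≤ weilConstant F.natDegree (totalDeg F) ^ 2 * p := by
  have hdet : ((ruppertMatrix F.natDegree (totalDeg F) (fibre p F x)).submatrix r id).det ≠ 0 := by
    rwa [MvPolynomial.eval_map, ← MvPolynomial.coe_eval₂Hom, RingHom.map_det,
      RingHom.mapMatrix_apply, ← Matrix.submatrix_map, ← ruppertMatrix_map] at hr
  have habs := (isMonicOfBidegree_fibre hF hpos x).abs_card_sub_le_of_det_ne_zero hp r hdet
  rw [card_zeros_fibre_sub] at habs
  calc fibreError p F x ^ 2 = |fibreError p F x| ^ 2 := (sq_abs _).symm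
    _ ≤ (weilConstant F.natDegree (totalDeg F) * Nat.sqrt p) ^ 2 :=
      pow_le_pow_left₀ (abs_nonneg _) habs 2
    _ = weilConstant F.natDegree (totalDeg F) ^ 2 * (Nat.sqrt p ^ 2 : ℕ) := by
      rw [mul_pow, Nat.cast_pow]
    _ ≤ weilConstant F.natDegree (totalDeg F) ^ 2 * p := by
      gcongr
      exact Nat.sqrt_le' p

/-- The constant, depending only on `d = deg_Y F` and the total degree `D` of `F`, in the bound
`sum_sq_fibreError_le`. Its terms are the contributions of the fibres with a nonzero Ruppert minor,
of the remaining fibres, and of the small primes. -/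
def secondMomentConstant (d D : ℕ) : ℕ :=
  weilConstant d D ^ 2 + Fintype.card (FormIndex d D) * D * d ^ 2 +
    d ^ 2 * stepanovThreshold d (D * d)

lemma sum_sq_fibreError_le_of_lt (hF : F.Monic) (hpos : 0 < F.natDegree)
    (hp : p < stepanovThreshold F.natDegree (totalDeg F * F.natDegree)) :
    ∑ x : Fin m → ZMod p, fibreError p F x ^ 2 ≤
      secondMomentConstant F.natDegree (totalDeg F) * p ^ (m + 1) := by
  calc ∑ x : Fin m → ZMod p, fibreError p F x ^ 2 ≤ p ^ m * (F.natDegree ^ 2 * p ^ 2) := by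
        simpa [ZMod.card] using Finset.sum_le_card_nsmul (Finset.univ : Finset (Fin m → ZMod p)) _ _
          fun x _ => sq_fibreError_le_of_monic hF hpos x
    _ = F.natDegree ^ 2 * p * p ^ (m + 1) := by ring
    _ ≤ (F.natDegree ^ 2 * stepanovThreshold F.natDegree (totalDeg F * F.natDegree) : ℕ) *
          p ^ (m + 1) := by
        push_cast
        gcongr
    _ ≤ secondMomentConstant F.natDegree (totalDeg F) * p ^ (m + 1) := by
        gcongr
        exact Nat.le_add_left _ _

lemma sum_sq_fibreError_le_of_le (hF : F.Monic) (hpos : 0 < F.natDegree)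
    (hp : stepanovThreshold F.natDegree (totalDeg F * F.natDegree) ≤ p)
    {r : FormIndex F.natDegree (totalDeg F) → Option (ℕ × ℕ)} {T : ℕ}
    (hT : ((ruppertMatrix F.natDegree (totalDeg F) (toBivariate F)).submatrix r id).det.totalDegree
      ≤ T)
    (hr : MvPolynomial.map (Int.castRingHom (ZMod p))
      ((ruppertMatrix F.natDegree (totalDeg F) (toBivariate F)).submatrix r id).det ≠ 0) :
    ∑ x : Fin m → ZMod p, fibreError p F x ^ 2 ≤
      (weilConstant F.natDegree (totalDeg F) ^ 2 + T * F.natDegree ^ 2 : ℕ) * p ^ (m + 1) := by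
  have hbad := card_filter_eval_eq_zero_mul_le hr
    ((Finset.sup_mono (MvPolynomial.support_map_subset _ _)).trans hT)
  have hsum := sum_le_card_mul_add_card_filter_mul (by positivity)
    (fun x => sq_fibreError_le_of_monic hF hpos x)
    (fun x hx => sq_fibreError_le_of_eval_ne_zero (x := x) hF hpos hp (r := r) hx)
  have hcard : (Fintype.card (Fin m → ZMod p) : ℤ) = p ^ m := by simp [ZMod.card]
  generalize ({x : Fin m → ZMod p | MvPolynomial.eval x (MvPolynomial.map
    (Int.castRingHom (ZMod p)) ((ruppertMatrix F.natDegree (totalDeg F)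
      (toBivariate F)).submatrix r id).det) = 0} : Finset _).card = N at hbad hsum
  rw [hcard] at hsum
  calc ∑ x : Fin m → ZMod p, fibreError p F x ^ 2
      ≤ p ^ m * (weilConstant F.natDegree (totalDeg F) ^ 2 * p) +
        (N * p : ℕ) * (F.natDegree ^ 2 * p) := by
        refine hsum.trans_eq ?_
        push_cast
        ring
    _ ≤ p ^ m * (weilConstant F.natDegree (totalDeg F) ^ 2 * p) +
        (T * p ^ m : ℕ) * (F.natDegree ^ 2 * p) := by gcongr
    _ = (weilConstant F.natDegree (totalDeg F) ^ 2 + T * F.natDegree ^ 2 : ℕ) * p ^ (m + 1) := by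
        push_cast
        ring

theorem sum_sq_fibreError_le (hF : F.Monic) (hpos : 0 < F.natDegree)
    {r : FormIndex F.natDegree (totalDeg F) → Option (ℕ × ℕ)}
    (hT : ((ruppertMatrix F.natDegree (totalDeg F) (toBivariate F)).submatrix r id).det.totalDegree
      ≤ Fintype.card (FormIndex F.natDegree (totalDeg F)) * totalDeg F)
    (hr : MvPolynomial.map (Int.castRingHom (ZMod p))
      ((ruppertMatrix F.natDegree (totalDeg F) (toBivariate F)).submatrix r id).det ≠ 0) :
    ∑ x : Fin m → ZMod p, fibreError p F x ^ 2 ≤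
      secondMomentConstant F.natDegree (totalDeg F) * p ^ (m + 1) := by
  rcases lt_or_ge p (stepanovThreshold F.natDegree (totalDeg F * F.natDegree)) with hp | hp
  · exact sum_sq_fibreError_le_of_lt hF hpos hp
  · refine (sum_sq_fibreError_le_of_le hF hpos hp hT hr).trans ?_
    gcongr
    exact Nat.le_add_right _ _

theorem sum_norm_sq_eq_sum_sq_fibreError :
    ∑ u : Fin (m + 1) → ZMod p with u 0 = 0,
        ‖∑ x, ((rootCount p F x : ℂ) - 1) * eZp p (∑ i, u i * x i)‖ ^ 2 =
      p ^ m * ∑ x : Fin m → ZMod p, (fibreError p F x : ℝ) ^ 2 := by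
  have h := sum_norm_sq_sum_mul_addChar_of_zero_eq_zero (ZMod.isPrimitive_stdAddChar p)
    fun x : Fin (m + 1) → ZMod p => (rootCount p F x : ℂ) - 1
  simp_rw [eZp_eq_stdAddChar]
  rw [ZMod.card] at h
  refine h.trans ?_
  congr 1
  refine Finset.sum_congr rfl fun x _ => ?_
  rw [← sq_abs (fibreError p F x : ℝ), ← Complex.norm_intCast]
  simp [fibreError]

end Fibres

section Main

/-- The factor `k` in the bound `k * ‖F‖ ^ N` for the coefficients of the maximal minors, of size
`N`, of the Ruppert matrix of a polynomial `F` in `m + 2` variables with `d = deg_Y F` and total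
degree `D`. -/
def ruppertMinorFactor (m d D : ℕ) : ℕ :=
  (Fintype.card (FormIndex d D)).factorial *
    (2 * (d + D + 1) * (D + 1) ^ m) ^ Fintype.card (FormIndex d D)

/-- The constant, depending only on `m`, `d = deg_Y F` and the total degree `D` of `F`, in the bound
for the number of exceptional primes. -/
def exceptionalConstant (m d D : ℕ) : ℝ :=
  2 + 2 * (Real.log (ruppertMinorFactor m d D) + Fintype.card (FormIndex d D))

variable {m : ℕ} {F : (MvPolynomial (Fin (m + 1)) ℤ)[X]}

lemma hasSizeLE_det_ruppertMatrix_toBivariate (hN : 1 ≤ polyNorm F)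
    (r : FormIndex F.natDegree (totalDeg F) → Option (ℕ × ℕ)) :
    HasSizeLE (ruppertMinorFactor m F.natDegree (totalDeg F) *
        polyNorm F ^ Fintype.card (FormIndex F.natDegree (totalDeg F)))
      (Fintype.card (FormIndex F.natDegree (totalDeg F)) * totalDeg F)
      ((ruppertMatrix F.natDegree (totalDeg F) (toBivariate F)).submatrix r id).det := by
  have hB : 1 ≤ (totalDeg F + 1) ^ m * polyNorm F := Nat.mul_pos (by positivity) hN
  refine (HasSizeLE.det fun i j => hasSizeLE_ruppertMatrix (hasSizeLE_coeff_toBivariate F) hB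
    natDegree_map_le (natDegreeX_toBivariate_le F) (r i) j).mono (Eq.le ?_)
  rw [ruppertMinorFactor, mul_assoc (Nat.factorial _), ← mul_pow, mul_assoc _ (_ ^ m)]

theorem exists_primes_sum_sq_fibreError_le (hmonic : F.Monic) (hirr : Irreducible (toFrac F))
    (hN : 3 ≤ polyNorm F)
    (hclosed : ∀ z : AdjoinRoot (toFrac F), AlgOverCoord 0 F z → CoordMem 0 F z) :
    ∃ E : Finset ℕ, (∀ p ∈ E, p.Prime) ∧
      (E.card : ℝ) ≤ exceptionalConstant m F.natDegree (totalDeg F) * Real.log (polyNorm F) /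
        Real.log (Real.log (polyNorm F)) ∧
      ∀ (p : ℕ) [Fact p.Prime], p ∉ E → ∑ x : Fin m → ZMod p, fibreError p F x ^ 2 ≤
        secondMomentConstant F.natDegree (totalDeg F) * p ^ (m + 1) := by
  have hpos : 0 < F.natDegree :=
    hirr.natDegree_pos.trans_le (natDegree_map_le.trans natDegree_map_le)
  obtain ⟨r, hr⟩ := (isRuppertRigid_toBivariate hmonic hirr hclosed (totalDeg F)).exists_det_ne_zero
    hpos
  have hsize := hasSizeLE_det_ruppertMatrix_toBivariate (by omega : 1 ≤ polyNorm F) r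
  obtain ⟨E, hEprime, hEcard, hE⟩ := exists_primes_map_ne_zero hr hN hsize
  exact ⟨E, hEprime, hEcard, fun p hp hpE =>
    sum_sq_fibreError_le hmonic hpos hsize.totalDegree_le (hE p hp.out hpE)⟩

lemma exists_pos_forall_le (c : ℕ → ℝ) (D : ℕ) : ∃ C : ℝ, 0 < C ∧ ∀ d ≤ D, c d ≤ C := by
  obtain ⟨C, hC⟩ := ((Set.finite_Iic D).image c).bddAbove
  exact ⟨max C 1, by positivity, fun d hd => (hC ⟨d, hd, rfl⟩).trans (le_max_left _ _)⟩

end Main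

theorem statement18_general (n : ℕ) (hn : 1 ≤ n) (D : ℕ) :
    ∃ C C' : ℝ, 0 < C ∧ 0 < C' ∧
      ∀ F : Polynomial (MvPolynomial (Fin n) ℤ),
        Irreducible (toFrac F) → F.Monic → 3 ≤ polyNorm F → totalDeg F = D →
        (∀ z : AdjoinRoot (toFrac F),
          AlgOverCoord (⟨0, hn⟩ : Fin n) F z → CoordMem (⟨0, hn⟩ : Fin n) F z) →
        ∃ E : Finset ℕ, (∀ p ∈ E, p.Prime) ∧
          (E.card : ℝ) ≤
            C * Real.log (polyNorm F : ℝ) / Real.log (Real.log (polyNorm F : ℝ)) ∧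
          ∀ p : ℕ, ∀ hp : p.Prime, p ∉ E →
            haveI : NeZero p := ⟨hp.ne_zero⟩;
            (∑ u ∈ Finset.univ.filter (fun u : Fin n → ZMod p => u ⟨0, hn⟩ = 0),
              ‖∑ x : Fin n → ZMod p, ((rootCount p F x : ℂ) - 1) * eZp p (∑ i, u i * x i)‖ ^ 2)
              ≤ C' * (p : ℝ) ^ (2 * n - 1) := by
  obtain ⟨m, rfl⟩ : ∃ m, n = m + 1 := ⟨n - 1, by omega⟩
  obtain ⟨C, hC, hCle⟩ := exists_pos_forall_le (exceptionalConstant m · D) D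
  obtain ⟨C', hC', hCle'⟩ := exists_pos_forall_le (secondMomentConstant · D) D
  refine ⟨C, C', hC, hC', ?_⟩
  rintro F hirr hmonic hN rfl hclosed
  have hd := natDegree_le_totalDeg F
  have hL := one_lt_log_of_three_le hN
  have hLL := Real.log_pos hL
  obtain ⟨E, hEprime, hEcard, hE⟩ := exists_primes_sum_sq_fibreError_le hmonic hirr hN hclosed
  refine ⟨E, hEprime, hEcard.trans (by gcongr; exact hCle _ hd), fun p hp hpE => ?_⟩
  have : Fact p.Prime := ⟨hp⟩
  have hmoment : ∑ x : Fin m → ZMod p, (fibreError p F x : ℝ) ^ 2 ≤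
      secondMomentConstant F.natDegree (totalDeg F) * (p : ℝ) ^ (m + 1) := by
    exact_mod_cast hE p hpE
  calc _ = (p : ℝ) ^ m * ∑ x : Fin m → ZMod p, (fibreError p F x : ℝ) ^ 2 :=
        sum_norm_sq_eq_sum_sq_fibreError
    _ ≤ (p : ℝ) ^ m * (C' * (p : ℝ) ^ (m + 1)) := by
        gcongr
        exact hmoment.trans (by gcongr; exact hCle' _ hd)
    _ = C' * (p : ℝ) ^ (2 * (m + 1) - 1) := by
        rw [show 2 * (m + 1) - 1 = m + (m + 1) by omega]
        ring

theorem statement18 (n : ℕ) (hn : 2 ≤ n) (D : ℕ) :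
    ∃ C C' : ℝ, 0 < C ∧ 0 < C' ∧
      ∀ F : Polynomial (MvPolynomial (Fin n) ℤ),
        AbsIrred F → F.Monic → 2 ≤ F.natDegree → 3 ≤ polyNorm F → totalDeg F = D →
        (∀ z : AdjoinRoot (toFrac F),
          AlgOverCoord (⟨0, by omega⟩ : Fin n) F z →
            CoordMem (⟨0, by omega⟩ : Fin n) F z) →
        ∃ E : Finset ℕ, (∀ p ∈ E, p.Prime) ∧
          (E.card : ℝ) ≤
            C * Real.log (polyNorm F : ℝ) / Real.log (Real.log (polyNorm F : ℝ)) ∧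
          ∀ p : ℕ, ∀ hp : p.Prime, p ∉ E →
            haveI : NeZero p := ⟨hp.ne_zero⟩;
            (∑ u ∈ Finset.univ.filter (fun u : Fin n → ZMod p => u ⟨0, by omega⟩ = 0),
              ‖∑ x : Fin n → ZMod p,
                  (((Finset.univ.filter fun y : ZMod p =>
                      Polynomial.eval y
                        ((F.map (MvPolynomial.map (Int.castRingHom (ZMod p)))).map
                          (MvPolynomial.eval x)) = 0).card : ℂ) - 1) *
                    eZp p (∑ i, u i * x i)‖ ^ 2)
              ≤ C' * (p : ℝ) ^ (2 * n - 1) := by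
  obtain ⟨C, C', hC, hC', h⟩ := statement18_general n (by omega) D
  exact ⟨C, C', hC, hC', fun F hF hmonic _ hN hD hclosed =>
    h F (irreducible_toFrac_of_absIrred hF hmonic) hmonic hN hD hclosed⟩
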